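/- arXiv:1303.6915 — 2 statements merged into one kernel-verified Lean document; each statement's English description precedes it below -/
import Mathlib

section
/- Let 4 ≤ n ≤ 6 and let k be a positive integer with k < 3^n/(2n+1). For the Segre product of n copies of ℙ² (so V = (ℂ³)^{⊗n}), the general linear subspace of V of dimension k(2n+1) which is tangent at k general points (namely, the span of the k tangent spaces at k general decomposable tensors) is tangent only at those points; consequently the product of n copies of ℙ² is k-identifiable for all k < 3^n/(2n+1). -/
open scoped TensorProduct
open PiTensorProduct

noncomputable section

/-- The space of tensors `V = ℂ^{a₁+1} ⊗ ⋯ ⊗ ℂ^{a_q+1}`. -/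
abbrev Ten (q : ℕ) (a : Fin q → ℕ) : Type :=
  ⨂[ℂ] i : Fin q, (Fin (a i + 1) → ℂ)

/-- Index type for the coordinates on the parameter space `W_k`. -/
abbrev WIdx (q : ℕ) (a : Fin q → ℕ) (k : ℕ) : Type :=
  Fin k × Σ j : Fin q, Fin (a j + 1)

/-- Index type for the standard (decomposable) basis of `Ten q a`. -/
abbrev BIdx (q : ℕ) (a : Fin q → ℕ) : Type := ∀ j : Fin q, Fin (a j + 1)

/-- A tensor is decomposable if it is `v₁ ⊗ ⋯ ⊗ v_q` with all `vᵢ ≠ 0`. -/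
def IsDecomposable {q : ℕ} {a : Fin q → ℕ} (t : Ten q a) : Prop :=
  ∃ v : ∀ j : Fin q, Fin (a j + 1) → ℂ, (∀ j, v j ≠ 0) ∧ t = tprod ℂ v

/-- The affine tangent space at `v₁ ⊗ ⋯ ⊗ v_q` to the cone over the Segre variety:
the span of all tensors obtained by replacing one factor of `v` by an arbitrary vector. -/
def tangent {q : ℕ} (a : Fin q → ℕ) (v : ∀ j : Fin q, Fin (a j + 1) → ℂ) :
    Submodule ℂ (Ten q a) :=
  Submodule.span ℂ
    {x | ∃ (j : Fin q) (u : Fin (a j + 1) → ℂ), x = tprod ℂ (Function.update v j u)}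

/-- The map `Φ : W_k → V` sending a `k`-tuple of factor vectors to the sum of the
corresponding decomposable tensors. -/
def Phi {q : ℕ} (a : Fin q → ℕ) {k : ℕ}
    (p : Fin k → ∀ j : Fin q, Fin (a j + 1) → ℂ) : Ten q a :=
  ∑ i, tprod ℂ (p i)

/-- Evaluation of a polynomial function on `W_k` at a parameter point. -/
def evalW {q : ℕ} {a : Fin q → ℕ} {k : ℕ}
    (F : MvPolynomial (WIdx q a k) ℂ)
    (p : Fin k → ∀ j : Fin q, Fin (a j + 1) → ℂ) : ℂ :=
  MvPolynomial.eval (fun x => p x.1 x.2.1 x.2.2) F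

/-- `k`-identifiability of the Segre product `ℙ^{a₁} × ⋯ × ℙ^{a_q}`:
there is a nonzero polynomial function `F` on `W_k` such that whenever `F(p) ≠ 0`,
the tensor `Φ(p)` has a rank-`k` decomposition, and any two rank-`k` decompositions
of `Φ(p)` agree as multisets of decomposable tensors. -/
def Identifiable (q : ℕ) (a : Fin q → ℕ) (k : ℕ) : Prop :=
  ∃ F : MvPolynomial (WIdx q a k) ℂ,
    (∃ p, evalW F p ≠ 0) ∧
    ∀ p, evalW F p ≠ 0 →
      ((∃ t : Fin k → Ten q a, (∀ i, IsDecomposable (t i)) ∧ ∑ i, t i = Phi a p) ∧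
       ∀ s t : Fin k → Ten q a,
         (∀ i, IsDecomposable (s i)) → (∀ i, IsDecomposable (t i)) →
         ∑ i, s i = Phi a p → ∑ i, t i = Phi a p →
         Finset.univ.val.map s = Finset.univ.val.map t)

/-- The standard decomposable basis vector of `Ten q a` indexed by `f`. -/
def basisVec {q : ℕ} (a : Fin q → ℕ) (f : BIdx q a) : Ten q a :=
  tprod ℂ fun j => Pi.single (f j) 1

/-- The vector of `Ten q a` with coordinates `c` in the standard basis. -/
def fromCoords {q : ℕ} (a : Fin q → ℕ) (c : BIdx q a → ℂ) : Ten q a :=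
  ∑ f : BIdx q a, c f • basisVec a f

/-- Evaluation of a polynomial function on `W_k × V^e` at a parameter point. -/
def evalWV {q : ℕ} {a : Fin q → ℕ} {k e : ℕ}
    (F : MvPolynomial (WIdx q a k ⊕ (Fin e × BIdx q a)) ℂ)
    (p : Fin k → ∀ j : Fin q, Fin (a j + 1) → ℂ)
    (c : Fin e → BIdx q a → ℂ) : ℂ :=
  MvPolynomial.eval (Sum.elim (fun x => p x.1 x.2.1 x.2.2) (fun y => c y.1 y.2)) F

/-- `TangentGeneral q a k d` says: the general linear subspace of `V` of dimension `d`
which is tangent to the Segre at `k` general points is tangent only at those points.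
Concretely, with `e = d - k(1 + Σᵢ aᵢ)`, there is a nonzero polynomial function `F` on
`W_k × V^e` such that whenever `F ≠ 0` at `(p, c)`, the space `L` spanned by the tangent
spaces at the `k` decomposable tensors determined by `p` together with the `e` extra
vectors determined by `c` has dimension exactly `d`, and any decomposable tensor whose
tangent space lies in `L` is a scalar multiple of one of the `k` given ones. -/
def TangentGeneral (q : ℕ) (a : Fin q → ℕ) (k d : ℕ) : Prop :=
  ∃ F : MvPolynomial (WIdx q a k ⊕ (Fin (d - k * (1 + ∑ j, a j)) × BIdx q a)) ℂ,
    (∃ p c, evalWV F p c ≠ 0) ∧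
    ∀ p c, evalWV F p c ≠ 0 →
      (Module.finrank ℂ
          ↥((⨆ i, tangent a (p i)) ⊔
            Submodule.span ℂ (Set.range fun m => fromCoords a (c m))) = d ∧
       ∀ w : ∀ j : Fin q, Fin (a j + 1) → ℂ, (∀ j, w j ≠ 0) →
         tangent a w ≤
           (⨆ i, tangent a (p i)) ⊔
             Submodule.span ℂ (Set.range fun m => fromCoords a (c m)) →
         ∃ (i : Fin k) (t : ℂ), tprod ℂ w = t • tprod ℂ (p i))

/-- `forceNat x f` is `f x`, arranged so that kernel reduction evaluates `x` first. -/
def forceNat {α : Type} (x : ℕ) (f : ℕ → α) : α :=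
  Nat.rec (f 0) (fun m _ => f (m + 1)) x

/-- Gaussian elimination over `𝔽₂` on `s` rows of `N` bits each, stored consecutively in the
binary digits of a single number.  The answer is `true` when a pivot is found for every row. -/
def elimNat (N mask : ℕ) : ℕ → ℕ → Bool
  | 0, _ => true
  | s + 1, M => forceNat (M % 2 ^ N) fun v => v != 0 && forceNat (M >>> N) fun M' =>
      elimNat N mask s (M' ^^^ (((M' / v.gcd (2 ^ N)) &&& mask) * v))

/-- The number with binary digits `1` exactly at the first `s` multiples of `N`. -/
def maskNat (N : ℕ) : ℕ → ℕ
  | 0 => 0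
  | s + 1 => 2 ^ N * maskNat N s + 1

/-- Concatenation of the `N`-bit numbers `f 0, …, f (s - 1)`. -/
def packNat (N : ℕ) (f : ℕ → ℕ) : ℕ → ℕ
  | 0 => 0
  | s + 1 => 2 ^ (N * s) * f s + packNat N f s

/-- Linear independence test for the `s` bit vectors `f 0, …, f (s - 1)` of length `N`. -/
def indepNat (N s : ℕ) (f : ℕ → ℕ) : Bool :=
  forceNat (maskNat N s) fun mask => elimNat N mask s (packNat N f s)

/-- The sum modulo `2` of the lowest `2 ^ s` binary digits. -/
def parityNat : ℕ → ℕ → ℕ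
  | 0, x => x % 2
  | s + 1, x => forceNat (x ^^^ (x >>> 2 ^ s)) (parityNat s)

/-- Bit encoding of the rank one tensor with factors `v 0, …, v (n - 1)` in `𝔽₂³`. -/
def segNat (v : ℕ → ℕ) : ℕ → ℕ
  | 0 => 1
  | n + 1 => segNat v n *
      (2 ^ (2 * 3 ^ n) * (v n / 4 % 2) + 2 ^ 3 ^ n * (v n / 2 % 2) + v n % 2)

/-- The points encoded by `D`; every factor is `(1, *, *)` as a vector of bits. -/
def pointNat (n D i j : ℕ) : ℕ := 1 + 2 * (D / 4 ^ (n * i + j) % 4)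

/-- Bit encoding of the `t`-th tangent vector at the points encoded by `D`. -/
def rowNat (n D t : ℕ) : ℕ :=
  match t % (2 * n + 1) with
  | 0 => segNat (pointNat n D (t / (2 * n + 1))) n
  | r + 1 => segNat (Function.update (pointNat n D (t / (2 * n + 1))) (r / 2) (2 ^ (r % 2 + 1))) n

/-- Entries of the Hessian of the linear form `h` at the first point encoded by `D`. -/
def hessNat (n D h t b : ℕ) : ℕ :=
  if t / 2 = b / 2 then 0 else
    parityNat 10 (h &&& segNat (Function.update (Function.update (pointNat n D 0) (t / 2)
      (2 ^ (t % 2 + 1))) (b / 2) (2 ^ (b % 2 + 1))) n)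

/-- The finite computation certifying that the points encoded by `D` have independent tangent
spaces, annihilated by `h`, with `h` nondegenerate to second order at the first point. -/
def certNat (n k D h : ℕ) : Bool :=
  indepNat (3 ^ n) (k * (2 * n + 1)) (rowNat n D) &&
  (List.range (k * (2 * n + 1))).all (fun t => parityNat 10 (h &&& rowNat n D t) == 0) &&
  indepNat (2 * n) (2 * n) (fun t => packNat 1 (hessNat n D h t) (2 * n))

theorem forceNat_eq {α : Type} (x : ℕ) (f : ℕ → α) : forceNat x f = f x := by
  cases x <;> rfl

/-- The `i`-th binary digit of `m`, as an element of `𝔽₂`. -/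
def bitVal (m i : ℕ) : ZMod 2 := if m.testBit i then 1 else 0

theorem bitVal_xor (a b i : ℕ) : bitVal (a ^^^ b) i = bitVal a i + bitVal b i := by
  unfold bitVal
  rw [Nat.testBit_xor]
  cases a.testBit i <;> cases b.testBit i <;> decide

theorem bitVal_and (a b i : ℕ) : bitVal (a &&& b) i = bitVal a i * bitVal b i := by
  unfold bitVal
  rw [Nat.testBit_and]
  cases a.testBit i <;> cases b.testBit i <;> decide

theorem bitVal_eq_zero {a i : ℕ} (h : a < 2 ^ i) : bitVal a i = 0 := by
  simp [bitVal, Nat.testBit_eq_false_of_lt h]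

theorem bitVal_two_pow_mul_add (a : ℕ) {b i : ℕ} (h : b < 2 ^ i) (j : ℕ) :
    bitVal (2 ^ i * a + b) j = if j < i then bitVal b j else bitVal a (j - i) := by
  unfold bitVal
  rw [Nat.testBit_two_pow_mul_add a h]
  split_ifs <;> simp_all

theorem testBit_sparse_mul {N v : ℕ} (hv : v < 2 ^ N) {b : ℕ} (hb : b < N) (t : ℕ) :
    ∀ col : ℕ, (∀ i, col.testBit i = true → N ∣ i) →
      bitVal (col * v) (N * t + b) = bitVal col (N * t) * bitVal v b := by
  have hN : 0 < N := by omega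
  have key : ∀ col : ℕ, (∀ i, col.testBit i = true → N ∣ i) →
      ∃ c < 2, col = 2 ^ N * (col / 2 ^ N) + c := by
    intro col hcol
    refine ⟨col % 2 ^ N, ?_, (Nat.div_add_mod _ _).symm⟩
    by_contra! h2
    obtain ⟨i, hi, hbit⟩ := Nat.exists_ge_and_testBit_of_ge_two_pow (n := 1) (x := col % 2 ^ N) h2
    rw [Nat.testBit_mod_two_pow, Bool.and_eq_true, decide_eq_true_eq] at hbit
    exact absurd (Nat.le_of_dvd (by omega) (hcol i hbit.2)) (by omega)
  induction t with
  | zero =>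
    intro col hcol
    obtain ⟨c, hc, hce⟩ := key col hcol
    have hcv : c * v < 2 ^ N := by interval_cases c <;> simp [hv]
    have hc2 : c < 2 ^ N := lt_of_lt_of_le hc (Nat.le_self_pow hN.ne' 2)
    have e : col * v = 2 ^ N * (col / 2 ^ N * v) + c * v := by
      conv_lhs => rw [hce]
      ring
    rw [e, bitVal_two_pow_mul_add _ hcv, hce, bitVal_two_pow_mul_add _ hc2]
    have : N * 0 + b < N := by omega
    rw [if_pos this, if_pos (by omega)]
    interval_cases c <;> simp [bitVal]
  | succ t ih =>
    intro col hcol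
    obtain ⟨c, hc, hce⟩ := key col hcol
    have hcv : c * v < 2 ^ N := by interval_cases c <;> simp [hv]
    have hc2 : c < 2 ^ N := lt_of_lt_of_le hc (Nat.le_self_pow hN.ne' 2)
    have e : col * v = 2 ^ N * (col / 2 ^ N * v) + c * v := by
      conv_lhs => rw [hce]
      ring
    have h1 : N * (t + 1) + b - N = N * t + b := by
      rw [Nat.mul_succ]; omega
    have h2 : N * (t + 1) - N = N * t := by
      rw [Nat.mul_succ]; omega
    have h3 : N ≤ N * (t + 1) := Nat.le_mul_of_pos_right _ (by omega)
    have := ih (col / 2 ^ N) (fun i hi => by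
      rw [Nat.testBit_div_two_pow] at hi
      have := hcol _ hi
      simpa using this)
    rw [e, bitVal_two_pow_mul_add _ hcv, if_neg (by omega), h1, this]
    conv_rhs => rw [hce, bitVal_two_pow_mul_add _ hc2, if_neg (by omega), h2]

theorem maskNat_dvd {N : ℕ} (hN : 0 < N) (s : ℕ) :
    ∀ i, (maskNat N s).testBit i = true → N ∣ i := by
  have h1 : 1 < 2 ^ N := Nat.one_lt_two_pow hN.ne'
  induction s with
  | zero => simp [maskNat]
  | succ s ih =>
    intro i hi
    rw [maskNat, Nat.testBit_two_pow_mul_add _ h1] at hi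
    split_ifs at hi with h
    · rw [Nat.testBit_one_eq_true_iff_self_eq_zero] at hi
      simp [hi]
    · have := ih _ hi
      exact (Nat.dvd_sub_iff_left (by omega) dvd_rfl).mp this

theorem bitVal_maskNat {N : ℕ} (hN : 0 < N) (s : ℕ) :
    ∀ t < s, bitVal (maskNat N s) (N * t) = 1 := by
  have h1 : 1 < 2 ^ N := Nat.one_lt_two_pow hN.ne'
  induction s with
  | zero => simp
  | succ s ih =>
    intro t ht
    rw [maskNat, bitVal_two_pow_mul_add _ h1]
    cases t with
    | zero => simp [bitVal, hN]
    | succ t =>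
      rw [if_neg (by rw [Nat.mul_succ]; omega)]
      convert ih t (by omega) using 2
      rw [Nat.mul_succ]; omega

theorem exists_pivot {v N : ℕ} (h0 : v ≠ 0) (hv : v < 2 ^ N) :
    ∃ t < N, v.gcd (2 ^ N) = 2 ^ t ∧ bitVal v t = 1 := by
  obtain ⟨t, htN, ht⟩ := (Nat.dvd_prime_pow Nat.prime_two).mp (Nat.gcd_dvd_right v (2 ^ N))
  have hdv : 2 ^ t ∣ v := ht ▸ Nat.gcd_dvd_left v (2 ^ N)
  have hlt : t < N := by
    rcases htN.lt_or_eq with h | rfl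
    · exact h
    · exact absurd (Nat.le_of_dvd (Nat.pos_of_ne_zero h0) hdv) (by omega)
  refine ⟨t, hlt, ht, ?_⟩
  obtain ⟨w, rfl⟩ := hdv
  have hodd : ¬ 2 ∣ w := by
    rintro ⟨u, rfl⟩
    have : 2 ^ (t + 1) ∣ (2 ^ t * (2 * u)).gcd (2 ^ N) :=
      Nat.dvd_gcd ⟨u, by ring⟩ (pow_dvd_pow 2 hlt)
    rw [ht] at this
    have hpos := Nat.two_pow_pos t
    exact absurd (Nat.le_of_dvd hpos this) (by rw [pow_succ]; omega)
  have := bitVal_two_pow_mul_add w (b := 0) (i := t) (by positivity) t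
  rw [add_zero] at this
  rw [this]
  simp only [lt_irrefl, if_false, Nat.sub_self, bitVal, Nat.testBit_zero]
  rw [if_pos]
  simp; omega

theorem linearIndependent_of_elimNat {N mask : ℕ}
    (hmask : ∀ i, mask.testBit i = true → N ∣ i) (s : ℕ) :
    ∀ M : ℕ, (∀ t < s, bitVal mask (N * t) = 1) → elimNat N mask s M = true →
      LinearIndependent (ZMod 2) (fun (t : Fin s) (b : Fin N) => bitVal M (N * t + b)) := by
  induction s with
  | zero => intro M _ _; exact linearIndependent_empty_type
  | succ s ih =>
    intro M hms hM
    simp only [elimNat, forceNat_eq, Bool.and_eq_true, bne_iff_ne] at hM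
    obtain ⟨hv0, hM⟩ := hM
    set v := M % 2 ^ N with hvdef
    have hv : v < 2 ^ N := Nat.mod_lt _ (by positivity)
    obtain ⟨τ, hτ, hg, hpiv⟩ := exists_pivot hv0 hv
    rw [hg] at hM
    have hrec := ih _ (fun t ht => hms t (by omega)) hM
    set row := fun (t : Fin (s + 1)) (b : Fin N) => bitVal M (N * t + b) with hrow
    have hrow0 : ∀ b : Fin N, row 0 b = bitVal v b := by
      intro b
      simp [hrow, hvdef, bitVal, Nat.testBit_mod_two_pow]
    have hsucc : ∀ (t : ℕ) (b : ℕ), bitVal (M >>> N) (N * t + b) = bitVal M (N * (t + 1) + b) := by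
      intro t b
      simp only [bitVal, Nat.testBit_shiftRight]
      rw [show N + (N * t + b) = N * (t + 1) + b by ring]
    have hcol : ∀ t : Fin s, ∀ b : Fin N,
        bitVal ((M >>> N) ^^^ (((M >>> N) / 2 ^ τ) &&& mask) * v) (N * t + b) =
          row t.succ b + row t.succ ⟨τ, hτ⟩ * row 0 b := by
      intro t b
      rw [bitVal_xor, testBit_sparse_mul hv b.2, bitVal_and, hms t (by omega), hsucc, hrow0, mul_one]
      · congr 2
        have : bitVal (M >>> N / 2 ^ τ) (N * t) = bitVal (M >>> N) (N * t + τ) := by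
          simp only [bitVal, Nat.testBit_div_two_pow]
        rw [this, hsucc]
        rfl
      · intro i hi
        rw [Nat.testBit_and, Bool.and_eq_true] at hi
        exact hmask i hi.2
    rw [Fintype.linearIndependent_iff] at hrec ⊢
    intro g hgz
    have hz : ∀ b : Fin N, g 0 * row 0 b + ∑ t : Fin s, g t.succ * row t.succ b = 0 := by
      intro b
      have := congrFun hgz b
      rw [Fin.sum_univ_succ] at this
      simpa [Finset.sum_apply] using this
    have hpiv0 : row 0 ⟨τ, hτ⟩ = 1 := by rw [hrow0]; exact hpiv
    have hzτ := hz ⟨τ, hτ⟩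
    rw [hpiv0, mul_one] at hzτ
    have h2 : (2 : ZMod 2) = 0 := rfl
    have hrest := hrec (fun t => g t.succ) (by
      funext b
      simp only [Finset.sum_apply, Pi.smul_apply, smul_eq_mul, Pi.zero_apply, hcol, mul_add,
        Finset.sum_add_distrib, ← mul_assoc, ← Finset.sum_mul]
      linear_combination hz b - row 0 b * hzτ +
        (row 0 b * ∑ t : Fin s, g t.succ * row t.succ ⟨τ, hτ⟩) * h2)
    intro i
    refine Fin.cases ?_ (fun t => hrest t) i
    simpa [hrest] using hzτ

theorem packNat_lt {N : ℕ} {f : ℕ → ℕ} (hf : ∀ t, f t < 2 ^ N) (s : ℕ) :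
    packNat N f s < 2 ^ (N * s) := by
  induction s with
  | zero => simp [packNat]
  | succ s ih =>
    rw [packNat, Nat.mul_succ, pow_add]
    calc 2 ^ (N * s) * f s + packNat N f s < 2 ^ (N * s) * f s + 2 ^ (N * s) := by omega
      _ = 2 ^ (N * s) * (f s + 1) := by ring
      _ ≤ _ := Nat.mul_le_mul_left _ (hf s)

theorem bitVal_packNat {N : ℕ} {f : ℕ → ℕ} (hf : ∀ t, f t < 2 ^ N) (s : ℕ) :
    ∀ t < s, ∀ b < N, bitVal (packNat N f s) (N * t + b) = bitVal (f t) b := by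
  induction s with
  | zero => simp
  | succ s ih =>
    intro t ht b hb
    rw [packNat, bitVal_two_pow_mul_add _ (packNat_lt hf s)]
    rcases Nat.lt_succ_iff_lt_or_eq.mp ht with h | rfl
    · rw [if_pos, ih t h b hb]
      calc N * t + b < N * t + N := by omega
        _ = N * (t + 1) := by ring
        _ ≤ N * s := Nat.mul_le_mul_left _ h
    · rw [if_neg (by omega), Nat.add_sub_cancel_left]

theorem linearIndependent_of_indepNat {N s : ℕ} (hN : 0 < N) {f : ℕ → ℕ}
    (hf : ∀ t, f t < 2 ^ N) (h : indepNat N s f = true) :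
    LinearIndependent (ZMod 2) (fun (t : Fin s) (b : Fin N) => bitVal (f t) b) := by
  rw [indepNat, forceNat_eq] at h
  convert linearIndependent_of_elimNat (maskNat_dvd hN s) s _ (bitVal_maskNat hN s) h
    using 3 with t b
  exact (bitVal_packNat hf s t t.2 b b.2).symm

theorem parityNat_lt (s x : ℕ) : parityNat s x < 2 ^ 1 := by
  induction s generalizing x with
  | zero => exact Nat.mod_lt _ two_pos
  | succ s ih => rw [parityNat, forceNat_eq]; exact ih _

theorem bitVal_parityNat (s x : ℕ) :
    bitVal (parityNat s x) 0 = ∑ i ∈ Finset.range (2 ^ s), bitVal x i := by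
  induction s generalizing x with
  | zero => rw [pow_zero, Finset.sum_range_one]; simp [parityNat, bitVal]
  | succ s ih =>
    rw [parityNat, forceNat_eq, ih, pow_succ, mul_two, Finset.sum_range_add, ← Finset.sum_add_distrib]
    refine Finset.sum_congr rfl fun i _ => ?_
    rw [bitVal_xor]
    simp [bitVal, Nat.testBit_shiftRight]

/-- Coordinates of tensors in `n` factors of dimension three. -/
abbrev Idx (n : ℕ) : Type := Fin n → Fin 3

/-- The `n`-tuples of vectors of length three over `R`. -/
abbrev Vecs (n : ℕ) (R : Type*) : Type _ := Fin n → Fin 3 → R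

section Segre

variable {n : ℕ} {R : Type*} [CommRing R]

/-- Coordinates of the rank one tensor `v₁ ⊗ ⋯ ⊗ vₙ`. -/
def seg (v : Vecs n R) : Idx n → R := fun f => ∏ j, v j (f j)

/-- Replacing the `j`-th factor by a standard basis vector. -/
abbrev setFactor (v : Vecs n R) (j : Fin n) (c : Fin 3) : Vecs n R :=
  Function.update v j (Pi.single c 1)

/-- Spanning vectors of the tangent space at `v`, adapted to the chart in which the coordinates
`v j (c j)` do not vanish. -/
def tanRow (c : Idx n) (v : Vecs n R) : Option (Fin n × Fin 2) → Idx n → R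
  | none => seg v
  | some x => seg (setFactor v x.1 ((c x.1).succAbove x.2))

/-- The Hessian at `v` of the linear form `h` restricted to rank one tensors, in the chart where
the zeroth coordinates do not vanish. -/
def hess (h : Idx n → R) (v : Vecs n R) : Matrix (Fin n × Fin 2) (Fin n × Fin 2) R :=
  fun x y => if x.1 = y.1 then 0 else h ⬝ᵥ seg (setFactor (setFactor v x.1 x.2.succ) y.1 y.2.succ)

end Segre

/-- A certificate over `𝔽₂`: points with independent tangent spaces, all annihilated by a linear
form whose Hessian at the first point is nondegenerate. -/
def Certified (n k : ℕ) : Prop :=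
  ∃ (p : ℕ → Vecs n (ZMod 2)) (h : Idx n → ZMod 2),
    (∀ i j, p i j 0 = 1) ∧
    LinearIndependent (ZMod 2)
      (fun x : Fin k × Option (Fin n × Fin 2) => tanRow 0 (p x.1) x.2) ∧
    (∀ i < k, ∀ r, h ⬝ᵥ tanRow 0 (p i) r = 0) ∧
    (hess h (p 0)).det ≠ 0

theorem segNat_lt (v : ℕ → ℕ) (n : ℕ) : segNat v n < 2 ^ 3 ^ n := by
  induction n with
  | zero => simp [segNat]
  | succ n ih =>
    have h0 : v n % 2 ≤ 1 := by omega
    have h1 : v n / 2 % 2 ≤ 1 := by omega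
    have h2 : v n / 4 % 2 ≤ 1 := by omega
    rw [segNat]
    set a := v n % 2
    set b := v n / 2 % 2
    set c := v n / 4 % 2
    have e : (2 : ℕ) ^ 3 ^ (n + 1) = (2 ^ 3 ^ n) ^ 3 := by rw [← pow_mul, pow_succ]
    have e2 : (2 : ℕ) ^ (2 * 3 ^ n) = (2 ^ 3 ^ n) ^ 2 := by rw [← pow_mul, mul_comm]
    rw [e, e2]
    generalize 2 ^ 3 ^ n = B at ih
    generalize segNat v n = X at ih
    calc X * (B ^ 2 * c + B * b + a) ≤ X * (B ^ 2 * 1 + B * 1 + 1) := by gcongr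
      _ < B ^ 3 := by
        obtain ⟨d, rfl⟩ := Nat.exists_eq_add_of_lt ih
        ring_nf
        nlinarith [Nat.zero_le (X * d), Nat.zero_le (X ^ 2 * d), Nat.zero_le (X * d ^ 2),
          Nat.zero_le d, Nat.zero_le (d ^ 2), Nat.zero_le (d ^ 3)]

theorem bitVal_segNat (v : ℕ → ℕ) {n : ℕ} (f : Idx n) :
    bitVal (segNat v n) (finFunctionFinEquiv f) = seg (fun j c => bitVal (v j) c) f := by
  unfold seg
  induction n with
  | zero => simp [segNat, bitVal]
  | succ n ih =>
    have hX := segNat_lt v n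
    have hidx : ((finFunctionFinEquiv f : Fin (3 ^ (n + 1))) : ℕ) =
        3 ^ n * (f (Fin.last n) : ℕ) + (finFunctionFinEquiv (fun i : Fin n => f i.castSucc) : ℕ) := by
      simp only [finFunctionFinEquiv_apply, Fin.sum_univ_castSucc, Fin.val_castSucc, Fin.val_last]
      ring
    have hr := (finFunctionFinEquiv (fun i : Fin n => f i.castSucc)).2
    rw [Fin.prod_univ_castSucc, hidx]
    have ih' := ih (fun i => f i.castSucc)
    simp only [Fin.val_castSucc, Fin.val_last]
    rw [← ih', segNat]
    set r : ℕ := (finFunctionFinEquiv (fun i : Fin n => f i.castSucc) : ℕ)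
    have hmul : ∀ x : ℕ, segNat v n * (x % 2) < 2 ^ 3 ^ n := by
      intro x
      rcases Nat.mod_two_eq_zero_or_one x with h | h <;> simp [h, hX]
    have hbit : ∀ x : ℕ, bitVal (segNat v n * (x % 2)) r = bitVal (segNat v n) r * bitVal x 0 := by
      intro x
      rcases Nat.mod_two_eq_zero_or_one x with h | h <;> simp [h, bitVal]
    have e : segNat v n * (2 ^ (2 * 3 ^ n) * (v n / 4 % 2) + 2 ^ 3 ^ n * (v n / 2 % 2) + v n % 2) =
        2 ^ 3 ^ n * (2 ^ 3 ^ n * (segNat v n * (v n / 4 % 2)) + segNat v n * (v n / 2 % 2)) +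
          segNat v n * (v n % 2) := by
      rw [mul_comm 2 (3 ^ n), pow_mul]; ring
    have hb2 : bitVal (v n / 2) 0 = bitVal (v n) 1 := by
      simp only [bitVal]; rw [← Nat.testBit_succ]
    have hb4 : bitVal (v n / 4) 0 = bitVal (v n) 2 := by
      simp only [bitVal]; rw [show v n / 4 = v n / 2 / 2 by omega, ← Nat.testBit_succ,
        ← Nat.testBit_succ]
    rw [e, bitVal_two_pow_mul_add _ (hmul _)]
    generalize f (Fin.last n) = c
    fin_cases c
    · rw [if_pos (by simpa using hr)]
      simp [hbit]
    · rw [if_neg (by simp), bitVal_two_pow_mul_add _ (hmul _), if_pos (by simpa using hr)]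
      simp [hbit, hb2]
    · have h2 : 3 ^ n * 2 + r - 3 ^ n = 3 ^ n + r := by omega
      simp only [h2]
      rw [if_neg (by simp; omega), bitVal_two_pow_mul_add _ (hmul _), if_neg (by omega)]
      simp [hbit, hb4]

theorem bitVal_two_pow (c i : ℕ) : bitVal (2 ^ c) i = if i = c then 1 else 0 := by
  simp [bitVal, Nat.testBit_two_pow, eq_comm]

theorem bitVal_update {n : ℕ} (v : ℕ → ℕ) (j : Fin n) (d : Fin 2) :
    (fun (i : Fin n) (c : Fin 3) => bitVal (Function.update v j (2 ^ ((d : ℕ) + 1)) i) c) =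
      setFactor (fun i c => bitVal (v i) c) j d.succ := by
  funext i c
  by_cases h : i = j
  · subst h
    simp [bitVal_two_pow, Pi.single_apply, Fin.ext_iff]
  · have h' : (i : ℕ) ≠ j := fun e => h (Fin.ext e)
    simp [Function.update_of_ne h, Function.update_of_ne h']

theorem sum_bitVal_idx {n : ℕ} (hn : n ≤ 6) {x : ℕ} (hx : x < 2 ^ 3 ^ n) :
    ∑ f : Idx n, bitVal x (finFunctionFinEquiv f) = bitVal (parityNat 10 x) 0 := by
  rw [bitVal_parityNat, Equiv.sum_comp finFunctionFinEquiv (fun i : Fin (3 ^ n) => bitVal x i),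
    Fin.sum_univ_eq_sum_range (fun i => bitVal x i)]
  have h3 : 3 ^ n ≤ 2 ^ 10 := (Nat.pow_le_pow_right (by norm_num) hn).trans (by norm_num)
  refine Finset.sum_subset (by simpa using h3) fun i _ hi => bitVal_eq_zero ?_
  exact hx.trans_le (Nat.pow_le_pow_right two_pos (by simpa using hi))

theorem dotProduct_segNat {n : ℕ} (hn : n ≤ 6) (h : ℕ) (v : ℕ → ℕ) :
    (fun f : Idx n => bitVal h (finFunctionFinEquiv f)) ⬝ᵥ seg (fun j c => bitVal (v j) c) =
      bitVal (parityNat 10 (h &&& segNat v n)) 0 := by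
  rw [← sum_bitVal_idx hn (lt_of_le_of_lt Nat.and_le_right (segNat_lt v n))]
  simp only [dotProduct, bitVal_and, bitVal_segNat]

/-- Position of a tangent vector in the enumeration used by `rowNat`. -/
def rowPos (n : ℕ) : Option (Fin n × Fin 2) → ℕ
  | none => 0
  | some x => 2 * (x.1 : ℕ) + x.2 + 1

theorem rowPos_lt (n : ℕ) (r : Option (Fin n × Fin 2)) : rowPos n r < 2 * n + 1 := by
  rcases r with _ | ⟨j, d⟩ <;> simp only [rowPos] <;> omega

theorem rowPos_injective (n : ℕ) : Function.Injective (rowPos n) := by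
  rintro (_ | ⟨j, d⟩) (_ | ⟨j', d'⟩) h <;> simp only [rowPos] at h
  · rfl
  · omega
  · omega
  · have h1 : j = j' := Fin.ext (by omega)
    have h2 : d = d' := Fin.ext (by omega)
    rw [h1, h2]

theorem rowNat_eq (n D i : ℕ) (r : Option (Fin n × Fin 2)) :
    (∀ f : Idx n, bitVal (rowNat n D ((2 * n + 1) * i + rowPos n r)) (finFunctionFinEquiv f) =
      tanRow 0 (fun j c => bitVal (pointNat n D i j) c) r f) ∧
    ∃ v : ℕ → ℕ, rowNat n D ((2 * n + 1) * i + rowPos n r) = segNat v n ∧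
      tanRow 0 (fun j c => bitVal (pointNat n D i j) c) r =
        seg (fun (j : Fin n) (c : Fin 3) => bitVal (v j) c) := by
  have hlt := rowPos_lt n r
  have hmod : ((2 * n + 1) * i + rowPos n r) % (2 * n + 1) = rowPos n r := by
    rw [Nat.mul_add_mod, Nat.mod_eq_of_lt hlt]
  have hdiv : ((2 * n + 1) * i + rowPos n r) / (2 * n + 1) = i := by
    rw [Nat.mul_add_div (by omega), Nat.div_eq_of_lt hlt, add_zero]
  have hex : ∃ v : ℕ → ℕ, rowNat n D ((2 * n + 1) * i + rowPos n r) = segNat v n ∧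
      tanRow 0 (fun j c => bitVal (pointNat n D i j) c) r =
        seg (fun (j : Fin n) (c : Fin 3) => bitVal (v j) c) := by
    unfold rowNat
    rw [hmod, hdiv]
    rcases r with _ | ⟨j, d⟩
    · exact ⟨_, rfl, rfl⟩
    · have h1 : (2 * (j : ℕ) + d) / 2 = j := by omega
      have h2 : (2 * (j : ℕ) + d) % 2 = d := by omega
      refine ⟨Function.update (pointNat n D i) j (2 ^ ((d : ℕ) + 1)), ?_, ?_⟩
      · simp only [rowPos, h1, h2]
      · rw [bitVal_update]
        simp [tanRow]
  refine ⟨fun f => ?_, hex⟩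
  obtain ⟨v, h1, h2⟩ := hex
  rw [h1, h2, bitVal_segNat]

theorem rowNat_lt (n D t : ℕ) : rowNat n D t < 2 ^ 3 ^ n := by
  unfold rowNat
  split <;> exact segNat_lt _ _

theorem hess_eq {n : ℕ} (hn : n ≤ 6) (D h : ℕ) (x y : Fin n × Fin 2) :
    hess (fun f : Idx n => bitVal h (finFunctionFinEquiv f))
      (fun j c => bitVal (pointNat n D 0 j) c) x y =
      bitVal (hessNat n D h (2 * x.1 + x.2) (2 * y.1 + y.2)) 0 := by
  obtain ⟨j, d⟩ := x
  obtain ⟨j', d'⟩ := y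
  have h1 : (2 * (j : ℕ) + d) / 2 = j := by omega
  have h2 : (2 * (j : ℕ) + d) % 2 = d := by omega
  have h3 : (2 * (j' : ℕ) + d') / 2 = j' := by omega
  have h4 : (2 * (j' : ℕ) + d') % 2 = d' := by omega
  simp only [hess, hessNat, h1, h2, h3, h4, Fin.ext_iff]
  split_ifs
  · simp [bitVal]
  · rw [← dotProduct_segNat hn, bitVal_update, bitVal_update]

theorem hessNat_lt (n D h t b : ℕ) : hessNat n D h t b < 2 ^ 1 := by
  unfold hessNat
  split_ifs
  · norm_num
  · exact parityNat_lt _ _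

theorem certified_of_certNat {n k D h : ℕ} (hn0 : 0 < n) (hn : n ≤ 6)
    (hc : certNat n k D h = true) : Certified n k := by
  simp only [certNat, Bool.and_eq_true, List.all_eq_true, List.mem_range, beq_iff_eq] at hc
  obtain ⟨⟨hli, hann⟩, hhess⟩ := hc
  refine ⟨fun i j c => bitVal (pointNat n D i j) c,
    fun f => bitVal h (finFunctionFinEquiv f), ?_, ?_, ?_, ?_⟩
  · intro i j
    simp [pointNat, bitVal]
  · have := linearIndependent_of_indepNat (by positivity) (rowNat_lt n D) hli
    have hpos : ∀ x : Fin k × Option (Fin n × Fin 2),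
        (2 * n + 1) * (x.1 : ℕ) + rowPos n x.2 < k * (2 * n + 1) := fun x =>
      calc (2 * n + 1) * (x.1 : ℕ) + rowPos n x.2 < (2 * n + 1) * (x.1 : ℕ) + (2 * n + 1) :=
            Nat.add_lt_add_left (rowPos_lt n x.2) _
        _ = (2 * n + 1) * ((x.1 : ℕ) + 1) := by ring
        _ ≤ (2 * n + 1) * k := Nat.mul_le_mul_left _ x.1.2
        _ = _ := mul_comm _ _
    have hinj : Function.Injective (fun x : Fin k × Option (Fin n × Fin 2) =>
        (⟨_, hpos x⟩ : Fin (k * (2 * n + 1)))) := by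
      intro x y hxy
      have hxy := congrArg Fin.val hxy
      have hx := rowPos_lt n x.2
      have hy := rowPos_lt n y.2
      have h1 := congrArg (· % (2 * n + 1)) hxy
      have h2 := congrArg (· / (2 * n + 1)) hxy
      simp only [Nat.mul_add_mod, Nat.mod_eq_of_lt hx, Nat.mod_eq_of_lt hy] at h1
      simp only [Nat.mul_add_div (show 0 < 2 * n + 1 by omega), Nat.div_eq_of_lt hx,
        Nat.div_eq_of_lt hy, add_zero] at h2
      exact Prod.ext (Fin.ext h2) (rowPos_injective n h1)
    have := (this.comp _ hinj).map' (LinearMap.funLeft (ZMod 2) (ZMod 2)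
      (finFunctionFinEquiv (m := 3) (n := n)))
      (LinearMap.ker_eq_bot.mpr (LinearMap.funLeft_injective_of_surjective _ _ _
        (Equiv.surjective _)))
    convert! this using 1
    funext x f
    exact ((rowNat_eq n D x.1 x.2).1 f).symm
  · intro i hi r
    obtain ⟨v, h1, h2⟩ := (rowNat_eq n D i r).2
    have hlt : (2 * n + 1) * i + rowPos n r < k * (2 * n + 1) :=
      calc (2 * n + 1) * i + rowPos n r < (2 * n + 1) * i + (2 * n + 1) :=
            Nat.add_lt_add_left (rowPos_lt n r) _
        _ = (2 * n + 1) * (i + 1) := by ring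
        _ ≤ (2 * n + 1) * k := Nat.mul_le_mul_left _ hi
        _ = _ := mul_comm _ _
    have := hann _ hlt
    rw [h2, dotProduct_segNat hn, ← h1, this]
    simp [bitVal]
  · have hpk : ∀ t, packNat 1 (hessNat n D h t) (2 * n) < 2 ^ (2 * n) := fun t => by
      simpa using packNat_lt (N := 1) (hessNat_lt n D h t) (2 * n)
    have hli2 := linearIndependent_of_indepNat (by positivity) hpk hhess
    let e : Fin n × Fin 2 → Fin (2 * n) := fun x => ⟨2 * x.1 + x.2, by omega⟩
    have hinj : Function.Injective e := by
      rintro ⟨j, d⟩ ⟨j', d'⟩ hxy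
      have hxy := congrArg Fin.val hxy
      simp only [e] at hxy
      exact Prod.ext (Fin.ext (by simp only; omega)) (Fin.ext (by simp only; omega))
    have hsurj : Function.Surjective e := by
      have := (Fintype.bijective_iff_injective_and_card e).mpr ⟨hinj, by simp [mul_comm]⟩
      exact this.2
    have := (hli2.comp _ hinj).map' (LinearMap.funLeft (ZMod 2) (ZMod 2) e)
      (LinearMap.ker_eq_bot.mpr (LinearMap.funLeft_injective_of_surjective _ _ _ hsurj))
    rw [← isUnit_iff_ne_zero, ← Matrix.isUnit_iff_isUnit_det,
      ← Matrix.linearIndependent_rows_iff_isUnit]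
    convert! this using 1
    funext x y
    have hx := bitVal_packNat (N := 1) (hessNat_lt n D h (e x)) (2 * n) (e y) (e y).2 0 one_pos
    rw [one_mul, add_zero] at hx
    exact (hess_eq hn D h x y).trans hx.symm

section SegreLemmas

variable {n : ℕ} {R S : Type*} [CommRing R] [CommRing S]

/-- The map `seg` as a multilinear map. -/
def segMultilinear (n : ℕ) (R : Type*) [CommRing R] :
    MultilinearMap R (fun _ : Fin n => Fin 3 → R) (Idx n → R) :=
  MultilinearMap.pi fun f =>
    (MultilinearMap.mkPiAlgebra R (Fin n) R).compLinearMap fun j => LinearMap.proj (f j)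

theorem segMultilinear_apply (v : Vecs n R) : segMultilinear n R v = seg v := by
  ext f; simp [segMultilinear, seg]

/-- The tangent space at `v` to the cone of rank one tensors. -/
def tanSpan (v : Vecs n R) : Submodule R (Idx n → R) :=
  Submodule.span R {x | ∃ (j : Fin n) (u : Fin 3 → R), x = seg (Function.update v j u)}

theorem seg_update_mem_tanSpan (v : Vecs n R) (j : Fin n) (u : Fin 3 → R) :
    seg (Function.update v j u) ∈ tanSpan v :=
  Submodule.subset_span ⟨j, u, rfl⟩

theorem seg_mem_tanSpan (v : Vecs n R) (j : Fin n) : seg v ∈ tanSpan v := by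
  simpa using seg_update_mem_tanSpan v j (v j)

theorem map_seg (φ : R →+* S) (v : Vecs n R) (f : Idx n) :
    φ (seg v f) = seg (fun j c => φ (v j c)) f := by
  simp [seg]

theorem map_setFactor (φ : R →+* S) (v : Vecs n R) (j : Fin n) (c : Fin 3) :
    (fun j' c' => φ (setFactor v j c j' c')) = setFactor (fun j' c' => φ (v j' c')) j c := by
  funext j' c'
  by_cases h : j' = j
  · subst h; simp [Pi.single_apply, apply_ite φ]
  · simp [Function.update_of_ne h]

theorem map_tanRow (φ : R →+* S) (c : Idx n) (v : Vecs n R) (r : Option (Fin n × Fin 2))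
    (f : Idx n) : φ (tanRow c v r f) = tanRow c (fun j c => φ (v j c)) r f := by
  rcases r with _ | x
  · exact map_seg φ v f
  · simp only [tanRow, map_seg, map_setFactor]

theorem map_hess (φ : R →+* S) (h : Idx n → R) (v : Vecs n R) :
    (hess h v).map φ = hess (fun f => φ (h f)) (fun j c => φ (v j c)) := by
  ext x y
  simp only [Matrix.map_apply, hess]
  split_ifs
  · simp
  · simp only [dotProduct, map_sum, map_mul, map_seg, map_setFactor]

theorem seg_update_eq_sum (v : Vecs n R) (j : Fin n) (u : Fin 3 → R) :
    seg (Function.update v j u) = ∑ c, u c • seg (setFactor v j c) := by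
  simp only [← segMultilinear_apply]
  conv_lhs => rw [pi_eq_sum_univ u, MultilinearMap.map_update_sum]
  refine Finset.sum_congr rfl fun c _ => ?_
  rw [MultilinearMap.map_update_smul]
  congr 3
  funext i
  simp [Pi.single_apply, eq_comm]

theorem seg_eq_sum (v : Vecs n R) (j : Fin n) : seg v = ∑ c, v j c • seg (setFactor v j c) := by
  rw [← seg_update_eq_sum, Function.update_eq_self]

theorem tanRow_mem_tanSpan (hn : 0 < n) (c : Idx n) (v : Vecs n R) (r : Option (Fin n × Fin 2)) :
    tanRow c v r ∈ tanSpan v := by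
  rcases r with _ | x
  · exact seg_mem_tanSpan v ⟨0, hn⟩
  · exact seg_update_mem_tanSpan _ _ _

theorem tanSpan_le_span_tanRow {K : Type*} [Field K] {v : Vecs n K} {c : Idx n}
    (hv : ∀ j, v j (c j) ≠ 0) : tanSpan v ≤ Submodule.span K (Set.range (tanRow c v)) := by
  refine Submodule.span_le.mpr ?_
  rintro _ ⟨j, u, rfl⟩
  have hoff : ∀ d, seg (setFactor v j ((c j).succAbove d)) ∈
      Submodule.span K (Set.range (tanRow c v)) := fun d =>
    Submodule.subset_span ⟨some (j, d), rfl⟩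
  have hon : seg (setFactor v j (c j)) ∈ Submodule.span K (Set.range (tanRow c v)) := by
    have h := seg_eq_sum v j
    rw [Fin.sum_univ_succAbove _ (c j)] at h
    have h' : seg (setFactor v j (c j)) = (v j (c j))⁻¹ •
        (seg v - ∑ d, v j ((c j).succAbove d) • seg (setFactor v j ((c j).succAbove d))) := by
      rw [eq_inv_smul_iff₀ (hv j), eq_sub_iff_add_eq, ← h]
    rw [h']
    exact Submodule.smul_mem _ _ (Submodule.sub_mem _ (Submodule.subset_span ⟨none, rfl⟩)
      (Submodule.sum_mem _ fun d _ => Submodule.smul_mem _ _ (hoff d)))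
  rw [seg_update_eq_sum, Fin.sum_univ_succAbove _ (c j)]
  exact Submodule.add_mem _ (Submodule.smul_mem _ _ hon)
    (Submodule.sum_mem _ fun d _ => Submodule.smul_mem _ _ (hoff d))

theorem span_tanRow_eq_tanSpan (hn : 0 < n) {K : Type*} [Field K] {v : Vecs n K} {c : Idx n}
    (hv : ∀ j, v j (c j) ≠ 0) : Submodule.span K (Set.range (tanRow c v)) = tanSpan v :=
  le_antisymm (Submodule.span_le.mpr (by rintro _ ⟨r, rfl⟩; exact tanRow_mem_tanSpan hn c v r))
    (tanSpan_le_span_tanRow hv)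

theorem exists_tanSpan_le {K : Type*} [Field K] (v : Vecs n K) :
    ∃ r : Option (Fin n × Fin 2) → Idx n → K, tanSpan v ≤ Submodule.span K (Set.range r) := by
  classical
  let v' : Vecs n K := fun j => if v j = 0 then Pi.single 0 1 else v j
  have hne : ∀ j, v' j ≠ 0 := by
    intro j
    simp only [v']
    split_ifs with h
    · simp
    · exact h
  choose c hc using fun j => Function.ne_iff.mp (hne j)
  refine ⟨tanRow c v', le_trans (Submodule.span_le.mpr ?_) (tanSpan_le_span_tanRow hc)⟩
  rintro _ ⟨j, u, rfl⟩
  by_cases h : ∀ i ≠ j, v i ≠ 0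
  · have : Function.update v j u = Function.update v' j u := by
      funext i
      by_cases hij : i = j
      · subst hij; simp
      · simp [Function.update_of_ne hij, v', h i hij]
    rw [this]
    exact seg_update_mem_tanSpan _ _ _
  · push Not at h
    obtain ⟨i, hij, hi⟩ := h
    have : seg (Function.update v j u) = 0 := by
      funext f
      exact Finset.prod_eq_zero (Finset.mem_univ i) (by simp [Function.update_of_ne hij, hi])
    rw [this]
    exact zero_mem _

theorem finrank_iSup_tanSpan_le {K : Type*} [Field K] {k : ℕ} (s : Fin k → Vecs n K) :
    Module.finrank K ↥(⨆ i, tanSpan (s i)) ≤ k * (2 * n + 1) := by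
  choose r hr using fun i => exists_tanSpan_le (s i)
  have h : ⨆ i, tanSpan (s i) ≤ Submodule.span K
      (Set.range fun x : Fin k × Option (Fin n × Fin 2) => r x.1 x.2) :=
    iSup_le fun i => (hr i).trans (Submodule.span_mono (by
      rintro _ ⟨y, rfl⟩; exact ⟨(i, y), rfl⟩))
  refine (Submodule.finrank_mono h).trans ((finrank_range_le_card _).trans ?_)
  simp [mul_comm]

end SegreLemmas

theorem Certified.mono {n k l : ℕ} (h : Certified n l) (hkl : k ≤ l) : Certified n k := by
  obtain ⟨p, g, h0, hli, hann, hdet⟩ := h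
  refine ⟨p, g, h0, ?_, fun i hi => hann i (hi.trans_le hkl), hdet⟩
  exact hli.comp (fun x : Fin k × Option (Fin n × Fin 2) => (Fin.castLE hkl x.1, x.2))
    fun x y hxy => by
      simp only [Prod.mk.injEq, Fin.castLE_inj] at hxy
      exact Prod.ext hxy.1 hxy.2

/-- Lifting independence, and the linear forms annihilating a family, along a surjection. -/
theorem exists_lift_of_linearIndependent {A F ι κ : Type*} [CommRing A] [Field F] [Fintype ι]
    [Fintype κ] (φ : A →+* F) (hφ : Function.Surjective φ) (a : ι → κ → A)
    (hli : LinearIndependent F fun i j => φ (a i j)) :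
    ∃ δ : A, φ δ = 1 ∧
      (∀ (K : Type) [Field K] (ψ : A →+* K), ψ δ ≠ 0 → LinearIndependent K fun i j => ψ (a i j)) ∧
      ∀ h₀ : κ → F, (∀ i, h₀ ⬝ᵥ (fun j => φ (a i j)) = 0) →
        ∃ h : κ → A, (∀ i, h ⬝ᵥ a i = 0) ∧ ∀ j, φ (h j) = h₀ j := by
  classical
  obtain ⟨B₀, hB₀⟩ : ∃ B₀ : Matrix κ ι F, (Matrix.of fun i j => φ (a i j)) * B₀ = 1 := by
    obtain ⟨g, hg⟩ := LinearMap.exists_leftInverse_of_injective _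
      (LinearMap.ker_eq_bot.mpr hli.fintypeLinearCombination_injective)
    refine ⟨Matrix.of fun j i => g (Pi.single j 1) i, ?_⟩
    ext i i'
    have h := congrFun (LinearMap.congr_fun hg (Pi.single i 1)) i'
    rw [LinearMap.comp_apply, Fintype.linearCombination_apply_single, one_smul,
      pi_eq_sum_univ' (fun j => φ (a i j)), map_sum] at h
    simp only [map_smul, Finset.sum_apply, Pi.smul_apply, smul_eq_mul] at h
    simp only [Matrix.mul_apply, Matrix.of_apply]
    rw [h]
    simp [Matrix.one_apply, Pi.single_apply, eq_comm]
  choose lift hlift using hφ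
  let B : Matrix κ ι A := fun j i => lift (B₀ j i)
  let M : Matrix ι ι A := Matrix.of a * B
  have hM : M.map φ = 1 := by
    rw [Matrix.map_mul, ← hB₀]
    congr 1
    ext j i
    exact hlift _
  refine ⟨M.det, ?_, ?_, ?_⟩
  · rw [RingHom.map_det]
    simp [RingHom.mapMatrix_apply, hM]
  · intro K _ ψ hψ
    rw [RingHom.map_det, RingHom.mapMatrix_apply, Matrix.map_mul] at hψ
    have hu := (Matrix.isUnit_iff_isUnit_det _).mpr (isUnit_iff_ne_zero.mpr hψ)
    have := Matrix.vecMul_injective_of_isUnit hu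
    refine (Matrix.vecMul_injective_iff (M := (Matrix.of a).map ψ)).mp ?_
    intro x y hxy
    apply this
    simp only [← Matrix.vecMul_vecMul]
    exact congrArg (fun z => Matrix.vecMul z (B.map ψ)) hxy
  · intro h₀ hh
    let g : κ → A := fun j => lift (h₀ j)
    have hg : ∀ j, φ (g j) = h₀ j := fun j => hlift _
    refine ⟨M.det • g - Matrix.mulVec B (Matrix.mulVec M.adjugate (Matrix.mulVec (Matrix.of a) g)),
      ?_, ?_⟩
    · have : Matrix.mulVec (Matrix.of a) (M.det • g -
          Matrix.mulVec B (Matrix.mulVec M.adjugate (Matrix.mulVec (Matrix.of a) g))) = 0 := by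
        rw [Matrix.mulVec_sub, Matrix.mulVec_mulVec, Matrix.mulVec_mulVec,
          show Matrix.of a * B = M from rfl, Matrix.mul_adjugate, Matrix.mulVec_smul,
          Matrix.smul_mulVec, Matrix.one_mulVec, sub_self]
      intro i
      rw [dotProduct_comm]
      exact congrFun this i
    · intro j
      have hz : ∀ i, φ (Matrix.mulVec (Matrix.of a) g i) = 0 := fun i => by
        rw [← hh i, dotProduct_comm]
        simp [Matrix.mulVec, dotProduct, hg]
      have hdet : φ M.det = 1 := by
        rw [RingHom.map_det]
        simp [RingHom.mapMatrix_apply, hM]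
      simp only [Pi.sub_apply, Pi.smul_apply, smul_eq_mul, map_sub, map_mul, hdet, hg, one_mul,
        sub_eq_self]
      simp only [Matrix.mulVec, dotProduct, map_sum, map_mul] at hz ⊢
      simp only [hz, mul_zero, Finset.sum_const_zero]

section GenericPoint

open MvPolynomial

/-- An algebraic closure of the field of rational functions in the variables `σ`. -/
abbrev GenField (σ : Type) : Type := AlgebraicClosure (FractionRing (MvPolynomial σ ℂ))

theorem algebraMap_genField_injective (σ : Type) :
    Function.Injective (algebraMap (MvPolynomial σ ℂ) (GenField σ)) := by
  rw [IsScalarTower.algebraMap_eq (MvPolynomial σ ℂ) (FractionRing (MvPolynomial σ ℂ)) (GenField σ)]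
  exact (algebraMap (FractionRing (MvPolynomial σ ℂ)) (GenField σ)).injective.comp
    (IsFractionRing.injective (MvPolynomial σ ℂ) (FractionRing (MvPolynomial σ ℂ)))

/-- The generic point. -/
def genVar {σ : Type} (x : σ) : GenField σ := algebraMap (MvPolynomial σ ℂ) (GenField σ) (X x)

/-- If a system of equations has no solution over the generic point, then its parameters
satisfy a nontrivial equation. -/
theorem exists_ne_zero_of_no_generic_solution {σ τ : Type} [Finite τ]
    (S : Set (MvPolynomial τ (MvPolynomial σ ℂ)))
    (hS : ¬ ∃ y : τ → GenField σ, ∀ f ∈ S, aeval y f = 0) :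
    ∃ F : MvPolynomial σ ℂ, F ≠ 0 ∧ ∀ (p : σ → ℂ) (y : τ → ℂ),
      (∀ f ∈ S, eval₂ (eval p) y f = 0) → eval p F = 0 := by
  let K := FractionRing (MvPolynomial σ ℂ)
  let _ : Algebra (MvPolynomial τ (MvPolynomial σ ℂ)) (MvPolynomial τ K) := algebraMvPolynomial
  let φ := algebraMap (MvPolynomial τ (MvPolynomial σ ℂ)) (MvPolynomial τ K)
  have hφ : ∀ (y : τ → GenField σ) f, aeval y (φ f) = aeval y f := fun y f => by
    simp only [φ, MvPolynomial.algebraMap_def, aeval_map_algebraMap]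
  have htop : (Ideal.span S).map φ = ⊤ := by
    rw [← Ideal.radical_eq_top, ← vanishingIdeal_zeroLocus_eq_radical (K := GenField σ),
      Ideal.map_span, zeroLocus_span]
    have : {x : τ → GenField σ | ∀ p ∈ φ '' S, aeval x p = 0} = ∅ := by
      refine Set.eq_empty_of_forall_notMem fun y hy => hS ⟨y, fun f hf => ?_⟩
      rw [← hφ]
      exact hy _ ⟨f, hf, rfl⟩
    rw [this, vanishingIdeal_empty]
  have hnd := (IsLocalization.map_algebraMap_ne_top_iff_disjoint
    ((nonZeroDivisors (MvPolynomial σ ℂ)).map (C (σ := τ))) (MvPolynomial τ K)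
    (Ideal.span S)).not.mp (not_not.mpr htop)
  rw [Set.not_disjoint_iff] at hnd
  obtain ⟨_, ⟨F, hF, rfl⟩, hmem⟩ := hnd
  refine ⟨F, nonZeroDivisors.ne_zero hF, fun p y hy => ?_⟩
  have hle : Ideal.span S ≤ RingHom.ker (eval₂Hom (eval p) y) := Ideal.span_le.mpr fun f hf => hy f hf
  simpa using hle hmem

/-- The partial derivatives extend to the algebraic closure. -/
theorem exists_derivation_genField {σ : Type} [DecidableEq σ] (x : σ) :
    ∃ D : Derivation ℂ (GenField σ) (GenField σ),
      ∀ y, D (genVar y) = if y = x then 1 else 0 := by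
  let A := MvPolynomial σ ℂ
  have h1 : Algebra.FormallyEtale A (FractionRing A) :=
    Algebra.FormallyEtale.of_isLocalization (nonZeroDivisors A)
  have h2 : Algebra.FormallyEtale (FractionRing A) (GenField σ) :=
    Algebra.FormallyEtale.of_isSeparable _ _
  have h3 : Algebra.FormallyEtale A (GenField σ) := Algebra.FormallyEtale.comp _ (FractionRing A) _
  let d : Derivation ℂ A (GenField σ) := (Algebra.linearMap A (GenField σ)).compDer (pderiv x)
  refine ⟨((d.liftKaehlerDifferential.liftBaseChange (GenField σ)) ∘ₗ
    (KaehlerDifferential.tensorKaehlerEquivOfFormallyEtale ℂ A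
      (GenField σ)).symm.toLinearMap).compDer (KaehlerDifferential.D ℂ (GenField σ)), fun y => ?_⟩
  have h : (KaehlerDifferential.tensorKaehlerEquivOfFormallyEtale ℂ A
      (GenField σ)).symm (KaehlerDifferential.D ℂ (GenField σ) (genVar y)) =
        1 ⊗ₜ KaehlerDifferential.D ℂ A (X y) :=
    KaehlerDifferential.tensorKaehlerEquivOfFormallyEtale_symm_D_algebraMap ℂ A (GenField σ) (X y)
  refine (congrArg (d.liftKaehlerDifferential.liftBaseChange (GenField σ)) h).trans ?_
  rw [ LinearMap.liftBaseChange_tmul, one_smul, Derivation.liftKaehlerDifferential_comp_D]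
  change algebraMap A (GenField σ) (pderiv x (X y)) = _
  simp only [pderiv_X, Pi.single_apply, apply_ite (algebraMap A (GenField σ)), map_one, map_zero]

end GenericPoint

theorem Derivation.map_seg {n : ℕ} {K : Type*} [Field K] [Algebra ℂ K] (D : Derivation ℂ K K)
    (v : Vecs n K) (f : Idx n) :
    D (seg v f) = ∑ j, seg (Function.update v j fun c => D (v j c)) f := by
  have h : ∀ s : Finset (Fin n), D (∏ j ∈ s, v j (f j)) =
      ∑ j ∈ s, ∏ i ∈ s, Function.update v j (fun c => D (v j c)) i (f i) := by
    intro s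
    induction s using Finset.induction_on with
    | empty => simp
    | insert a s ha ih =>
      rw [Finset.prod_insert ha, D.leibniz, ih, Finset.sum_insert ha, Finset.prod_insert ha,
        Function.update_self, smul_eq_mul, smul_eq_mul, Finset.mul_sum, add_comm]
      congr 1
      · rw [mul_comm]
        congr 1
        refine Finset.prod_congr rfl fun i hi => ?_
        rw [Function.update_of_ne (ne_of_mem_of_not_mem hi ha)]
      · refine Finset.sum_congr rfl fun j hj => ?_
        rw [Finset.prod_insert ha, Function.update_of_ne (ne_of_mem_of_not_mem hj ha).symm]
  exact h Finset.univ

section WeaklyDefective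

theorem iSup_tanSpan_eq_span_tanRow {n k : ℕ} (hn : 0 < n) {K : Type*} [Field K]
    {p : Fin k → Vecs n K} (hp : ∀ i j, p i j 0 ≠ 0) :
    ⨆ i, tanSpan (p i) = Submodule.span K
      (Set.range fun x : Fin k × Option (Fin n × Fin 2) => tanRow 0 (p x.1) x.2) := by
  refine le_antisymm (iSup_le fun i => ?_) (Submodule.span_le.mpr ?_)
  · rw [← span_tanRow_eq_tanSpan hn (c := 0) (hp i)]
    exact Submodule.span_mono (by rintro _ ⟨r, rfl⟩; exact ⟨(i, r), rfl⟩)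
  · rintro _ ⟨x, rfl⟩
    exact le_iSup (fun i => tanSpan (p i)) x.1 (tanRow_mem_tanSpan hn 0 _ _)

variable {n k : ℕ} {K : Type*} [Field K] [Algebra ℂ K]

theorem Derivation.dotProduct_seg_eq_neg (D : Derivation ℂ K K) {h : Idx n → K} {v : Vecs n K}
    (hv : h ⬝ᵥ seg v = 0) :
    (fun f => D (h f)) ⬝ᵥ seg v =
      -∑ j, h ⬝ᵥ seg (Function.update v j fun c => D (v j c)) := by
  have := congrArg D hv
  simp only [dotProduct, map_sum, D.leibniz, D.map_seg, map_zero, smul_eq_mul] at this ⊢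
  rw [Finset.sum_add_distrib, add_comm] at this
  rw [Finset.sum_comm]
  simp only [← Finset.mul_sum]
  rw [← eq_neg_iff_add_eq_zero] at this
  rw [← this]
  exact Finset.sum_congr rfl fun f _ => mul_comm _ _

/-- If the tangent span at `k` points with algebraically independent coordinates carries, for each
of the points, a linear form with nondegenerate Hessian, then it is tangent to rank one tensors only
inside the span of the points. -/
theorem seg_mem_span_of_tanSpan_le (hn : 0 < n) {p : Fin k → Vecs n K} (hp : ∀ i j, p i j 0 ≠ 0)
    (hD : ∀ i j c, ∃ D : Derivation ℂ K K, ∀ i' j' c',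
      D (p i' j' c') = if i' = i ∧ j' = j ∧ c' = c then 1 else 0)
    (hh : ∀ i, ∃ h : Idx n → K, (∀ i' r, h ⬝ᵥ tanRow 0 (p i') r = 0) ∧ (hess h (p i)).det ≠ 0)
    {w : Vecs n K} (hw : tanSpan w ≤ ⨆ i, tanSpan (p i)) :
    seg w ∈ Submodule.span K (Set.range fun i => seg (p i)) := by
  have hL := iSup_tanSpan_eq_span_tanRow hn hp
  have hmem : seg w ∈ ⨆ i, tanSpan (p i) := hw (seg_mem_tanSpan w ⟨0, hn⟩)
  rw [hL] at hmem
  obtain ⟨β, hβ⟩ := (Submodule.mem_span_range_iff_exists_fun K).mp hmem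
  have hzero : ∀ i x, β (i, some x) = 0 := by
    intro i
    obtain ⟨h, hann, hdet⟩ := hh i
    have hannL : ∀ y ∈ ⨆ i, tanSpan (p i), h ⬝ᵥ y = 0 := by
      intro y hy
      rw [hL] at hy
      induction hy using Submodule.span_induction with
      | mem y hy => obtain ⟨x, rfl⟩ := hy; exact hann _ _
      | zero => simp
      | add y z _ _ hy hz => rw [dotProduct_add, hy, hz, add_zero]
      | smul a y _ hy => rw [dotProduct_smul, hy, smul_zero]
    have hseg : ∀ (D : Derivation ℂ K K) (v : Vecs n K), tanSpan v ≤ ⨆ i, tanSpan (p i) →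
        (fun f => D (h f)) ⬝ᵥ seg v = 0 := by
      intro D v hv
      rw [D.dotProduct_seg_eq_neg (hannL _ (hv (seg_mem_tanSpan v ⟨0, hn⟩))), neg_eq_zero]
      exact Finset.sum_eq_zero fun j _ => hannL _ (hv (seg_update_mem_tanSpan v j _))
    have hvec : Matrix.vecMul (fun x => β (i, some x)) (hess h (p i)) = 0 := by
      funext y
      obtain ⟨D, hD⟩ := hD i y.1 y.2.succ
      have hrow : ∀ (i' : Fin k) (x : Fin n × Fin 2),
          (fun f => D (h f)) ⬝ᵥ tanRow 0 (p i') (some x) =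
            if i' = i then -hess h (p i) x y else 0 := by
        intro i' x
        have hx := hann i' (some x)
        simp only [tanRow] at hx ⊢
        rw [D.dotProduct_seg_eq_neg hx]
        simp only [Pi.zero_apply, Fin.zero_succAbove]
        have hterm : ∀ j, h ⬝ᵥ seg (Function.update (setFactor (p i') x.1 x.2.succ) j
            fun c => D (setFactor (p i') x.1 x.2.succ j c)) =
              if j = y.1 then (if i' = i then hess h (p i) x y else 0) else 0 := by
          intro j
          have hvan : (fun c => D (setFactor (p i') x.1 x.2.succ j c)) = 0 →
              h ⬝ᵥ seg (Function.update (setFactor (p i') x.1 x.2.succ) j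
                fun c => D (setFactor (p i') x.1 x.2.succ j c)) = 0 := by
            intro e
            have : seg (Function.update (setFactor (p i') x.1 x.2.succ) j
                (0 : Fin 3 → K)) = 0 := by
              funext f
              exact Finset.prod_eq_zero (Finset.mem_univ j) (by simp)
            rw [e, this, dotProduct_zero]
          by_cases hjx : j = x.1
          · rw [hvan]
            · split_ifs with h1 h2
              · simp [hess, ← h1, hjx]
              · rfl
              · rfl
            · funext c
              subst hjx
              by_cases hc : c = x.2.succ <;> simp [hc]
          · by_cases hcase : j = y.1 ∧ i' = i
            · obtain ⟨h1, rfl⟩ := hcase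
              rw [if_pos h1, if_pos rfl, hess, if_neg (fun e => hjx (h1.trans e.symm))]
              congr 2
              subst h1
              congr 1
              funext c
              rw [setFactor, Function.update_of_ne hjx, hD]
              simp [Pi.single_apply]
            · rw [hvan]
              · split_ifs with h1 h2
                · exact absurd ⟨h1, h2⟩ hcase
                · rfl
                · rfl
              · funext c
                rw [setFactor, Function.update_of_ne hjx, hD, if_neg]
                · rfl
                · tauto
        rw [Finset.sum_congr rfl fun j _ => hterm j, Finset.sum_ite_eq' Finset.univ y.1]
        simp only [Finset.mem_univ, if_true]
        split_ifs <;> simp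
      have h0 := hseg D w hw
      rw [← hβ, dotProduct_sum] at h0
      simp only [dotProduct_smul, Fintype.sum_prod_type, Fintype.sum_option, hrow] at h0
      have hnone : ∀ i', (fun f => D (h f)) ⬝ᵥ tanRow 0 (p i') none = 0 := fun i' =>
        hseg D (p i') (le_iSup (fun i => tanSpan (p i)) i')
      simp only [hnone, smul_zero, zero_add] at h0
      rw [Finset.sum_eq_single i (fun i' _ hi' => by simp [hi']) (by simp)] at h0
      simp only [if_true, smul_eq_mul, mul_neg, Finset.sum_neg_distrib, neg_eq_zero] at h0
      simpa only [Matrix.vecMul, dotProduct, Fintype.sum_prod_type, Pi.zero_apply] using h0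
    exact fun x => congrFun (Matrix.eq_zero_of_vecMul_eq_zero hdet hvec) x
  rw [← hβ]
  simp only [Fintype.sum_prod_type, Fintype.sum_option, hzero, zero_smul, Finset.sum_const_zero,
    add_zero]
  exact Submodule.sum_mem _ fun i _ => Submodule.smul_mem _ _ (Submodule.subset_span ⟨i, rfl⟩)

end WeaklyDefective

section Generic

open MvPolynomial

/-- Index type of the coordinates of `k` points. -/
abbrev PtIdx (n k : ℕ) : Type := Fin k × Fin n × Fin 3

/-- The generic `k`-tuple of points. -/
def genPt (n k : ℕ) (i : Fin k) : Vecs n (GenField (PtIdx n k)) := fun j c => genVar (i, j, c)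

/-- Evaluation of a polynomial at a `k`-tuple of points. -/
def evalPt {n k : ℕ} (p : Fin k → Vecs n ℂ) : MvPolynomial (PtIdx n k) ℂ →+* ℂ :=
  eval fun x => p x.1 x.2.1 x.2.2

theorem genPt_ne_zero {n k : ℕ} (i : Fin k) (j : Fin n) (c : Fin 3) : genPt n k i j c ≠ 0 :=
  (map_ne_zero_iff _ (algebraMap_genField_injective _)).mpr (X_ne_zero _)

theorem exists_derivation_genPt {n k : ℕ} (i : Fin k) (j : Fin n) (c : Fin 3) :
    ∃ D : Derivation ℂ (GenField (PtIdx n k)) (GenField (PtIdx n k)), ∀ i' j' c',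
      D (genPt n k i' j' c') = if i' = i ∧ j' = j ∧ c' = c then 1 else 0 := by
  obtain ⟨D, hD⟩ := exists_derivation_genField ((i, j, c) : PtIdx n k)
  refine ⟨D, fun i' j' c' => ?_⟩
  rw [genPt, hD]
  simp only [Prod.mk.injEq]

theorem Certified.generic {n k : ℕ} (hk : 0 < k) (hc : Certified n k) :
    (∃ δ : MvPolynomial (PtIdx n k) ℂ, δ ≠ 0 ∧ ∀ p : Fin k → Vecs n ℂ, evalPt p δ ≠ 0 →
      LinearIndependent ℂ fun x : Fin k × Option (Fin n × Fin 2) => tanRow 0 (p x.1) x.2) ∧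
    LinearIndependent (GenField (PtIdx n k))
      (fun x : Fin k × Option (Fin n × Fin 2) => tanRow 0 (genPt n k x.1) x.2) ∧
    ∀ i, ∃ h : Idx n → GenField (PtIdx n k), (∀ i' r, h ⬝ᵥ tanRow 0 (genPt n k i') r = 0) ∧
      (hess h (genPt n k i)).det ≠ 0 := by
  obtain ⟨p₀, h₀, -, hli, hann, hdet⟩ := hc
  let φ : MvPolynomial (PtIdx n k) ℤ →+* ZMod 2 :=
    eval₂Hom (Int.castRingHom (ZMod 2)) fun x => p₀ x.1 x.2.1 x.2.2
  let q : Fin k → Vecs n (MvPolynomial (PtIdx n k) ℤ) := fun i j c => X (i, j, c)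
  have hφq : ∀ i : Fin k, (fun j c => φ (q i j c)) = p₀ i := fun i => by
    funext j c
    simp [φ, q]
  obtain ⟨δ, hδ, hrank, hlift⟩ := exists_lift_of_linearIndependent φ (ZMod.ringHom_surjective φ)
    (fun x : Fin k × Option (Fin n × Fin 2) => tanRow 0 (q x.1) x.2)
    (by simpa only [map_tanRow, hφq] using hli)
  obtain ⟨h, hh, hhφ⟩ := hlift h₀ (fun x => by
    simpa only [map_tanRow, hφq] using hann x.1 x.1.2 x.2)
  have hδ0 : δ ≠ 0 := by
    rintro rfl
    simp at hδ
  have hinj : Function.Injective (MvPolynomial.map (σ := PtIdx n k) (Int.castRingHom ℂ)) :=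
    map_injective _ (RingHom.injective_int _)
  refine ⟨⟨MvPolynomial.map (Int.castRingHom ℂ) δ, (map_ne_zero_iff _ hinj).mpr hδ0,
    fun p hp => ?_⟩, ?_, fun i => ?_⟩
  · have := hrank ℂ ((evalPt p).comp (MvPolynomial.map (Int.castRingHom ℂ))) hp
    simpa only [map_tanRow, q, RingHom.comp_apply, map_X, evalPt, eval_X] using this
  · have := hrank _ ((algebraMap (MvPolynomial (PtIdx n k) ℂ) (GenField (PtIdx n k))).comp
      (MvPolynomial.map (Int.castRingHom ℂ))) ((map_ne_zero_iff _
        (algebraMap_genField_injective _)).mpr ((map_ne_zero_iff _ hinj).mpr hδ0))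
    simp only [map_tanRow, q, RingHom.comp_apply, map_X] at this
    exact this
  · let e := Equiv.swap (⟨0, hk⟩ : Fin k) i
    let ψ : MvPolynomial (PtIdx n k) ℤ →+* GenField (PtIdx n k) :=
      ((algebraMap (MvPolynomial (PtIdx n k) ℂ) (GenField (PtIdx n k))).comp
        (MvPolynomial.map (Int.castRingHom ℂ))).comp
          (rename (Prod.map e id : PtIdx n k → PtIdx n k)).toRingHom
    have hψ : Function.Injective ψ := ((algebraMap_genField_injective _).comp hinj).comp
      (rename_injective _ (e.injective.prodMap Function.injective_id))
    have hψq : ∀ i', (fun j c => ψ (q i' j c)) = genPt n k (e i') := fun i' => by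
      funext j c
      simp [ψ, q, genPt, genVar]
    refine ⟨fun f => ψ (h f), fun i' r => ?_, ?_⟩
    · have := congrArg ψ (hh (e.symm i', r))
      simpa only [dotProduct, map_sum, map_mul, map_tanRow, hψq, Equiv.apply_symm_apply,
        map_zero] using this
    · have hi : genPt n k i = fun j c => ψ (q ⟨0, hk⟩ j c) := by
        rw [hψq]
        simp [e]
      rw [hi, ← map_hess, ← RingHom.mapMatrix_apply, ← RingHom.map_det,
        map_ne_zero_iff _ hψ]
      intro hz
      apply hdet
      have := congrArg φ hz
      rw [RingHom.map_det, RingHom.mapMatrix_apply, map_hess, hφq, map_zero] at this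
      simpa only [hhφ] using this

end Generic

section Elimination

open MvPolynomial

theorem setFactor_mem_of_tanSpan_le {n : ℕ} {R : Type*} [CommRing R] {w : Vecs n R}
    {L : Submodule R (Idx n → R)} : tanSpan w ≤ L ↔ ∀ j c, seg (setFactor w j c) ∈ L := by
  refine ⟨fun h j c => h (seg_update_mem_tanSpan _ _ _), fun h => Submodule.span_le.mpr ?_⟩
  rintro _ ⟨j, u, rfl⟩
  rw [seg_update_eq_sum]
  exact Submodule.sum_mem _ fun c _ => Submodule.smul_mem _ _ (h j c)

theorem iSup_tanSpan_eq_span {n k : ℕ} {R : Type*} [CommRing R] (p : Fin k → Vecs n R) :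
    ⨆ i, tanSpan (p i) = Submodule.span R
      (Set.range fun x : PtIdx n k => seg (setFactor (p x.1) x.2.1 x.2.2)) := by
  refine le_antisymm (iSup_le fun i => setFactor_mem_of_tanSpan_le.mpr fun j c =>
    Submodule.subset_span ⟨(i, j, c), rfl⟩) (Submodule.span_le.mpr ?_)
  rintro _ ⟨x, rfl⟩
  exact le_iSup (fun i => tanSpan (p i)) x.1 (seg_update_mem_tanSpan _ _ _)

theorem exists_dotProduct_eq_one_of_notMem {κ K : Type*} [Fintype κ] [Field K]
    {L : Submodule K (κ → K)} {x : κ → K} (hx : x ∉ L) :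
    ∃ l : κ → K, (∀ y ∈ L, l ⬝ᵥ y = 0) ∧ l ⬝ᵥ x = 1 := by
  classical
  obtain ⟨f, hfx, hf⟩ := Submodule.exists_le_ker_of_notMem hx
  have hdot : ∀ y, (fun j => f (Pi.single j 1)) ⬝ᵥ y = f y := fun y => by
    conv_rhs => rw [pi_eq_sum_univ' y, map_sum]
    simp [dotProduct, mul_comm]
  refine ⟨(f x)⁻¹ • fun j => f (Pi.single j 1), fun y hy => ?_, ?_⟩
  · rw [smul_dotProduct, hdot, show f y = 0 from hf hy, smul_zero]
  · rw [smul_dotProduct, hdot, smul_eq_mul, inv_mul_cancel₀ hfx]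

theorem dotProduct_eq_zero_of_mem_span {ι κ K : Type*} [Fintype κ] [Field K] {g : ι → κ → K}
    {l x : κ → K} (hl : ∀ i, l ⬝ᵥ g i = 0) (hx : x ∈ Submodule.span K (Set.range g)) :
    l ⬝ᵥ x = 0 := by
  induction hx using Submodule.span_induction with
  | mem y hy => obtain ⟨i, rfl⟩ := hy; exact hl i
  | zero => simp
  | add y z _ _ hy hz => rw [dotProduct_add, hy, hz, add_zero]
  | smul a y _ hy => rw [dotProduct_smul, hy, smul_zero]

/-- The tangent span at general points is tangent to rank one tensors only inside the span of
the points. -/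
theorem Certified.exists_tangent {n k : ℕ} (hn : 0 < n) (hk : 0 < k) (hc : Certified n k) :
    ∃ F : MvPolynomial (PtIdx n k) ℂ, F ≠ 0 ∧ ∀ p : Fin k → Vecs n ℂ, evalPt p F ≠ 0 →
      ∀ w : Vecs n ℂ, tanSpan w ≤ ⨆ i, tanSpan (p i) →
        seg w ∈ Submodule.span ℂ (Set.range fun i => seg (p i)) := by
  let τ : Type := (Fin n × Fin 3) ⊕ Idx n ⊕ ((Fin n × Fin 3) × PtIdx n k)
  let P := MvPolynomial τ (MvPolynomial (PtIdx n k) ℂ)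
  let q : Fin k → Vecs n P := fun i j c => C (X (i, j, c))
  let w : Vecs n P := fun j c => X (Sum.inl (j, c))
  let l : Idx n → P := fun f => X (Sum.inr (Sum.inl f))
  let b : Fin n × Fin 3 → PtIdx n k → P := fun x y => X (Sum.inr (Sum.inr (x, y)))
  let S : Set P := Set.range (fun i => l ⬝ᵥ seg (q i)) ∪ {l ⬝ᵥ seg w - 1} ∪
    Set.range fun x : (Fin n × Fin 3) × Idx n => seg (setFactor w x.1.1 x.1.2) x.2 -
      ∑ y, b x.1 y * seg (setFactor (q y.1) y.2.1 y.2.2) x.2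
  have key : ∀ (K : Type) [Field K] (θ : P →+* K), (∀ f ∈ S, θ f = 0) ↔
      (∀ i, (fun f => θ (l f)) ⬝ᵥ seg (fun j c => θ (q i j c)) = 0) ∧
      (fun f => θ (l f)) ⬝ᵥ seg (fun j c => θ (w j c)) = 1 ∧
      ∀ j c, ∑ y, θ (b (j, c) y) • seg (setFactor (fun j c => θ (q y.1 j c)) y.2.1 y.2.2) =
        seg (setFactor (fun j c => θ (w j c)) j c) := by
    intro K _ θ
    have e1 : ∀ i, θ (l ⬝ᵥ seg (q i)) =
        (fun f => θ (l f)) ⬝ᵥ seg (fun j c => θ (q i j c)) := fun i => by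
      simp only [dotProduct, map_sum, map_mul, map_seg]
    have e2 : θ (l ⬝ᵥ seg w - 1) =
        (fun f => θ (l f)) ⬝ᵥ seg (fun j c => θ (w j c)) - 1 := by
      simp only [dotProduct, map_sub, map_one, map_sum, map_mul, map_seg]
    have e3 : ∀ x : (Fin n × Fin 3) × Idx n, θ (seg (setFactor w x.1.1 x.1.2) x.2 -
        ∑ y, b x.1 y * seg (setFactor (q y.1) y.2.1 y.2.2) x.2) =
          seg (setFactor (fun j c => θ (w j c)) x.1.1 x.1.2) x.2 -
            (∑ y, θ (b x.1 y) •
              seg (setFactor (fun j c => θ (q y.1 j c)) y.2.1 y.2.2)) x.2 := fun x => by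
      simp only [map_sub, map_sum, map_mul, map_seg, map_setFactor, Finset.sum_apply,
        Pi.smul_apply, smul_eq_mul]
    constructor
    · intro h
      refine ⟨fun i => ?_, ?_, fun j c => ?_⟩
      · rw [← e1, h _ (Or.inl (Or.inl ⟨i, rfl⟩))]
      · rw [← sub_eq_zero, ← e2, h _ (Or.inl (Or.inr rfl))]
      · funext f
        rw [eq_comm, ← sub_eq_zero, ← e3 ((j, c), f), h _ (Or.inr ⟨((j, c), f), rfl⟩)]
    · rintro ⟨h1, h2, h3⟩ _ ((⟨i, rfl⟩ | rfl) | ⟨x, rfl⟩)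
      · rw [e1, h1]
      · rw [e2, h2, sub_self]
      · rw [e3, h3, sub_self]
  obtain ⟨F, hF0, hF⟩ := exists_ne_zero_of_no_generic_solution S (by
    rintro ⟨y, hy⟩
    obtain ⟨h1, h2, h3⟩ := (key _ (aeval y).toRingHom).mp hy
    have hq : ∀ i, (fun j c => (aeval y).toRingHom (q i j c)) = genPt n k i := fun i => by
      funext j c
      simp [q, genPt, genVar]
    simp only [hq] at h1 h3
    obtain ⟨-, -, hh⟩ := hc.generic hk
    have := seg_mem_span_of_tanSpan_le hn (fun i j => genPt_ne_zero i j 0) exists_derivation_genPt hh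
      (w := fun j c => (aeval y).toRingHom (w j c)) (setFactor_mem_of_tanSpan_le.mpr fun j c => by
        rw [← h3, iSup_tanSpan_eq_span]
        exact Submodule.sum_mem _ fun x _ => Submodule.smul_mem _ _ (Submodule.subset_span ⟨x, rfl⟩))
    rw [dotProduct_eq_zero_of_mem_span h1 this] at h2
    exact zero_ne_one h2)
  refine ⟨F, hF0, fun p hp v hv => ?_⟩
  by_contra hmem
  obtain ⟨l', hl', hl1⟩ := exists_dotProduct_eq_one_of_notMem hmem
  rw [setFactor_mem_of_tanSpan_le, iSup_tanSpan_eq_span] at hv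
  choose b' hb' using fun j c => (Submodule.mem_span_range_iff_exists_fun ℂ).mp (hv j c)
  let y : τ → ℂ := Sum.elim (fun x => v x.1 x.2) (Sum.elim l' fun x => b' x.1.1 x.1.2 x.2)
  let θ : P →+* ℂ := eval₂Hom (eval fun x : PtIdx n k => p x.1 x.2.1 x.2.2) y
  have hθq : ∀ i j c, θ (q i j c) = p i j c := fun _ _ _ => (eval₂_C _ _ _).trans (eval_X _)
  have hθw : ∀ j c, θ (w j c) = v j c := fun _ _ => eval₂_X _ _ _
  have hθl : ∀ f, θ (l f) = l' f := fun _ => eval₂_X _ _ _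
  have hθb : ∀ j c x, θ (b (j, c) x) = b' j c x := fun _ _ _ => eval₂_X _ _ _
  refine hp (hF _ y ((key ℂ θ).mpr ?_))
  simp only [hθq, hθw, hθl, hθb]
  exact ⟨fun i => hl' _ (Submodule.subset_span ⟨i, rfl⟩), hl1, hb'⟩

/-- Any decomposition of the sum of general rank one tensors lies in the span of those tensors. -/
theorem Certified.exists_decomposition {n k : ℕ} (hn : 0 < n) (hk : 0 < k) (hc : Certified n k) :
    ∃ F : MvPolynomial (PtIdx n k) ℂ, F ≠ 0 ∧ ∀ p : Fin k → Vecs n ℂ, evalPt p F ≠ 0 →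
      ∀ s : Fin k → Vecs n ℂ, ∑ i, seg (s i) = ∑ i, seg (p i) →
        ∀ i, seg (s i) ∈ Submodule.span ℂ (Set.range fun i => seg (p i)) := by
  suffices h : ∀ i₀, ∃ F : MvPolynomial (PtIdx n k) ℂ, F ≠ 0 ∧ ∀ p : Fin k → Vecs n ℂ,
      evalPt p F ≠ 0 → ∀ s : Fin k → Vecs n ℂ, ∑ i, seg (s i) = ∑ i, seg (p i) →
        seg (s i₀) ∈ Submodule.span ℂ (Set.range fun i => seg (p i)) by
    choose F hF0 hF using h
    refine ⟨∏ i, F i, Finset.prod_ne_zero_iff.mpr fun i _ => hF0 i, fun p hp s hs i => ?_⟩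
    rw [map_prod] at hp
    exact hF i p (Finset.prod_ne_zero_iff.mp hp i (Finset.mem_univ i)) s hs
  intro i₀
  let P := MvPolynomial (PtIdx n k ⊕ Idx n) (MvPolynomial (PtIdx n k) ℂ)
  let q : Fin k → Vecs n P := fun i j c => C (X (i, j, c))
  let s : Fin k → Vecs n P := fun i j c => X (Sum.inl (i, j, c))
  let l : Idx n → P := fun f => X (Sum.inr f)
  let S : Set P := Set.range (fun i => l ⬝ᵥ seg (q i)) ∪ {l ⬝ᵥ seg (s i₀) - 1} ∪
    Set.range fun f : Idx n => ∑ i, seg (s i) f - ∑ i, seg (q i) f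
  have key : ∀ (K : Type) [Field K] (θ : P →+* K), (∀ f ∈ S, θ f = 0) ↔
      (∀ i, (fun f => θ (l f)) ⬝ᵥ seg (fun j c => θ (q i j c)) = 0) ∧
      (fun f => θ (l f)) ⬝ᵥ seg (fun j c => θ (s i₀ j c)) = 1 ∧
      ∑ i, seg (fun j c => θ (s i j c)) = ∑ i, seg (fun j c => θ (q i j c)) := by
    intro K _ θ
    simp only [S, Set.union_singleton, Set.mem_union, Set.mem_insert_iff, Set.mem_range,
      or_imp, forall_and, forall_eq, forall_exists_index, forall_apply_eq_imp_iff]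
    simp only [map_sub, map_one, sub_eq_zero, dotProduct, map_sum, map_mul, map_seg,
      funext_iff, Finset.sum_apply]
    tauto
  obtain ⟨F, hF0, hF⟩ := exists_ne_zero_of_no_generic_solution S (by
    rintro ⟨y, hy⟩
    obtain ⟨h1, h2, h3⟩ := (key _ (aeval y).toRingHom).mp hy
    have hq : ∀ i, (fun j c => (aeval y).toRingHom (q i j c)) = genPt n k i := fun i => by
      funext j c
      simp [q, genPt, genVar]
    simp only [hq] at h1 h3
    set t : Fin k → Vecs n (GenField (PtIdx n k)) := fun i j c => (aeval y).toRingHom (s i j c)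
    obtain ⟨-, hli, hh⟩ := hc.generic hk
    have hle : ⨆ i, tanSpan (genPt n k i) ≤ ⨆ i, tanSpan (t i) := by
      refine iSup_le fun i => setFactor_mem_of_tanSpan_le.mpr fun j c => ?_
      obtain ⟨D, hD⟩ := exists_derivation_genPt (n := n) (k := k) i j c
      have e : seg (setFactor (genPt n k i) j c) =
          ∑ i, ∑ j, seg (Function.update (t i) j fun c => D (t i j c)) := by
        funext f
        have h4 := congrArg D (congrFun h3 f)
        simp only [Finset.sum_apply, map_sum, D.map_seg] at h4
        simp only [Finset.sum_apply]
        rw [h4, Finset.sum_eq_single i, Finset.sum_eq_single j]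
        · have hc' : (fun c' => D (genPt n k i j c')) = Pi.single c 1 := by
            funext c'
            rw [hD]
            simp [Pi.single_apply]
          rw [hc']
        · intro j' _ hj'
          exact Finset.prod_eq_zero (Finset.mem_univ j') (by simp [hD, hj'])
        · simp
        · intro i' _ hi'
          exact Finset.sum_eq_zero fun j' _ =>
            Finset.prod_eq_zero (Finset.mem_univ j') (by simp [hD, hi'])
        · simp
      rw [e]
      exact Submodule.sum_mem _ fun i' _ => Submodule.sum_mem _ fun j' _ =>
        le_iSup (fun i => tanSpan (t i)) i' (seg_update_mem_tanSpan _ _ _)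
    have hrank : Module.finrank (GenField (PtIdx n k)) ↥(⨆ i, tanSpan (genPt n k i)) =
        k * (2 * n + 1) := by
      rw [iSup_tanSpan_eq_span_tanRow hn (fun i j => genPt_ne_zero i j 0),
        finrank_span_eq_card hli]
      simp [mul_comm]
    have heq := Submodule.eq_of_le_of_finrank_le hle
      ((finrank_iSup_tanSpan_le t).trans hrank.ge)
    have := seg_mem_span_of_tanSpan_le hn (fun i j => genPt_ne_zero i j 0) exists_derivation_genPt hh
      (w := t i₀) (heq ▸ le_iSup (fun i => tanSpan (t i)) i₀)
    rw [dotProduct_eq_zero_of_mem_span h1 this] at h2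
    exact zero_ne_one h2)
  refine ⟨F, hF0, fun p hp v hv => ?_⟩
  by_contra hmem
  obtain ⟨l', hl', hl1⟩ := exists_dotProduct_eq_one_of_notMem hmem
  let y : PtIdx n k ⊕ Idx n → ℂ := Sum.elim (fun x => v x.1 x.2.1 x.2.2) l'
  let θ : P →+* ℂ := eval₂Hom (eval fun x : PtIdx n k => p x.1 x.2.1 x.2.2) y
  have hθq : ∀ i j c, θ (q i j c) = p i j c := fun _ _ _ => (eval₂_C _ _ _).trans (eval_X _)
  have hθs : ∀ i j c, θ (s i j c) = v i j c := fun _ _ _ => eval₂_X _ _ _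
  have hθl : ∀ f, θ (l f) = l' f := fun _ => eval₂_X _ _ _
  refine hp (hF _ y ((key ℂ θ).mpr ?_))
  simp only [hθq, hθs, hθl]
  exact ⟨fun i => hl' _ (Submodule.subset_span ⟨i, rfl⟩), hl1, hv⟩

end Elimination

section Uniqueness

/-- Contraction of the `j`-th factor with the linear form `φ`, followed by the insertion of the
standard basis vector `c` in the `j`-th factor. -/
def contract {n : ℕ} {K : Type*} [Field K] (j : Fin n) (φ : Fin 3 → K) (c : Fin 3) :
    (Idx n → K) →ₗ[K] Idx n → K where
  toFun T f := (Pi.single c 1 : Fin 3 → K) (f j) * ∑ d, φ d * T (Function.update f j d)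
  map_add' S T := by
    funext f
    simp only [Pi.add_apply, mul_add, Finset.sum_add_distrib]
  map_smul' a T := by
    funext f
    simp only [Pi.smul_apply, smul_eq_mul, Finset.mul_sum, RingHom.id_apply]
    exact Finset.sum_congr rfl fun d _ => by ring

theorem contract_seg {n : ℕ} {K : Type*} [Field K] (j : Fin n) (φ : Fin 3 → K) (c : Fin 3)
    (v : Vecs n K) : contract j φ c (seg v) = (φ ⬝ᵥ v j) • seg (setFactor v j c) := by
  funext f
  have h : ∀ d, seg v (Function.update f j d) =
      v j d * ∏ i ∈ Finset.univ.erase j, v i (f i) := fun d => by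
    rw [seg, ← Finset.mul_prod_erase _ _ (Finset.mem_univ j), Function.update_self]
    congr 1
    exact Finset.prod_congr rfl fun i hi => by
      rw [Function.update_of_ne (Finset.ne_of_mem_erase hi)]
  have h' : seg (setFactor v j c) f = (Pi.single c 1 : Fin 3 → K) (f j) *
      ∏ i ∈ Finset.univ.erase j, v i (f i) := by
    rw [seg, ← Finset.mul_prod_erase _ _ (Finset.mem_univ j), setFactor, Function.update_self]
    congr 1
    exact Finset.prod_congr rfl fun i hi => by
      rw [Function.update_of_ne (Finset.ne_of_mem_erase hi)]
  rw [Pi.smul_apply, h', smul_eq_mul, dotProduct, Finset.sum_mul]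
  simp only [contract, LinearMap.coe_mk, AddHom.coe_mk, h, Finset.mul_sum]
  exact Finset.sum_congr rfl fun d _ => by ring

theorem seg_ne_zero {n : ℕ} {K : Type*} [Field K] {v : Vecs n K} (hv : ∀ j, v j ≠ 0) :
    seg v ≠ 0 := by
  choose f hf using fun j => Function.ne_iff.mp (hv j)
  exact Function.ne_iff.mpr ⟨f, Finset.prod_ne_zero_iff.mpr fun j _ => hf j⟩

theorem exists_seg_eq_smul {n k : ℕ} {K : Type*} [Field K] {p : Fin k → Vecs n K}
    (hp : ∀ i j, p i j 0 ≠ 0)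
    (hli : LinearIndependent K
      fun x : Fin k × Option (Fin n × Fin 2) => tanRow 0 (p x.1) x.2)
    {w : Vecs n K} (hw : ∀ j, w j ≠ 0)
    (hmem : seg w ∈ Submodule.span K (Set.range fun i => seg (p i))) :
    ∃ i, ∃ t : K, seg w = t • seg (p i) := by
  obtain ⟨c, hc⟩ := (Submodule.mem_span_range_iff_exists_fun K).mp hmem
  obtain ⟨i, hi⟩ : ∃ i, c i ≠ 0 := by
    by_contra! h
    exact seg_ne_zero hw (by simp [← hc, h])
  have hprop : ∀ j, ∃ a : K, a • w j = p i j := fun j => by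
    rw [← Submodule.mem_span_singleton]
    by_contra hj
    obtain ⟨φ, hφ, hφ1⟩ := exists_dotProduct_eq_one_of_notMem hj
    have hsum : ∑ i, (c i * (φ ⬝ᵥ p i j)) • tanRow 0 (p i) (some (j, 0)) = 0 := by
      have := congrArg (contract j φ 1) hc
      rw [contract_seg, hφ _ (Submodule.mem_span_singleton_self _), zero_smul, map_sum] at this
      simp only [map_smul, contract_seg, smul_smul] at this
      exact this
    have := Fintype.linearIndependent_iff.mp (hli.comp (fun i => (i, some (j, 0)))
      fun _ _ h => congrArg Prod.fst h) _ hsum i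
    rw [hφ1, mul_one] at this
    exact hi this
  choose a ha using hprop
  have ha0 : ∏ j, a j ≠ 0 := Finset.prod_ne_zero_iff.mpr fun j _ h => hp i j (by
    rw [← ha, h, zero_smul, Pi.zero_apply])
  refine ⟨i, (∏ j, a j)⁻¹, ?_⟩
  rw [eq_inv_smul_iff₀ ha0, ← segMultilinear_apply, ← MultilinearMap.map_smul_univ,
    segMultilinear_apply]
  exact congrArg seg (funext ha)

/-- General points together with the properties of their tangent spaces. -/
theorem Certified.exists_general {n k : ℕ} (hn : 0 < n) (hk : 0 < k) (hc : Certified n k) :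
    ∃ F : MvPolynomial (PtIdx n k) ℂ, F ≠ 0 ∧ ∀ p : Fin k → Vecs n ℂ, evalPt p F ≠ 0 →
      (∀ i j, p i j ≠ 0) ∧ LinearIndependent ℂ (fun i => seg (p i)) ∧
      Module.finrank ℂ ↥(⨆ i, tanSpan (p i)) = k * (2 * n + 1) ∧
      (∀ w : Vecs n ℂ, (∀ j, w j ≠ 0) → tanSpan w ≤ ⨆ i, tanSpan (p i) →
        ∃ i, ∃ t : ℂ, seg w = t • seg (p i)) ∧
      ∀ s : Fin k → Vecs n ℂ, (∀ i j, s i j ≠ 0) → ∑ i, seg (s i) = ∑ i, seg (p i) →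
        ∀ i, ∃ i', ∃ t : ℂ, seg (s i) = t • seg (p i') := by
  obtain ⟨⟨δ, hδ0, hδ⟩, -⟩ := hc.generic hk
  obtain ⟨F₁, hF₁0, hF₁⟩ := hc.exists_tangent hn hk
  obtain ⟨F₂, hF₂0, hF₂⟩ := hc.exists_decomposition hn hk
  refine ⟨δ * F₁ * F₂ * ∏ i : Fin k, ∏ j : Fin n, MvPolynomial.X (i, j, 0),
    mul_ne_zero (mul_ne_zero (mul_ne_zero hδ0 hF₁0) hF₂0) (Finset.prod_ne_zero_iff.mpr fun i _ =>
      Finset.prod_ne_zero_iff.mpr fun j _ => MvPolynomial.X_ne_zero _), fun p hp => ?_⟩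
  simp only [map_mul, map_prod, mul_ne_zero_iff, Finset.prod_ne_zero_iff, Finset.mem_univ,
    forall_const] at hp
  obtain ⟨⟨⟨h1, h2⟩, h3⟩, h4⟩ := hp
  have h0 : ∀ i j, p i j 0 ≠ 0 := fun i j => by simpa [evalPt] using h4 i j
  have hli := hδ p h1
  refine ⟨fun i j h => h0 i j (congrFun h 0), hli.comp (fun i => (i, none)) fun _ _ h =>
    congrArg Prod.fst h, ?_, fun w hw hle => exists_seg_eq_smul h0 hli hw (hF₁ p h2 w hle),
    fun s hs hsum i => exists_seg_eq_smul h0 hli (hs i) (hF₂ p h3 s hsum i)⟩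
  rw [iSup_tanSpan_eq_span_tanRow hn h0, finrank_span_eq_card hli]
  simp [mul_comm]

/-- A sum of multiples of independent vectors that agrees with the sum of the vectors is a
rearrangement of it. -/
theorem map_univ_eq_of_sum_eq {k : ℕ} {K M : Type*} [Field K] [AddCommGroup M] [Module K M]
    {v s : Fin k → M} (hv : LinearIndependent K v) (hs : ∀ i, ∃ i', ∃ t : K, s i = t • v i')
    (hsum : ∑ i, s i = ∑ i, v i) :
    Finset.univ.val.map s = Finset.univ.val.map v := by
  choose g t hg using hs
  have hcoef : ∀ i', ∑ i with g i = i', t i = 1 := fun i' => by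
    have h : ∑ i', (∑ i with g i = i', t i - 1) • v i' = 0 := by
      simp only [sub_smul, one_smul, Finset.sum_sub_distrib, Finset.sum_smul]
      rw [← hsum, sub_eq_zero, ← Finset.sum_fiberwise Finset.univ g s]
      exact Finset.sum_congr rfl fun i' _ => Finset.sum_congr rfl fun i hi => by
        rw [hg, (Finset.mem_filter.mp hi).2]
    exact sub_eq_zero.mp (Fintype.linearIndependent_iff.mp hv _ h i')
  have hsurj : Function.Surjective g := fun i' => by
    by_contra! h
    have := hcoef i'
    rw [Finset.filter_eq_empty_iff.mpr fun i _ => h i, Finset.sum_empty] at this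
    exact zero_ne_one this
  have hbij := Finite.injective_iff_bijective.mp (Finite.injective_iff_surjective.mpr hsurj)
  have ht : ∀ i, t i = 1 := fun i => by
    have h : (Finset.univ.filter fun i' => g i' = g i) = {i} := by
      ext i'
      simp [hbij.1.eq_iff]
    simpa only [h, Finset.sum_singleton] using hcoef (g i)
  have hsv : s = v ∘ Equiv.ofBijective g hbij := funext fun i => by
    rw [hg, ht, one_smul]
    rfl
  rw [hsv, ← Multiset.map_map]
  congr 1
  exact congrArg Finset.val (Finset.map_univ_equiv (Equiv.ofBijective g hbij))

end Uniqueness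

section Bridge

/-- The coordinates of tensors in the standard basis. -/
def tenCoord (n : ℕ) : Ten n (fun _ => 2) ≃ₗ[ℂ] (Idx n → ℂ) :=
  (Basis.piTensorProduct fun _ : Fin n => Pi.basisFun ℂ (Fin 3)).equivFun

theorem tenCoord_tprod {n : ℕ} (v : Vecs n ℂ) : tenCoord n (tprod ℂ v) = seg v := by
  funext f
  simp [tenCoord, seg, Module.Basis.equivFun_apply]

theorem map_tangent {n : ℕ} (v : Vecs n ℂ) :
    (tangent (fun _ => 2) v).map (tenCoord n).toLinearMap = tanSpan v := by
  rw [tangent, tanSpan, Submodule.map_span]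
  congr 1
  ext x
  constructor
  · rintro ⟨_, ⟨j, u, rfl⟩, rfl⟩
    exact ⟨j, u, tenCoord_tprod _⟩
  · rintro ⟨j, u, rfl⟩
    exact ⟨_, ⟨j, u, rfl⟩, tenCoord_tprod _⟩

theorem map_iSup_tangent {n k : ℕ} (p : Fin k → Vecs n ℂ) :
    (⨆ i, tangent (fun _ => 2) (p i)).map (tenCoord n).toLinearMap = ⨆ i, tanSpan (p i) := by
  simp only [Submodule.map_iSup, map_tangent]

/-- The variables of the parameter space. -/
def ptVar {n k : ℕ} (x : PtIdx n k) : WIdx n (fun _ => 2) k := (x.1, ⟨x.2.1, x.2.2⟩)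

theorem exists_evalPt_ne_zero {n k : ℕ} {F : MvPolynomial (PtIdx n k) ℂ} (hF : F ≠ 0) :
    ∃ p : Fin k → Vecs n ℂ, evalPt p F ≠ 0 := by
  by_contra! h
  exact hF (MvPolynomial.funext fun x => (h fun i j c => x (i, j, c)).trans (map_zero _).symm)

theorem Certified.identifiable {n k : ℕ} (hn : 0 < n) (hk : 0 < k) (hc : Certified n k) :
    Identifiable n (fun _ => 2) k := by
  obtain ⟨F, hF0, hF⟩ := hc.exists_general hn hk
  have heval : ∀ p, evalW (MvPolynomial.rename ptVar F) p = evalPt p F := fun p =>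
    MvPolynomial.eval_rename _ _ _
  refine ⟨MvPolynomial.rename ptVar F, ?_, fun p hp => ?_⟩
  · simpa only [heval] using exists_evalPt_ne_zero hF0
  rw [heval] at hp
  obtain ⟨hp0, hli, -, -, hdec⟩ := hF p hp
  have huniq : ∀ s : Fin k → Ten n (fun _ => 2), (∀ i, IsDecomposable (s i)) →
      ∑ i, s i = Phi (fun _ => 2) p →
        Finset.univ.val.map s = Finset.univ.val.map fun i => tprod ℂ (p i) := fun s hs hsum => by
    choose v hv0 hv using hs
    have hseg : ∑ i, seg (v i) = ∑ i, seg (p i) := by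
      have := congrArg (tenCoord n) hsum
      simpa only [Phi, map_sum, hv, tenCoord_tprod] using this
    refine map_univ_eq_of_sum_eq (K := ℂ) (LinearIndependent.of_comp (tenCoord n).toLinearMap
      (by simpa only [Function.comp_def, LinearEquiv.coe_coe, tenCoord_tprod] using hli))
      (fun i => ?_) hsum
    obtain ⟨i', t, h⟩ := hdec v hv0 hseg i
    exact ⟨i', t, (tenCoord n).injective (by rw [map_smul, hv, tenCoord_tprod, tenCoord_tprod, h])⟩
  exact ⟨⟨fun i => tprod ℂ (p i), fun i => ⟨p i, hp0 i, rfl⟩, rfl⟩, fun s t hs ht hs' ht' =>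
    (huniq s hs hs').trans (huniq t ht ht').symm⟩

theorem Certified.tangentGeneral {n k : ℕ} (hn : 0 < n) (hk : 0 < k) (hc : Certified n k) :
    TangentGeneral n (fun _ => 2) k (k * (2 * n + 1)) := by
  obtain ⟨F, hF0, hF⟩ := hc.exists_general hn hk
  have he : k * (2 * n + 1) - k * (1 + ∑ _j : Fin n, 2) = 0 := by
    simp [mul_comm, add_comm]
  have hempty : IsEmpty (Fin (k * (2 * n + 1) - k * (1 + ∑ _j : Fin n, 2))) := by
    rw [he]
    infer_instance
  have heval : ∀ p c, evalWV (MvPolynomial.rename (fun x => Sum.inl (ptVar x)) F :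
      MvPolynomial (WIdx n (fun _ => 2) k ⊕ (Fin (k * (2 * n + 1) - k * (1 + ∑ _j : Fin n, 2)) ×
        BIdx n (fun _ => 2))) ℂ) p c = evalPt p F := fun p c => MvPolynomial.eval_rename _ _ _
  refine ⟨MvPolynomial.rename (fun x => Sum.inl (ptVar x)) F, ?_, fun p c hp => ?_⟩
  · obtain ⟨p, hp⟩ := exists_evalPt_ne_zero hF0
    exact ⟨p, 0, (heval p 0).trans_ne hp⟩
  rw [heval] at hp
  obtain ⟨-, -, hrank, htan, -⟩ := hF p hp
  rw [Set.range_eq_empty, Submodule.span_empty, sup_bot_eq]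
  refine ⟨?_, fun w hw hle => ?_⟩
  · rw [← hrank, ← map_iSup_tangent]
    exact ((tenCoord n).finrank_map_eq _).symm
  · obtain ⟨i, t, h⟩ := htan w hw (by
      rw [← map_tangent, ← map_iSup_tangent]
      exact Submodule.map_mono hle)
    exact ⟨i, t, (tenCoord n).injective (by rw [map_smul, tenCoord_tprod, tenCoord_tprod, h])⟩

end Bridge

theorem certified_four : Certified 4 8 :=
  certified_of_certNat (by norm_num) (by norm_num)
    (D := 9049973386119947520)
    (h := 1657940902639692258759840)
    (by decide +kernel)

theorem certified_five : Certified 5 22 :=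
  certified_of_certNat (by norm_num) (by norm_num)
    (D := 1119948487447965334286171437962071929319019465278048682618836193280)
    (h := 1669709376802538869866559330060029079022397801038935231480014716603140240)
    (by decide +kernel)

theorem certified_six : Certified 6 56 :=
  certified_of_certNat (by norm_num) (by norm_num)
    (D := 7361391779115017828669434153667800627521248414977535248751096624751534181636885914184340823707281439791848469402976540475384450122348729209146047742103396797818170483857934199518372074103320960866037760)
    (h := 1150267657289917605660727884433975568333461444703135426920573529939020878433644351198581259236230998319413533556602734648034468182765370060274087634208686188784518828294981729054152155084547062719608116112818046204702992)
    (by decide +kernel)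

/-- `n` copies of `ℙ²`, `4 ≤ n ≤ 6`. -/
theorem stmt_6 (n : ℕ) (h4 : 4 ≤ n) (h6 : n ≤ 6) (k : ℕ) (hk : 0 < k)
    (hkc : (k : ℚ) < 3 ^ n / (2 * n + 1)) :
    TangentGeneral n (fun _ => 2) k (k * (2 * n + 1)) ∧
      Identifiable n (fun _ => 2) k := by
  have hc : Certified n k := by
    rw [lt_div_iff₀ (by positivity)] at hkc
    have hkc' : k * (2 * n + 1) < 3 ^ n := by exact_mod_cast hkc
    interval_cases n
    · exact certified_four.mono (by omega)
    · exact certified_five.mono (by omega)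
    · exact certified_six.mono (by omega)
  exact ⟨hc.tangentGeneral (by omega) hk, hc.identifiable (by omega) hk⟩
end
end

section
/- Let V = (ℂ⁴)^{⊗n} carry the Segre of n copies of ℙ³. (i) For n = 5, the general linear subspace of V of dimension 1008 which is tangent to the Segre at k general points, with k ≤ 63, is tangent only at those points. (ii) For n > 5 and every positive integer k ≤ (4^n − 4^{n−3})/(3n+1), the general linear subspace of V of dimension 4^n − 4^{n−3} which is tangent to the Segre at k general points is tangent only at those points. -/
open scoped TensorProduct
open PiTensorProduct

noncomputable section

open scoped IntermediateField.algebraAdjoinAdjoin in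
/-- Over `ℂ`, derivations of a field can be prescribed on an algebraically independent family. -/
theorem exists_derivation_apply_eq {σ K : Type*} [Field K] [Algebra ℂ K] {x : σ → K}
    (hx : AlgebraicIndependent ℂ x) (y : σ → K) :
    ∃ D : Derivation ℂ K K, ∀ s, D (x s) = y s := by
  classical
  obtain ⟨T, hT, hb⟩ := exists_isTranscendenceBasis_superset
    (AlgebraicIndependent.coe_range hx)
  set v : T → K := Subtype.val with hv
  have hvi : AlgebraicIndependent ℂ v := hb.1
  let R := Algebra.adjoin ℂ (Set.range v)
  have : Algebra.FormallySmooth R (IntermediateField.adjoin ℂ (Set.range v)) :=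
    .of_isLocalization (nonZeroDivisors R)
  have : Algebra.IsAlgebraic (IntermediateField.adjoin ℂ (Set.range v)) K := hb.isAlgebraic_field
  have : Algebra.FormallyEtale (IntermediateField.adjoin ℂ (Set.range v)) K :=
    Algebra.FormallyEtale.of_isSeparable _ K
  have : Algebra.FormallySmooth R K :=
    .comp R (IntermediateField.adjoin ℂ (Set.range v)) K
  let y' : T → K := fun t => if h : ∃ s, x s = t then y h.choose else 0
  let g : R →ₐ[ℂ] TrivSqZeroExt K K :=
    (MvPolynomial.aeval fun t => TrivSqZeroExt.inl (v t) + TrivSqZeroExt.inr (y' t)).comp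
      hvi.aevalEquiv.symm.toAlgHom
  have hg (t : T) : g ⟨v t, Algebra.subset_adjoin ⟨t, rfl⟩⟩ =
      TrivSqZeroExt.inl (v t) + TrivSqZeroExt.inr (y' t) := by
    have : hvi.aevalEquiv.symm ⟨v t, Algebra.subset_adjoin ⟨t, rfl⟩⟩ = MvPolynomial.X t := by
      rw [AlgEquiv.symm_apply_eq]; ext; simp
    simp [g, this]
  have hfst : (TrivSqZeroExt.fstHom ℂ K K).comp g = R.val := by
    apply AlgHom.adjoin_ext
    rintro _ ⟨t, rfl⟩
    simp [hg]
  let : Algebra R (TrivSqZeroExt K K) := g.toRingHom.toAlgebra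
  let π : TrivSqZeroExt K K →ₐ[R] K :=
    { TrivSqZeroExt.fstHom ℂ K K with commutes' := fun r => congr($hfst r) }
  have hπ : Function.Surjective π := fun a => ⟨TrivSqZeroExt.inl a, rfl⟩
  have hn : IsNilpotent (RingHom.ker (π : TrivSqZeroExt K K →+* K)) :=
    ⟨2, TrivSqZeroExt.kerIdeal_sq K K⟩
  let L := Algebra.FormallySmooth.liftOfSurjective (AlgHom.id R K) π hπ hn
  have hL (a : K) : (L a).fst = a :=
    Algebra.FormallySmooth.liftOfSurjective_apply (AlgHom.id R K) π hπ hn a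
  have hLc (r : R) : L r = g r := L.commutes r
  refine ⟨Derivation.mk'
    { toFun := fun a => (L a).snd
      map_add' := fun a b => by simp
      map_smul' := fun c a => ?_ } ?_, ?_⟩
  · have : L (c • a) = g (algebraMap ℂ R c) * L a := by
      rw [← hLc, ← map_mul, Algebra.smul_def]; rfl
    rw [this, AlgHom.commutes, ← Algebra.smul_def]
    simp
  · intro a b
    simp [hL, mul_comm]
  · intro s
    have hs : x s ∈ T := hT ⟨s, rfl⟩
    have h1 : L (x s) = TrivSqZeroExt.inl (x s) + TrivSqZeroExt.inr (y' ⟨x s, hs⟩) :=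
      (hLc ⟨v ⟨x s, hs⟩, Algebra.subset_adjoin ⟨_, rfl⟩⟩).trans (hg _)
    have h2 : y' ⟨x s, hs⟩ = y s := by
      have h : ∃ s', x s' = x s := ⟨s, rfl⟩
      simp only [y', dif_pos h]
      rw [hx.injective h.choose_spec]
    simp [h1, h2]

theorem exists_field_algebraicIndependent {B σ : Type} (X : B → σ → ℂ)
    (hX : ∀ F : MvPolynomial σ ℂ, F ≠ 0 → ∃ b, MvPolynomial.eval (X b) F ≠ 0) :
    ∃ (K : Type) (_ : Field K) (_ : Algebra ℂ K) (κ : (B → ℂ) →ₐ[ℂ] K),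
      AlgebraicIndependent ℂ fun s => κ fun b => X b s := by
  let θ : MvPolynomial σ ℂ →ₐ[ℂ] (B → ℂ) := MvPolynomial.aeval fun s b => X b s
  have hθ (F b) : θ F b = MvPolynomial.eval (X b) F := by
    have : (Pi.evalAlgHom ℂ (fun _ : B => ℂ) b).comp θ = MvPolynomial.aeval (X b) := by
      ext s; simp [θ]
    exact congr($this F)
  have hinj : Function.Injective θ := by
    rw [injective_iff_map_eq_zero]
    intro F h
    by_contra hF
    obtain ⟨b, hb⟩ := hX F hF
    exact hb (by rw [← hθ, h]; rfl)
  obtain ⟨I, hI, -, hd⟩ := Ideal.exists_le_prime_disjoint (⊥ : Ideal (B → ℂ))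
    ((nonZeroDivisors (MvPolynomial σ ℂ)).map θ) (by
      rw [Set.disjoint_left]
      rintro _ h ⟨F, hF, rfl⟩
      exact nonZeroDivisors.ne_zero hF (hinj (by simpa using h)))
  let κ : (B → ℂ) →ₐ[ℂ] FractionRing ((B → ℂ) ⧸ I) :=
    (IsScalarTower.toAlgHom ℂ ((B → ℂ) ⧸ I) (FractionRing ((B → ℂ) ⧸ I))).comp
      (Ideal.Quotient.mkₐ ℂ I)
  refine ⟨FractionRing ((B → ℂ) ⧸ I), inferInstance, inferInstance, κ, ?_⟩
  rw [algebraicIndependent_iff]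
  intro F hF
  by_contra h0
  have : θ F ∈ I := by
    rw [← Ideal.Quotient.eq_zero_iff_mem]
    apply IsFractionRing.injective ((B → ℂ) ⧸ I) (FractionRing ((B → ℂ) ⧸ I))
    rw [map_zero, ← hF]
    have : κ.comp θ = MvPolynomial.aeval fun s => κ fun b => X b s := by
      ext s; simp [θ]
    exact congr($this F)
  exact Set.disjoint_left.mp hd this ⟨F, mem_nonZeroDivisors_of_ne_zero h0, rfl⟩

/-- Linear independence of a family with polynomial entries is a Zariski open condition,
witnessed by a single polynomial over all field extensions. -/
theorem exists_polynomial_linearIndependent {ι κ σ : Type*} [Finite ι] [Finite κ]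
    (M : ι → κ → MvPolynomial σ ℂ) (x₀ : σ → ℂ)
    (h : LinearIndependent ℂ fun i k => MvPolynomial.eval x₀ (M i k)) :
    ∃ F : MvPolynomial σ ℂ, MvPolynomial.eval x₀ F ≠ 0 ∧
      ∀ (K : Type) [Field K] [Algebra ℂ K] (x : σ → K), MvPolynomial.aeval x F ≠ 0 →
        LinearIndependent K fun i k => MvPolynomial.aeval x (M i k) := by
  classical
  cases nonempty_fintype ι
  cases nonempty_fintype κ
  let M₀ : Matrix ι κ ℂ := .of fun i k => MvPolynomial.eval x₀ (M i k)
  obtain ⟨N, hN⟩ : ∃ N : Matrix κ ι ℂ, M₀ * N = 1 := by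
    have hinj : Function.Injective M₀.vecMulLinear := Matrix.vecMul_injective_iff.mpr h
    obtain ⟨g, hg⟩ := LinearMap.exists_leftInverse_of_injective _ (LinearMap.ker_eq_bot.mpr hinj)
    refine ⟨(LinearMap.toMatrix' g).transpose, ?_⟩
    ext i j
    have h1 : g (M₀ i) j = (1 : Matrix ι ι ℂ) i j := by
      have := congr($hg (Pi.single i 1) j)
      simpa [Matrix.one_apply, Pi.single_apply, eq_comm, Matrix.row] using this
    rw [← h1, ← LinearMap.toMatrix'_mulVec]
    simp [Matrix.mul_apply, Matrix.mulVec, dotProduct, mul_comm]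
  let P : Matrix ι κ (MvPolynomial σ ℂ) := Matrix.of M
  let Q : Matrix κ ι (MvPolynomial σ ℂ) := N.map MvPolynomial.C
  refine ⟨(P * Q).det, ?_, fun K _ _ x hx => ?_⟩
  · rw [RingHom.map_det]
    have : (MvPolynomial.eval x₀).mapMatrix (P * Q) = M₀ * N := by
      ext i j
      change MvPolynomial.eval x₀ ((P * Q) i j) = _
      rw [Matrix.mul_apply, Matrix.mul_apply]
      simp [M₀, P, Q]
    rw [this, hN]; simp
  · rw [AlgHom.map_det] at hx
    set R : Matrix ι κ K := Matrix.of fun i k => MvPolynomial.aeval x (M i k)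
    have : (MvPolynomial.aeval x).mapMatrix (P * Q) = R * N.map (algebraMap ℂ K) := by
      ext i j
      change MvPolynomial.aeval x ((P * Q) i j) = _
      rw [Matrix.mul_apply, Matrix.mul_apply]
      simp [R, P, Q]
    rw [this] at hx
    have hrow := Matrix.linearIndependent_rows_of_det_ne_zero hx
    exact LinearIndependent.of_comp (Matrix.vecMulLinear (N.map (algebraMap ℂ K))) hrow

/-! ### The Segre map in coordinates -/

/-- The coordinates of `v₁ ⊗ ⋯ ⊗ vₙ` in the standard basis of `(R⁴)^{⊗n}`. -/
def segre (n : ℕ) (R : Type*) [CommRing R] :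
    MultilinearMap R (fun _ : Fin n => Fin 4 → R) ((Fin n → Fin 4) → R) :=
  MultilinearMap.pi fun f =>
    (MultilinearMap.mkPiAlgebra R (Fin n) R).compLinearMap fun j => LinearMap.proj (f j)

theorem segre_apply {n : ℕ} {R : Type*} [CommRing R] (v : Fin n → Fin 4 → R)
    (f : Fin n → Fin 4) : segre n R v f = ∏ j, v j (f j) := by
  simp [segre]

/-- A point of the Segre cone followed by its derivatives in `3` directions for each factor. -/
def segreTangent {n : ℕ} {R : Type*} [CommRing R] (p : Fin n → Fin 4 → R)
    (u : Fin n → Fin 3 → Fin 4 → R) : Option (Fin n × Fin 3) → (Fin n → Fin 4) → R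
  | none => segre n R p
  | some a => segre n R (Function.update p a.1 (u a.1 a.2))

/-- Second derivatives of the Segre map. -/
def segreSecond {n : ℕ} {R : Type*} [CommRing R] (p : Fin n → Fin 4 → R)
    (u : Fin n → Fin 3 → Fin 4 → R) (a b : Fin n × Fin 3) : (Fin n → Fin 4) → R :=
  if a.1 = b.1 then 0
  else segre n R (Function.update (Function.update p a.1 (u a.1 a.2)) b.1 (u b.1 b.2))

section Map

variable {n : ℕ} {R S : Type*} [CommRing R] [CommRing S] (φ : R →+* S)

theorem segre_map (v : Fin n → Fin 4 → R) (f : Fin n → Fin 4) :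
    segre n S (fun j m => φ (v j m)) f = φ (segre n R v f) := by
  simp [segre_apply]

theorem update_map (v : Fin n → Fin 4 → R) (i : Fin n) (w : Fin 4 → R) :
    Function.update (fun j m => φ (v j m)) i (fun m => φ (w m)) =
      fun j m => φ (Function.update v i w j m) := by
  ext j m
  by_cases h : j = i
  · subst h; simp
  · simp [h]

theorem segreTangent_map (p : Fin n → Fin 4 → R) (u : Fin n → Fin 3 → Fin 4 → R)
    (o : Option (Fin n × Fin 3)) (f : Fin n → Fin 4) :
    segreTangent (fun j m => φ (p j m)) (fun j l m => φ (u j l m)) o f =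
      φ (segreTangent p u o f) := by
  cases o with
  | none => exact segre_map φ p f
  | some a => simp only [segreTangent, update_map, segre_map]

theorem segreSecond_map (p : Fin n → Fin 4 → R) (u : Fin n → Fin 3 → Fin 4 → R)
    (a b : Fin n × Fin 3) (f : Fin n → Fin 4) :
    segreSecond (fun j m => φ (p j m)) (fun j l m => φ (u j l m)) a b f =
      φ (segreSecond p u a b f) := by
  unfold segreSecond
  split_ifs
  · simp
  · simp only [update_map, segre_map]

end Map

/-- The tangent vectors of all points `p i` of the Segre cone. -/
def tangentFamily {n : ℕ} {R ι : Type*} [CommRing R] (p : ι → Fin n → Fin 4 → R)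
    (u : ι → Fin n → Fin 3 → Fin 4 → R) (x : ι × Option (Fin n × Fin 3)) :
    (Fin n → Fin 4) → R :=
  segreTangent (p x.1) (u x.1) x.2

/-- The tangent spaces at the points `p i` are independent of the maximal possible dimension,
and the second fundamental form at `p i₀`, modulo all these tangent spaces, is nondegenerate. -/
structure IsGoodAt {n : ℕ} {K ι : Type*} [Field K] (p : ι → Fin n → Fin 4 → K)
    (u : ι → Fin n → Fin 3 → Fin 4 → K) (i₀ : ι) : Prop where
  linearIndependent : LinearIndependent K (tangentFamily p u)
  eq_zero : ∀ t : Fin n × Fin 3 → K,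
    (∀ b, ∑ a, t a • segreSecond (p i₀) (u i₀) a b ∈
      Submodule.span K (Set.range (tangentFamily p u))) → t = 0

/-- A family of vectors whose independence encodes a nondegeneracy condition on `s`
modulo the span of an independent family `v`. -/
def hessianFamily {α X Y R : Type*} [DecidableEq α] [Zero R] (s : α → α → Y → R)
    (v : X → Y → R) : α ⊕ (α × X) → α × Y → R
  | .inl a, y => s a y.1 y.2
  | .inr z, y => if y.1 = z.1 then v z.2 y.2 else 0

theorem linearIndependent_hessianFamily_iff {α X Y K : Type*} [DecidableEq α] [Fintype α]
    [Nonempty α] [Finite X] [Field K] (s : α → α → Y → K) (v : X → Y → K) :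
    LinearIndependent K (hessianFamily s v) ↔ LinearIndependent K v ∧
      ∀ t : α → K, (∀ b, ∑ a, t a • s a b ∈ Submodule.span K (Set.range v)) → t = 0 := by
  cases nonempty_fintype X
  have key (g : α ⊕ (α × X) → K) (b : α) (y : Y) :
      (∑ i, g i • hessianFamily s v i) (b, y) =
        (∑ a, g (.inl a) • s a b) y + (∑ x, g (.inr (b, x)) • v x) y := by
    simp [Fintype.sum_sum_type, Fintype.sum_prod_type, hessianFamily]
  rw [Fintype.linearIndependent_iff, Fintype.linearIndependent_iff]
  constructor
  · intro h
    constructor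
    · intro g hg x
      obtain ⟨b⟩ := ‹Nonempty α›
      refine h (Sum.elim 0 fun z => g z.2) ?_ (.inr (b, x))
      ext ⟨b, y⟩
      rw [key]
      have := congr($hg y)
      simpa using this
    · intro t ht
      simp only [Submodule.mem_span_range_iff_exists_fun] at ht
      choose c hc using ht
      ext a
      refine h (Sum.elim t fun z => - c z.1 z.2) ?_ (.inl a)
      ext ⟨b, y⟩
      rw [key]
      have := congr($(hc b) y)
      simp at this ⊢
      rw [this]; ring
  · rintro ⟨h1, h2⟩ g hg
    have hg' (b) : ∑ a, g (.inl a) • s a b + ∑ x, g (.inr (b, x)) • v x = 0 := by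
      ext y
      rw [Pi.add_apply, ← key, hg]; rfl
    have h3 := h2 (fun a => g (.inl a)) fun b => by
      rw [eq_neg_of_add_eq_zero_left (hg' b)]
      exact neg_mem (sum_mem fun x _ => Submodule.smul_mem _ _ (Submodule.subset_span ⟨x, rfl⟩))
    rintro (a | ⟨b, x⟩)
    · exact congr($h3 a)
    · refine h1 (fun x => g (.inr (b, x))) ?_ x
      simpa [funext_iff.mp h3] using hg' b

theorem isGoodAt_iff {n : ℕ} [NeZero n] {K ι : Type*} [Finite ι] [Field K]
    (p : ι → Fin n → Fin 4 → K) (u : ι → Fin n → Fin 3 → Fin 4 → K) (i₀ : ι) :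
    IsGoodAt p u i₀ ↔ LinearIndependent K
      (hessianFamily (segreSecond (p i₀) (u i₀)) (tangentFamily p u)) := by
  rw [linearIndependent_hessianFamily_iff]
  exact ⟨fun h => ⟨h.1, h.2⟩, fun h => ⟨h.1, h.2⟩⟩

theorem IsGoodAt.exists_polynomial {n : ℕ} [NeZero n] {σ ι : Type*} [Finite ι]
    (P : ι → Fin n → Fin 4 → MvPolynomial σ ℂ) (U : ι → Fin n → Fin 3 → Fin 4 → MvPolynomial σ ℂ)
    (x₀ : σ → ℂ) {i₀ : ι}
    (h : IsGoodAt (fun i j m => MvPolynomial.eval x₀ (P i j m))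
      (fun i j l m => MvPolynomial.eval x₀ (U i j l m)) i₀) :
    ∃ F : MvPolynomial σ ℂ, MvPolynomial.eval x₀ F ≠ 0 ∧
      ∀ (K : Type) [Field K] [Algebra ℂ K] (x : σ → K), MvPolynomial.aeval x F ≠ 0 →
        IsGoodAt (fun i j m => MvPolynomial.aeval x (P i j m))
          (fun i j l m => MvPolynomial.aeval x (U i j l m)) i₀ := by
  have key {S : Type} [Field S] (φ : MvPolynomial σ ℂ →+* S) :
      hessianFamily (segreSecond (fun j m => φ (P i₀ j m)) (fun j l m => φ (U i₀ j l m)))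
        (tangentFamily (fun i j m => φ (P i j m)) (fun i j l m => φ (U i j l m))) =
      fun y z => φ (hessianFamily (segreSecond (P i₀) (U i₀)) (tangentFamily P U) y z) := by
    ext y z
    rcases y with a | ⟨b, x⟩
    · exact segreSecond_map φ _ _ _ _ _
    · simp only [hessianFamily, tangentFamily, segreTangent_map, apply_ite φ, map_zero]
  rw [isGoodAt_iff, key] at h
  obtain ⟨F, hF, hF'⟩ := exists_polynomial_linearIndependent _ x₀ h
  refine ⟨F, hF, fun K _ _ x hx => ?_⟩
  rw [isGoodAt_iff]
  have := key (MvPolynomial.aeval x : MvPolynomial σ ℂ →ₐ[ℂ] K).toRingHom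
  exact this ▸ hF' K x hx

theorem IsGoodAt.comp {n : ℕ} {K ι κ : Type*} [Field K] {p : ι → Fin n → Fin 4 → K}
    {u : ι → Fin n → Fin 3 → Fin 4 → K} {k₀ : κ} {e : κ → ι} (he : Function.Injective e)
    (h : IsGoodAt p u (e k₀)) : IsGoodAt (p ∘ e) (u ∘ e) k₀ where
  linearIndependent := h.linearIndependent.comp (Prod.map e id) (he.prodMap Function.injective_id)
  eq_zero t ht := h.eq_zero t fun b => by
    refine Submodule.span_mono ?_ (ht b)
    rintro _ ⟨x, rfl⟩
    exact ⟨(e x.1, x.2), rfl⟩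

/-! ### A configuration for five factors, from the quaternary Hamming code -/

/-- Multiplication in the field with four elements `{0, 1, 2, 3}`, where addition is `xor`. -/
def mulFour (x y : ℕ) : ℕ := if x = 0 ∨ y = 0 then 0 else (x + y - 2) % 3 + 1

/-- The codewords of the quaternary Hamming code of length `5` as lists of digits. -/
def hammingDigit (c : ℕ) (j : ℕ) : ℕ :=
  if j < 3 then c / 4 ^ j % 4
  else ((c % 4) ^^^ mulFour (j - 1) (c / 4 % 4)) ^^^ mulFour (6 - j) (c / 16 % 4)

/-- The `64` codewords of the quaternary Hamming code of length `5`. -/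
def hammingWord (c : Fin 64) (j : Fin 5) : Fin 4 := Fin.ofNat 4 (hammingDigit c j)

theorem three_le_hammingDist_hammingWord :
    ∀ c d : Fin 64, c ≠ d → 3 ≤ hammingDist (hammingWord c) (hammingWord d) := by
  decide +kernel

/-- Words at distance at most one from `c`. -/
def ballWord {n : ℕ} (c : Fin n → Fin 4) : Option (Fin n × Fin 3) → Fin n → Fin 4
  | none => c
  | some a => Function.update c a.1 ((c a.1).succAbove a.2)

theorem hammingDist_update_le {n : ℕ} (c : Fin n → Fin 4) (j : Fin n) (x : Fin 4) :
    hammingDist c (Function.update c j x) ≤ 1 := by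
  rw [hammingDist, ← Finset.card_singleton j]
  refine Finset.card_le_card fun i hi => ?_
  by_contra h
  simp_all

theorem hammingDist_ballWord_le {n : ℕ} (c : Fin n → Fin 4) (o : Option (Fin n × Fin 3)) :
    hammingDist c (ballWord c o) ≤ 1 := by
  cases o with
  | none => simp [ballWord]
  | some a => exact hammingDist_update_le _ _ _

theorem ballWord_injective {n : ℕ} (c : Fin n → Fin 4) : Function.Injective (ballWord c) := by
  have h0 (a : Fin n × Fin 3) : Function.update c a.1 ((c a.1).succAbove a.2) ≠ c := fun h => by
    have := congr_fun h a.1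
    simp [Fin.succAbove_ne] at this
  rintro (_ | a) (_ | b) h
  · rfl
  · exact (h0 b h.symm).elim
  · exact (h0 a h).elim
  · obtain ⟨j, l⟩ := a
    obtain ⟨j', l'⟩ := b
    have h1 := congr_fun h j
    by_cases hj : j = j'
    · subst hj
      simpa [ballWord] using h1
    · simp [ballWord, hj, Fin.succAbove_ne] at h1

theorem ballWord_hammingWord_eq_iff (c d : Fin 64) (o o' : Option (Fin 5 × Fin 3)) :
    ballWord (hammingWord c) o = ballWord (hammingWord d) o' ↔ c = d ∧ o = o' := by
  refine ⟨fun h => ?_, by rintro ⟨rfl, rfl⟩; rfl⟩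
  obtain rfl | hcd := eq_or_ne c d
  · exact ⟨rfl, ballWord_injective _ h⟩
  · have h1 := three_le_hammingDist_hammingWord c d hcd
    have h2 := hammingDist_triangle (hammingWord c) (ballWord (hammingWord c) o) (hammingWord d)
    have h3 := hammingDist_ballWord_le (hammingWord c) o
    have h4 := hammingDist_ballWord_le (hammingWord d) o'
    rw [← h, hammingDist_comm] at h4
    omega

theorem segre_single {n : ℕ} {R : Type*} [CommRing R] (c : Fin n → Fin 4) :
    segre n R (fun j => Pi.single (c j) 1) = Pi.single c 1 := by
  ext f
  rw [segre_apply]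
  simp only [Pi.single_apply]
  rw [Finset.prod_ite_zero]
  simp [funext_iff]

theorem segreTangent_single {n : ℕ} {R : Type*} [CommRing R] (c : Fin n → Fin 4)
    (o : Option (Fin n × Fin 3)) :
    segreTangent (fun j => Pi.single (c j) 1) (fun j l => Pi.single ((c j).succAbove l) (1 : R)) o =
      Pi.single (ballWord c o) 1 := by
  cases o with
  | none => exact segre_single c
  | some a =>
    rw [ballWord, ← segre_single, segreTangent]
    congr 1
    ext j m
    by_cases h : j = a.1
    · subst h; simp
    · simp [h]

/-- The index type of the points in the five-factor configuration. -/
abbrev HammingIndex : Type := {c : Fin 64 // c ≠ 21}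

/-- The points of the five-factor configuration: codewords, except for one general point. -/
def hammingPoint (i : HammingIndex) (j : Fin 5) : Fin 4 → ℂ :=
  if i.1 = 0 then 1 else Pi.single (hammingWord i.1 j) 1

/-- The directions in the five-factor configuration. -/
def hammingDir (i : HammingIndex) (j : Fin 5) (l : Fin 3) : Fin 4 → ℂ :=
  if i.1 = 0 then Pi.single l.succ 1 else Pi.single ((hammingWord i.1 j).succAbove l) 1

/-- The index of the general point in the five-factor configuration. -/
def hammingZero : HammingIndex := ⟨0, by decide⟩

theorem tangentFamily_hamming_of_ne {i : HammingIndex} (hi : i ≠ hammingZero)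
    (o : Option (Fin 5 × Fin 3)) :
    tangentFamily hammingPoint hammingDir (i, o) = Pi.single (ballWord (hammingWord i.1) o) 1 := by
  have : i.1 ≠ 0 := fun h => hi (Subtype.ext h)
  rw [← segreTangent_single, tangentFamily]
  congr 1 <;> ext <;> simp [hammingPoint, hammingDir, this]

theorem tangentFamily_hamming_zero_none (f : Fin 5 → Fin 4) :
    tangentFamily hammingPoint hammingDir (hammingZero, none) f = 1 := by
  simp [tangentFamily, segreTangent, segre_apply, hammingPoint, hammingZero]

theorem tangentFamily_hamming_zero_some (a : Fin 5 × Fin 3) (f : Fin 5 → Fin 4) :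
    tangentFamily hammingPoint hammingDir (hammingZero, some a) f =
      if f a.1 = a.2.succ then 1 else 0 := by
  simp only [tangentFamily, segreTangent, segre_apply]
  rw [Fintype.prod_eq_single a.1]
  · simp [hammingDir, hammingZero, Pi.single_apply]
  · intro j hj
    simp [hj, hammingPoint, hammingZero]

theorem segreSecond_hamming_zero (a b : Fin 5 × Fin 3) (f : Fin 5 → Fin 4) :
    segreSecond (hammingPoint hammingZero) (hammingDir hammingZero) a b f =
      if a.1 ≠ b.1 ∧ f a.1 = a.2.succ ∧ f b.1 = b.2.succ then 1 else 0 := by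
  unfold segreSecond
  by_cases h : a.1 = b.1
  · simp [h]
  · rw [if_neg h, segre_apply, Fintype.prod_eq_mul a.1 b.1 h]
    · simp [h, hammingDir, hammingZero, Pi.single_apply, ite_and]
      split_ifs <;> rfl
    · rintro j ⟨h1, h2⟩
      simp [h1, h2, hammingPoint, hammingZero]

theorem sum_smul_tangentFamily_hamming (g : HammingIndex × Option (Fin 5 × Fin 3) → ℂ) (d : Fin 64)
    (o : Option (Fin 5 × Fin 3)) :
    (∑ x, g x • tangentFamily hammingPoint hammingDir x) (ballWord (hammingWord d) o) =
      (g (hammingZero, none) + ∑ a : Fin 5 × Fin 3,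
        if ballWord (hammingWord d) o a.1 = a.2.succ then g (hammingZero, some a) else 0) +
      if h : d ≠ 21 ∧ d ≠ 0 then g (⟨d, h.1⟩, o) else 0 := by
  rw [Fintype.sum_prod_type, ← Finset.add_sum_erase _ _ (Finset.mem_univ hammingZero),
    Pi.add_apply]
  congr 1
  · simp [Fintype.sum_option, tangentFamily_hamming_zero_none, tangentFamily_hamming_zero_some]
  · have h1 : ∀ i ∈ Finset.univ.erase hammingZero, ∑ o', g (i, o') •
        tangentFamily hammingPoint hammingDir (i, o') =
        ∑ o', g (i, o') • Pi.single (ballWord (hammingWord i.1) o') 1 := fun i hi => by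
      simp only [tangentFamily_hamming_of_ne (Finset.ne_of_mem_erase hi)]
    rw [Finset.sum_congr rfl h1]
    simp only [Finset.sum_apply, Pi.smul_apply, Pi.single_apply, ballWord_hammingWord_eq_iff]
    split_ifs with h
    · rw [Finset.sum_eq_single ⟨d, h.1⟩, Finset.sum_eq_single o]
      · simp
      · intro o' _ ho
        simp [ho.symm]
      · simp
      · intro i _ hi
        have : d ≠ i.1 := fun h' => hi (Subtype.ext h'.symm)
        simp [this]
      · intro h'
        exact (h' (Finset.mem_erase.mpr
          ⟨fun h0 => h.2 congr(($h0).1), Finset.mem_univ _⟩)).elim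
    · refine Finset.sum_eq_zero fun i hi => Finset.sum_eq_zero fun o' _ => ?_
      have : d ≠ i.1 := by
        rintro rfl
        exact h ⟨i.2, fun h0 => Finset.ne_of_mem_erase hi (Subtype.ext h0)⟩
      simp [this]

/-- A tangent combination that vanishes near the zero codeword does not involve the
general point. -/
theorem coeff_zero_of_vanish {h : (Fin 5 → Fin 4) → ℂ} {α : ℂ} {β : Fin 5 × Fin 3 → ℂ}
    (hh : ∀ o, h (ballWord (hammingWord 0) o) =
      α + ∑ a : Fin 5 × Fin 3, if ballWord (hammingWord 0) o a.1 = a.2.succ then β a else 0)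
    (h0 : ∀ o, h (ballWord (hammingWord 0) o) = 0) : α = 0 ∧ ∀ a, β a = 0 := by
  have e0 : hammingWord 0 = 0 := by decide +kernel
  have hα : α = 0 := by
    have := (hh none).symm.trans (h0 none)
    simpa [ballWord, e0, (Fin.succ_ne_zero _).symm] using this
  refine ⟨hα, fun a => ?_⟩
  have := (hh (some a)).symm.trans (h0 (some a))
  rw [hα, zero_add, Finset.sum_eq_single a] at this
  · simpa [ballWord, e0] using this
  · intro b _ hb
    rw [if_neg]
    simp only [ballWord, e0]
    intro h'
    by_cases hj : b.1 = a.1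
    · rw [hj] at h'
      simp at h'
      exact hb (Prod.ext hj h'.symm)
    · simp [hj, (Fin.succ_ne_zero _).symm] at h'
  · simp

theorem isGoodAt_hamming : IsGoodAt hammingPoint hammingDir hammingZero where
  linearIndependent := by
    rw [Fintype.linearIndependent_iff]
    intro g hg
    have key (d o) := (sum_smul_tangentFamily_hamming g d o).symm.trans
      (congr_fun hg (ballWord (hammingWord d) o))
    obtain ⟨h1, h2⟩ := coeff_zero_of_vanish (h := 0) (α := g (hammingZero, none))
      (β := fun a => g (hammingZero, some a))
      (fun o => by have := key 0 o; simp at this; exact this.symm) fun _ => rfl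
    rintro ⟨i, o⟩
    by_cases hi : i = hammingZero
    · subst hi
      cases o with
      | none => exact h1
      | some a => exact h2 a
    · have h0 : i.1 ≠ 0 := fun h => hi (Subtype.ext h)
      have := key i.1 o
      simpa [h1, h2, i.2, h0] using this
  eq_zero t ht := by
    have key (b : Fin 5 × Fin 3) (o : Option (Fin 5 × Fin 3)) :
        (∑ a, if a.1 ≠ b.1 ∧ ballWord (hammingWord 21) o a.1 = a.2.succ ∧
          ballWord (hammingWord 21) o b.1 = b.2.succ then t a else 0) = 0 := by
      obtain ⟨g, hg⟩ := (Submodule.mem_span_range_iff_exists_fun ℂ).mp (ht b)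
      have hs (f) : (∑ a, t a • segreSecond (hammingPoint hammingZero)
          (hammingDir hammingZero) a b) f =
          ∑ a, if a.1 ≠ b.1 ∧ f a.1 = a.2.succ ∧ f b.1 = b.2.succ then t a else 0 := by
        simp only [Finset.sum_apply, Pi.smul_apply, segreSecond_hamming_zero, smul_eq_mul,
          mul_ite, mul_one, mul_zero]
      have hv (d o) := (sum_smul_tangentFamily_hamming g d o).symm.trans
        ((congr_fun hg (ballWord (hammingWord d) o)).trans (hs _))
      obtain ⟨h1, h2⟩ := coeff_zero_of_vanish (α := g (hammingZero, none))
        (β := fun a => g (hammingZero, some a)) (h := fun f => ∑ a : Fin 5 × Fin 3,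
          if a.1 ≠ b.1 ∧ f a.1 = a.2.succ ∧ f b.1 = b.2.succ then t a else 0)
        (fun o => by have := hv 0 o; simp only [ne_eq, not_true_eq_false, and_false, dite_false,
          add_zero] at this; exact this.symm) fun o => by
          refine Finset.sum_eq_zero fun a _ => if_neg ?_
          have e0 : hammingWord 0 = 0 := by decide +kernel
          rintro ⟨h3, h4, h5⟩
          cases o with
          | none => simp [ballWord, e0, (Fin.succ_ne_zero _).symm] at h4
          | some c =>
            simp only [ballWord, e0, Function.update_apply] at h4 h5
            by_cases h6 : a.1 = c.1
            · have h7 : b.1 ≠ c.1 := fun h => h3 (h6.trans h.symm)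
              simp [h7, (Fin.succ_ne_zero _).symm] at h5
            · simp [h6, (Fin.succ_ne_zero _).symm] at h4
      have := hv 21 o
      simpa [h1, h2] using this.symm
    have e : hammingWord 21 = ![1, 1, 1, 0, 0] := by decide +kernel
    have t0 : t (0, 0) = 0 := by
      simpa [Fintype.sum_prod_type, Fin.sum_univ_succ, ballWord, e] using key (2, 0) (some (1, 0))
    have t1 : t (1, 0) = 0 := by
      simpa [Fintype.sum_prod_type, Fin.sum_univ_succ, ballWord, e] using key (0, 0) (some (2, 0))
    have t2 : t (2, 0) = 0 := by
      simpa [Fintype.sum_prod_type, Fin.sum_univ_succ, ballWord, e] using key (1, 0) (some (0, 0))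
    have t3 (l : Fin 3) : t (0, l) = 0 ∧ t (1, l) = 0 ∧ t (2, l) = 0 ∧
        t (3, l) = 0 ∧ t (4, l) = 0 := by
      have h0 := key (1, 0) (some (0, l))
      have h1 := key (0, 0) (some (1, l))
      have h2 := key (0, 0) (some (2, l))
      have h3 := key (0, 0) (some (3, l))
      have h4 := key (0, 0) (some (4, l))
      fin_cases l <;>
        simp [Fintype.sum_prod_type, Fin.sum_univ_succ, ballWord, e, Fin.succAbove, t0, t1, t2]
          at h0 h1 h2 h3 h4 ⊢ <;>
        simp [*]
    ext ⟨j, l⟩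
    obtain ⟨h0, h1, h2, h3, h4⟩ := t3 l
    fin_cases j <;> assumption

theorem exists_isGoodAt_five {ι : Type*} [Finite ι] (i₀ : ι) (h : Nat.card ι ≤ 63) :
    ∃ (p : ι → Fin 5 → Fin 4 → ℂ) (u : ι → Fin 5 → Fin 3 → Fin 4 → ℂ), IsGoodAt p u i₀ := by
  classical
  cases nonempty_fintype ι
  have : Fintype.card ι ≤ Fintype.card HammingIndex := by
    rw [← Nat.card_eq_fintype_card]
    refine h.trans ?_
    simp [Fintype.card_subtype_compl]
  obtain ⟨e⟩ := Function.Embedding.nonempty_of_card_le this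
  let e' := e.trans (Equiv.swap (e i₀) hammingZero).toEmbedding
  have h0 : e' i₀ = hammingZero := by simp [e']
  exact ⟨_, _, IsGoodAt.comp e'.injective (h0 ▸ isGoodAt_hamming)⟩

/-! ### Genericity -/

theorem exists_eval_ne_zero_of_forall {σ A : Type*} [Finite A] (F : A → MvPolynomial σ ℂ)
    (h : ∀ a, ∃ x, MvPolynomial.eval x (F a) ≠ 0) :
    ∃ x, ∀ a, MvPolynomial.eval x (F a) ≠ 0 := by
  cases nonempty_fintype A
  have h0 : ∏ a, F a ≠ 0 := Finset.prod_ne_zero_iff.mpr fun a _ ha => by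
    obtain ⟨x, hx⟩ := h a
    exact hx (by rw [ha, map_zero])
  by_contra! hc
  refine h0 (MvPolynomial.funext fun x => ?_)
  obtain ⟨a, ha⟩ := hc x
  rw [map_prod, map_zero]
  exact Finset.prod_eq_zero (Finset.mem_univ a) ha

/-- Coordinates for a family of points and directions. -/
abbrev JointIdx (ι : Type*) (n : ℕ) : Type _ :=
  (ι × Fin n × Fin 4) ⊕ (ι × Fin n × Fin 3 × Fin 4)

/-- A family of points and directions as a point of affine space. -/
def jointPoint {ι : Type*} {n : ℕ} (p : ι → Fin n → Fin 4 → ℂ)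
    (u : ι → Fin n → Fin 3 → Fin 4 → ℂ) : JointIdx ι n → ℂ :=
  Sum.elim (fun x => p x.1 x.2.1 x.2.2) (fun x => u x.1 x.2.1 x.2.2.1 x.2.2.2)

/-- The universal family of points. -/
def jointX {ι : Type*} {n : ℕ} (i : ι) (j : Fin n) (m : Fin 4) : MvPolynomial (JointIdx ι n) ℂ :=
  .X (.inl (i, j, m))

/-- The universal family of directions. -/
def jointU {ι : Type*} {n : ℕ} (i : ι) (j : Fin n) (l : Fin 3) (m : Fin 4) :
    MvPolynomial (JointIdx ι n) ℂ :=
  .X (.inr (i, j, l, m))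

theorem exists_forall_of_open {ι A : Type*} {n : ℕ} [Finite A]
    (Q : A → (ι → Fin n → Fin 4 → ℂ) → (ι → Fin n → Fin 3 → Fin 4 → ℂ) → Prop)
    (hopen : ∀ a p u, Q a p u → ∃ F : MvPolynomial (JointIdx ι n) ℂ,
      MvPolynomial.eval (jointPoint p u) F ≠ 0 ∧
      ∀ p' u', MvPolynomial.eval (jointPoint p' u') F ≠ 0 → Q a p' u')
    (hex : ∀ a, ∃ p u, Q a p u) : ∃ p u, ∀ a, Q a p u := by
  choose p u h using hex
  choose F hF hF' using fun a => hopen a _ _ (h a)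
  obtain ⟨x, hx⟩ := exists_eval_ne_zero_of_forall F fun a => ⟨_, hF a⟩
  refine ⟨fun i j m => x (.inl (i, j, m)), fun i j l m => x (.inr (i, j, l, m)), fun a =>
    hF' a _ _ ?_⟩
  convert hx a
  ext (y | y) <;> rfl

theorem exists_forall_isGoodAt {ι : Type*} [Finite ι] {n : ℕ} [NeZero n]
    (h : ∀ i : ι, ∃ (p : ι → Fin n → Fin 4 → ℂ) (u : ι → Fin n → Fin 3 → Fin 4 → ℂ),
      IsGoodAt p u i) :
    ∃ (p : ι → Fin n → Fin 4 → ℂ) (u : ι → Fin n → Fin 3 → Fin 4 → ℂ), ∀ i, IsGoodAt p u i := by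
  refine exists_forall_of_open (fun i p u => IsGoodAt p u i) (fun i p u hi => ?_) h
  obtain ⟨F, hF, hF'⟩ := IsGoodAt.exists_polynomial jointX jointU (jointPoint p u) (i₀ := i)
    (by simpa [jointX, jointU, jointPoint] using hi)
  refine ⟨F, hF, fun p' u' h' => ?_⟩
  simpa [jointX, jointU, jointPoint] using hF' ℂ (jointPoint p' u') h'

theorem exists_forall_linearIndepOn {ι A : Type*} [Finite ι] [Finite A] {n : ℕ}
    (S : A → Set (ι × Option (Fin n × Fin 3)))
    (h : ∀ a, ∃ (p : ι → Fin n → Fin 4 → ℂ) (u : ι → Fin n → Fin 3 → Fin 4 → ℂ),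
      LinearIndepOn ℂ (tangentFamily p u) (S a)) :
    ∃ (p : ι → Fin n → Fin 4 → ℂ) (u : ι → Fin n → Fin 3 → Fin 4 → ℂ), ∀ a,
      LinearIndepOn ℂ (tangentFamily p u) (S a) := by
  refine exists_forall_of_open (fun a p u => LinearIndepOn ℂ (tangentFamily p u) (S a))
    (fun a p u hi => ?_) h
  have key (p : ι → Fin n → Fin 4 → ℂ) (u : ι → Fin n → Fin 3 → Fin 4 → ℂ)
      (x : ι × Option (Fin n × Fin 3)) : tangentFamily p u x = fun f =>
      MvPolynomial.eval (jointPoint p u) (tangentFamily jointX jointU x f) := by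
    ext f
    simp only [tangentFamily, ← segreTangent_map]
    simp [jointX, jointU, jointPoint]
  obtain ⟨F, hF, hF'⟩ := exists_polynomial_linearIndependent
    (fun (x : S a) f => tangentFamily jointX jointU x.1 f) (jointPoint p u)
    (by simpa [LinearIndepOn, key p u] using hi)
  refine ⟨F, hF, fun p' u' h' => ?_⟩
  have := hF' ℂ (jointPoint p' u') h'
  simpa [LinearIndepOn, key p' u'] using this

/-! ### Extending independent families -/

theorem exists_linearIndependent_sumElim {K V ι κ : Type*} [Field K] [AddCommGroup V] [Module K V]
    [Module.Finite K V] [Finite ι] [Finite κ] {v : ι → V} (hv : LinearIndependent K v) {S : Set V}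
    (hS : Submodule.span K S = ⊤) (h : Nat.card ι + Nat.card κ ≤ Module.finrank K V) :
    ∃ w : κ → V, (∀ k, w k ∈ S) ∧ LinearIndependent K (Sum.elim v w) := by
  classical
  have hr : LinearIndepOn K id (Set.range v) := hv.linearIndepOn_id
  have hsub : Set.range v ⊆ Set.range v ∪ S := Set.subset_union_left
  set b := hr.extend hsub with hb
  have hbi : LinearIndepOn K id b := hr.linearIndepOn_extend hsub
  have hbs : Submodule.span K b = ⊤ := by
    rw [eq_top_iff, ← hS, hb, hr.span_extend_eq_span hsub]
    exact Submodule.span_mono Set.subset_union_right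
  have hvb : Set.range v ⊆ b := hr.subset_extend hsub
  have hbS : b ⊆ Set.range v ∪ S := hr.extend_subset hsub
  have hfin : b.Finite := hbi.setFinite
  have hcard : b.ncard = Module.finrank K V := by
    let B : Module.Basis b K V := Module.Basis.mk hbi (by simp [hbs])
    rw [Module.finrank_eq_nat_card_basis B, Nat.card_coe_set_eq]
  have hrange : (Set.range v).ncard = Nat.card ι := by
    rw [← Set.image_univ, Set.ncard_image_of_injective _ hv.injective, Set.ncard_univ]
  have hdiff : Nat.card κ ≤ Nat.card ↑(b \ Set.range v) := by
    rw [Nat.card_coe_set_eq, Set.ncard_sdiff hvb, hcard, hrange]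
    omega
  have : Finite b := hfin
  have : Finite ↑(b \ Set.range v) := hfin.sdiff
  cases nonempty_fintype κ
  cases nonempty_fintype ↑(b \ Set.range v)
  rw [Nat.card_eq_fintype_card, Nat.card_eq_fintype_card] at hdiff
  obtain ⟨e⟩ := Function.Embedding.nonempty_of_card_le hdiff
  refine ⟨fun k => (e k).1, fun k => (hbS (e k).2.1).resolve_left (e k).2.2, ?_⟩
  have hinj : Function.Injective (Sum.elim (fun i => (⟨v i, hvb ⟨i, rfl⟩⟩ : b))
      fun k => ⟨(e k).1, (e k).2.1⟩) := by
    refine Function.Injective.sumElim (fun i j hij => hv.injective congr(($hij).1))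
      (fun i j hij => e.injective (Subtype.ext congr(($hij).1))) fun i k hik => ?_
    exact (e k).2.2 ⟨i, congr(($hik).1)⟩
  convert LinearIndependent.comp hbi _ hinj using 1
  ext (i | k) <;> rfl

theorem span_range_segre_single (n : ℕ) (K : Type*) [Field K] :
    Submodule.span K (Set.range fun f : Fin n → Fin 4 =>
      segre n K fun j => Pi.single (f j) 1) = ⊤ := by
  simp only [segre_single]
  have := (Pi.basisFun K (Fin n → Fin 4)).span_eq
  rw [← this]
  congr 2
  ext; simp

/-- Independent tangent spaces at the points of `T`, and independent further points. -/
theorem exists_linearIndepOn_tangentFamily {ι : Type*} [Finite ι] {m : ℕ} (T : Set ι)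
    (h : ∃ (p : T → Fin m → Fin 4 → ℂ) (u : T → Fin m → Fin 3 → Fin 4 → ℂ),
      LinearIndependent ℂ (tangentFamily p u))
    (hcard : 3 * m * Nat.card T + Nat.card ι ≤ 4 ^ m) :
    ∃ (p : ι → Fin m → Fin 4 → ℂ) (u : ι → Fin m → Fin 3 → Fin 4 → ℂ),
      LinearIndepOn ℂ (tangentFamily p u) {x | x.2 = none ∨ x.1 ∈ T} := by
  classical
  obtain ⟨p, u, h⟩ := h
  have hc : Nat.card T + Nat.card ↑Tᶜ = Nat.card ι := by
    rw [Nat.card_coe_set_eq, Nat.card_coe_set_eq, Set.ncard_add_ncard_compl]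
  obtain ⟨w, hw, hli⟩ := exists_linearIndependent_sumElim (κ := ↑Tᶜ) h
    (span_range_segre_single m ℂ) (by
      rw [Nat.card_prod, Module.finrank_pi]
      simp only [Nat.card_eq_fintype_card, Fintype.card_option, Fintype.card_prod,
        Fintype.card_fin, Fintype.card_fun]
      nlinarith)
  choose f hf using hw
  let P : ι → Fin m → Fin 4 → ℂ := fun i =>
    if hi : i ∈ T then p ⟨i, hi⟩ else fun j => Pi.single (f ⟨i, hi⟩ j) 1
  let U : ι → Fin m → Fin 3 → Fin 4 → ℂ := fun i => if hi : i ∈ T then u ⟨i, hi⟩ else 0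
  refine ⟨P, U, ?_⟩
  let φ : {x : ι × Option (Fin m × Fin 3) | x.2 = none ∨ x.1 ∈ T} →
      (T × Option (Fin m × Fin 3)) ⊕ ↑Tᶜ := fun x =>
    if hi : x.1.1 ∈ T then .inl (⟨x.1.1, hi⟩, x.1.2) else .inr ⟨x.1.1, hi⟩
  have hφ : Function.Injective φ := by
    rintro ⟨⟨i, o⟩, hx⟩ ⟨⟨i', o'⟩, hx'⟩ h
    simp only [φ] at h
    simp only [Set.mem_ofPred_eq] at hx hx'
    by_cases h1 : i ∈ T <;> by_cases h2 : i' ∈ T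
    · simpa [h1, h2] using h
    · simp [h1, h2] at h
    · simp [h1, h2] at h
    · simp only [h1, h2, or_false] at hx hx'
      simpa [h1, h2, hx, hx'] using h
  have heq : (fun x : {x : ι × Option (Fin m × Fin 3) | x.2 = none ∨ x.1 ∈ T} =>
      tangentFamily P U x.1) = Sum.elim (tangentFamily p u) w ∘ φ := by
    ext ⟨⟨i, o⟩, hx⟩ g
    simp only [Set.mem_ofPred_eq] at hx
    by_cases h1 : i ∈ T
    · simp [φ, P, U, h1, tangentFamily]
    · have ho : o = none := by simpa [h1] using hx
      subst ho
      simp [φ, P, h1, tangentFamily, ← hf, segreTangent]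
  have hcomp := LinearIndependent.comp hli φ hφ
  rw [← heq] at hcomp
  exact hcomp

/-! ### Adding a factor -/

theorem LinearIndepOn.eq_zero_of_sum_smul {K V X : Type*} [Field K] [AddCommGroup V] [Module K V]
    [Fintype X] {v : X → V} {S : Set X} (h : LinearIndepOn K v S) {c : X → K}
    (hc : ∀ x ∉ S, c x = 0) (h0 : ∑ x, c x • v x = 0) (x : X) : c x = 0 := by
  classical
  by_cases hx : x ∈ S
  · have := linearIndepOn_iff'.mp h (Finset.univ.filter (· ∈ S)) c (by simp) (by
      rw [← h0]
      refine Finset.sum_subset (Finset.subset_univ _) fun y _ hy => ?_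
      rw [hc y (by simpa using hy), zero_smul])
    exact this x (by simpa using hx)
  · exact hc x hx

section Cons

variable {m : ℕ} {R : Type*}

/-- Prepend a factor to a point. -/
def consPoint (x : Fin 4 → R) (p : Fin m → Fin 4 → R) : Fin (m + 1) → Fin 4 → R :=
  Fin.cons (α := fun _ => Fin 4 → R) x p

/-- Prepend a factor to a system of directions. -/
def consDir (y : Fin 3 → Fin 4 → R) (u : Fin m → Fin 3 → Fin 4 → R) :
    Fin (m + 1) → Fin 3 → Fin 4 → R :=
  Fin.cons (α := fun _ => Fin 3 → Fin 4 → R) y u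

/-- Prepend a letter to a word. -/
def consWord (s : Fin 4) (f : Fin m → Fin 4) : Fin (m + 1) → Fin 4 :=
  Fin.cons (α := fun _ => Fin 4) s f

variable (x : Fin 4 → R) (p : Fin m → Fin 4 → R)

theorem update_consPoint_zero (z : Fin 4 → R) :
    Function.update (consPoint x p) 0 z = consPoint z p :=
  Fin.update_cons_zero _ _ _

theorem update_consPoint_succ (j : Fin m) (z : Fin 4 → R) :
    Function.update (consPoint x p) j.succ z = consPoint x (Function.update p j z) :=
  (Fin.cons_update _ _ _ _).symm

variable [CommRing R] (y : Fin 3 → Fin 4 → R) (u : Fin m → Fin 3 → Fin 4 → R) (s : Fin 4)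
  (f : Fin m → Fin 4)

theorem segre_cons : segre (m + 1) R (consPoint x p) (consWord s f) = x s * segre m R p f := by
  simp [segre_apply, Fin.prod_univ_succ, consPoint, consWord]

theorem segreTangent_cons_none :
    segreTangent (consPoint x p) (consDir y u) none (consWord s f) =
      x s * segreTangent p u none f :=
  segre_cons ..

theorem segreTangent_cons_zero (l : Fin 3) :
    segreTangent (consPoint x p) (consDir y u) (some (0, l)) (consWord s f) =
      y l s * segreTangent p u none f := by
  simp only [segreTangent, update_consPoint_zero, segre_cons]
  rfl

theorem segreTangent_cons_succ (j : Fin m) (l : Fin 3) :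
    segreTangent (consPoint x p) (consDir y u) (some (j.succ, l)) (consWord s f) =
      x s * segreTangent p u (some (j, l)) f := by
  simp only [segreTangent, update_consPoint_succ, segre_cons]
  rfl

theorem segreSecond_cons_zero_zero (l l' : Fin 3) :
    segreSecond (consPoint x p) (consDir y u) (0, l) (0, l') = 0 :=
  if_pos rfl

theorem segreSecond_cons_zero_succ (l : Fin 3) (j : Fin m) (l' : Fin 3) :
    segreSecond (consPoint x p) (consDir y u) (0, l) (j.succ, l') (consWord s f) =
      y l s * segreTangent p u (some (j, l')) f := by
  rw [segreSecond, if_neg (Fin.succ_ne_zero j).symm]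
  simp only [segreTangent, update_consPoint_zero, update_consPoint_succ, segre_cons]
  rfl

theorem segreSecond_cons_succ_zero (l : Fin 3) (j : Fin m) (l' : Fin 3) :
    segreSecond (consPoint x p) (consDir y u) (j.succ, l') (0, l) (consWord s f) =
      y l s * segreTangent p u (some (j, l')) f := by
  rw [segreSecond, if_neg (Fin.succ_ne_zero j)]
  simp only [segreTangent, update_consPoint_zero, update_consPoint_succ, segre_cons]
  rfl

end Cons

section Step

variable {m : ℕ} {ι : Type*} [Fintype ι] (g : ι → Fin 4) (p : ι → Fin m → Fin 4 → ℂ)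
  (u : ι → Fin m → Fin 3 → Fin 4 → ℂ)

/-- Points with a new coordinate-vector factor, chosen by `g`. -/
def stepPoint (i : ι) : Fin (m + 1) → Fin 4 → ℂ := consPoint (Pi.single (g i) 1) (p i)

/-- Directions at `stepPoint`. -/
def stepDir (i : ι) : Fin (m + 1) → Fin 3 → Fin 4 → ℂ :=
  consDir (fun l => Pi.single ((g i).succAbove l) 1) (u i)

/-- The coefficients of a slice of a combination of tangent vectors at `stepPoint`. -/
def stepCoeff (c : ι × Option (Fin (m + 1) × Fin 3) → ℂ) (s : Fin 4) :
    ι × Option (Fin m × Fin 3) → ℂ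
  | (i, none) => (if s = g i then c (i, none) else 0) +
      ∑ l, if s = (g i).succAbove l then c (i, some (0, l)) else 0
  | (i, some (j, l)) => if s = g i then c (i, some (j.succ, l)) else 0

theorem sum_smul_tangentFamily_step (c : ι × Option (Fin (m + 1) × Fin 3) → ℂ) (s : Fin 4)
    (f : Fin m → Fin 4) :
    (∑ x, c x • tangentFamily (stepPoint g p) (stepDir g u) x) (consWord s f) =
      (∑ y, stepCoeff g c s y • tangentFamily p u y) f := by
  simp only [Fintype.sum_prod_type, Finset.sum_apply, Pi.smul_apply, smul_eq_mul]
  refine Finset.sum_congr rfl fun i _ => ?_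
  simp only [Fintype.sum_option, Fintype.sum_prod_type, Fin.sum_univ_succ (n := m),
    tangentFamily, stepPoint, stepDir, segreTangent_cons_none, segreTangent_cons_zero,
    segreTangent_cons_succ, stepCoeff, Pi.single_apply, ← add_assoc, add_mul, Finset.sum_mul]
  congr 1
  · congr 1
    · split_ifs <;> simp
    · refine Finset.sum_congr rfl fun l _ => ?_
      split_ifs <;> simp
  · refine Finset.sum_congr rfl fun j _ => Finset.sum_congr rfl fun l _ => ?_
    split_ifs <;> simp

theorem isGoodAt_step [NeZero m] (i₀ : ι)
    (h : ∀ s, LinearIndepOn ℂ (tangentFamily p u) {x | x.2 = none ∨ (g x.1 = s ∨ x.1 = i₀)}) :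
    IsGoodAt (stepPoint g p) (stepDir g u) i₀ where
  linearIndependent := by
    rw [Fintype.linearIndependent_iff]
    intro c hc
    have hz (s) (y) : stepCoeff g c s y = 0 := by
      refine (h s).eq_zero_of_sum_smul (fun x hx => ?_) ?_ y
      · obtain ⟨i, _ | ⟨j, l⟩⟩ := x
        · simp at hx
        · simp only [Set.mem_ofPred_eq, reduceCtorEq, false_or, not_or] at hx
          simp [stepCoeff, Ne.symm hx.1]
      · ext f
        rw [← sum_smul_tangentFamily_step, hc]; rfl
    rintro ⟨i, _ | ⟨j, l⟩⟩
    · simpa [stepCoeff, (Fin.succAbove_ne _ _).symm] using hz (g i) (i, none)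
    · cases j using Fin.cases with
      | zero =>
        simpa [stepCoeff, Fin.succAbove_ne] using hz ((g i).succAbove l) (i, none)
      | succ j => simpa [stepCoeff] using hz (g i) (i, some (j, l))
  eq_zero t ht := by
    classical
    have key (b : Fin (m + 1) × Fin 3) (l : Fin 3) (d : Fin m × Fin 3 → ℂ)
        (hd : ∀ f, (∑ a, t a • segreSecond (stepPoint g p i₀) (stepDir g u i₀) a b)
          (consWord ((g i₀).succAbove l) f) = (∑ a, d a • tangentFamily p u (i₀, some a)) f) :
        ∀ a, d a = 0 := by
      intro a
      set s := (g i₀).succAbove l with hs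
      obtain ⟨c, hc⟩ := (Submodule.mem_span_range_iff_exists_fun ℂ).mp (ht b)
      let e : ι × Option (Fin m × Fin 3) → ℂ := fun x =>
        if x.1 = i₀ then x.2.elim 0 d else 0
      have he : ∑ x, e x • tangentFamily p u x = ∑ a, d a • tangentFamily p u (i₀, some a) := by
        rw [Fintype.sum_prod_type, Finset.sum_eq_single i₀]
        · simp [Fintype.sum_option, e]
        · intro i _ hi
          simp [e, hi]
        · simp
      have := (h s).eq_zero_of_sum_smul (c := stepCoeff g c s - e) (fun x hx => ?_) ?_ (i₀, some a)
      · obtain ⟨j, l'⟩ := a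
        simpa [stepCoeff, hs, Fin.succAbove_ne, e] using this
      · obtain ⟨i, _ | ⟨j, l⟩⟩ := x
        · simp at hx
        · simp only [Set.mem_ofPred_eq, reduceCtorEq, false_or, not_or] at hx
          simp [stepCoeff, Ne.symm hx.1, e, hx.2]
      · simp only [Pi.sub_apply, sub_smul, Finset.sum_sub_distrib, he]
        ext f
        rw [Pi.sub_apply, ← hd, ← sum_smul_tangentFamily_step g p u, hc, sub_self]; rfl
    have hsucc (j : Fin m) (l : Fin 3) : t (j.succ, l) = 0 := by
      refine key (0, 0) 0 (fun a => t (a.1.succ, a.2)) (fun f => ?_) (j, l)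
      simp [Fintype.sum_prod_type, Fin.sum_univ_succ (n := m), stepPoint, stepDir,
        segreSecond_cons_zero_zero, segreSecond_cons_succ_zero, tangentFamily]
    obtain ⟨j₀⟩ : Nonempty (Fin m) := ⟨0⟩
    ext ⟨j, l⟩
    cases j using Fin.cases with
    | succ j => exact hsucc j l
    | zero =>
      have := key (j₀.succ, 0) l (Pi.single (j₀, 0) (t (0, l))) (fun f => ?_) (j₀, 0)
      · simpa using this
      · simp only [Fintype.sum_prod_type (f := fun a : Fin (m + 1) × Fin 3 =>
          t a • segreSecond (stepPoint g p i₀) (stepDir g u i₀) a (j₀.succ, 0)),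
          Fin.sum_univ_succ (n := m), hsucc, zero_smul, Finset.sum_const_zero, add_zero]
        rw [Finset.sum_eq_single (j₀, 0) (by intro b _ hb; simp [hb]) (by simp)]
        simp [stepPoint, stepDir, segreSecond_cons_zero_succ, tangentFamily, Pi.single_apply]

end Step

theorem eighteen_mul_le_four_pow {m : ℕ} (hm : 6 ≤ m) :
    18 * m ≤ 4 ^ (m - 2) ∧ (6 * m + 8) * (3 * m + 1) ≤ 63 * 4 ^ (m - 2) := by
  obtain ⟨r, rfl⟩ := Nat.exists_eq_add_of_le hm
  rw [show 6 + r - 2 = r + 4 by omega]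
  induction r with
  | zero => norm_num
  | succ r ih =>
    obtain ⟨h1, h2⟩ := ih (by omega)
    rw [show r + 1 + 4 = (r + 4) + 1 by omega, pow_succ]
    constructor <;> nlinarith

theorem step_numerics {m k : ℕ} (hm : 5 ≤ m) (hk : k * (3 * (m + 1) + 1) ≤ 63 * 4 ^ (m + 1 - 3)) :
    (k + 6) / 4 * (3 * m + 1) ≤ 63 * 4 ^ (m - 3) ∧ 3 * m * ((k + 6) / 4) + k ≤ 4 ^ m := by
  obtain rfl | hm := hm.eq_or_lt
  · norm_num at hk ⊢
    omega
  · obtain ⟨h1, h2⟩ := eighteen_mul_le_four_pow hm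
    rw [show m + 1 - 3 = m - 2 by omega] at hk
    have e1 : 4 ^ (m - 2) = 4 * 4 ^ (m - 3) := by
      rw [← pow_succ', show m - 3 + 1 = m - 2 by omega]
    have e2 : 4 ^ m = 16 * 4 ^ (m - 2) := by
      rw [show m = m - 2 + 2 by omega, pow_add]; simp; ring
    have hq : 4 * ((k + 6) / 4) ≤ k + 6 := Nat.mul_div_le _ _
    generalize (k + 6) / 4 = q at *
    generalize 4 ^ (m - 3) = x at *
    rw [e2]
    generalize 4 ^ (m - 2) = y at *
    constructor
    · have : (k + 6) * (3 * m + 1) ≤ 63 * y := by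
        rcases le_or_gt (6 * m + 2) k with h | h
        · nlinarith
        · nlinarith
      nlinarith
    · nlinarith

theorem exists_isGoodAt {n : ℕ} (hn : 5 ≤ n) : ∀ {ι : Type} [Finite ι] (i₀ : ι),
    Nat.card ι * (3 * n + 1) ≤ 63 * 4 ^ (n - 3) →
    ∃ (p : ι → Fin n → Fin 4 → ℂ) (u : ι → Fin n → Fin 3 → Fin 4 → ℂ), IsGoodAt p u i₀ := by
  induction n, hn using Nat.le_induction with
  | base =>
    intro ι _ i₀ h
    exact exists_isGoodAt_five i₀ (by omega)
  | succ m hm ih =>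
    intro ι _ i₀ h
    have : NeZero m := ⟨by omega⟩
    cases nonempty_fintype ι
    set k := Nat.card ι with hk
    obtain ⟨hk1, hk2⟩ := step_numerics hm h
    have hk0 : 0 < k := Nat.card_pos_iff.mpr ⟨⟨i₀⟩, inferInstance⟩
    let e₀ : ι ≃ Fin k := Finite.equivFin ι
    let e : ι ≃ Fin k := e₀.trans (Equiv.swap (e₀ i₀) ⟨0, hk0⟩)
    have he : e i₀ = ⟨0, hk0⟩ := by simp [e]
    let g : ι → Fin 4 := fun i => Fin.ofNat 4 (e i)
    have hcard (s : Fin 4) : Nat.card {i | g i = s ∨ i = i₀} ≤ (k + 6) / 4 := by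
      let φ : {i | g i = s ∨ i = i₀} → Fin ((k + 6) / 4) := fun i =>
        ⟨((e i.1 : ℕ) + 3) / 4, by have := (e i.1).2; omega⟩
      have hφ : Function.Injective φ := by
        rintro ⟨i, hi⟩ ⟨i', hi'⟩ hii
        simp only [φ, Fin.mk.injEq] at hii
        have aux (i) (hi : g i = s ∨ i = i₀) : (e i : ℕ) % 4 = s ∨ (e i : ℕ) = 0 := by
          rcases hi with rfl | rfl
          · exact .inl rfl
          · simp [he]
        have h1 := aux i hi
        have h2 := aux i' hi'
        have : (e i : ℕ) = e i' := by omega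
        exact Subtype.ext (e.injective (Fin.ext this))
      simpa using Nat.card_le_card_of_injective φ hφ
    obtain ⟨p, u, hpu⟩ := exists_forall_linearIndepOn (ι := ι) (n := m)
      (fun s : Fin 4 => {x | x.2 = none ∨ x.1 ∈ {i | g i = s ∨ i = i₀}}) fun s => by
        refine exists_linearIndepOn_tangentFamily _ ?_ ?_
        · obtain ⟨p, u, h⟩ := ih (ι := {i | g i = s ∨ i = i₀}) ⟨i₀, .inr rfl⟩
            ((Nat.mul_le_mul_right _ (hcard s)).trans hk1)
          exact ⟨p, u, h.linearIndependent⟩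
        · refine le_trans ?_ hk2
          gcongr
          exact hcard s
    exact ⟨_, _, isGoodAt_step g p u i₀ hpu⟩

/-! ### Derivations applied to the Segre map -/

theorem Derivation.apply_prod {K α : Type*} [Field K] [Algebra ℂ K] [DecidableEq α]
    (D : Derivation ℂ K K) (s : Finset α) (v : α → K) :
    D (∏ a ∈ s, v a) = ∑ a ∈ s, D (v a) * ∏ b ∈ s.erase a, v b := by
  induction s using Finset.induction_on with
  | empty => simp
  | insert a s ha ih =>
    rw [Finset.prod_insert ha, D.leibniz, ih, Finset.sum_insert ha, Finset.erase_insert ha]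
    simp only [smul_eq_mul, Finset.mul_sum]
    rw [add_comm, mul_comm]
    congr 1
    refine Finset.sum_congr rfl fun b hb => ?_
    have hab : a ≠ b := fun h => ha (h ▸ hb)
    rw [Finset.erase_insert_of_ne hab, Finset.prod_insert (by simp [ha])]
    ring

theorem segre_update_apply {n : ℕ} {R : Type*} [CommRing R] (v : Fin n → Fin 4 → R) (j : Fin n)
    (z : Fin 4 → R) (f : Fin n → Fin 4) :
    segre n R (Function.update v j z) f = z (f j) * ∏ i ∈ Finset.univ.erase j, v i (f i) := by
  rw [segre_apply, ← Finset.mul_prod_erase _ _ (Finset.mem_univ j)]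
  simp only [Function.update_self]
  congr 1
  refine Finset.prod_congr rfl fun i hi => ?_
  rw [Function.update_of_ne (Finset.ne_of_mem_erase hi)]

theorem segre_update_mem_span {n : ℕ} {K : Type*} [Field K] (v : Fin n → Fin 4 → K) (j : Fin n)
    (z : Fin 4 → K) : segre n K (Function.update v j z) ∈
      Submodule.span K (Set.range fun m => segre n K (Function.update v j (Pi.single m 1))) := by
  have := ((segre n K).toLinearMap v j).pi_apply_eq_sum_univ z
  simp only [MultilinearMap.toLinearMap_apply] at this
  rw [this]
  refine sum_mem fun m _ => Submodule.smul_mem _ _ (Submodule.subset_span ⟨m, ?_⟩)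
  have hm : (Pi.single m 1 : Fin 4 → K) = fun j => if m = j then 1 else 0 := by
    ext; simp [Pi.single_apply, eq_comm]
  simp only [hm]

theorem segre_update_zero {n : ℕ} {K : Type*} [Field K] (v : Fin n → Fin 4 → K)
    (j : Fin n) :
    (segre n K) (Function.update v j fun _ => 0) = 0 :=
  (segre n K).map_update_zero v j

section Derivation

variable {n : ℕ} {K : Type*} [Field K] [Algebra ℂ K] (D : Derivation ℂ K K)

theorem derivation_segre (v : Fin n → Fin 4 → K) :
    (fun f => D (segre n K v f)) =
      ∑ j, segre n K (Function.update v j fun m => D (v j m)) := by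
  ext f
  simp only [Finset.sum_apply, segre_update_apply]
  rw [segre_apply, Derivation.apply_prod]

theorem derivation_segre_update (v : Fin n → Fin 4 → K) (j : Fin n) (z : Fin 4 → K) :
    (fun f => D (segre n K (Function.update v j z) f)) =
      segre n K (Function.update v j fun m => D (z m)) + ∑ i ∈ Finset.univ.erase j,
        segre n K (Function.update (Function.update v j z) i fun m => D (v i m)) := by
  rw [derivation_segre, ← Finset.add_sum_erase _ _ (Finset.mem_univ j)]
  congr 1
  · simp
  · refine Finset.sum_congr rfl fun i hi => ?_
    rw [Function.update_of_ne (Finset.ne_of_mem_erase hi)]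

variable (p : Fin n → Fin 4 → K) (u : Fin n → Fin 3 → Fin 4 → K)

theorem derivation_segreTangent_of_zero (hp : ∀ j m, D (p j m) = 0)
    (hu : ∀ j l m, D (u j l m) = 0) (o : Option (Fin n × Fin 3)) (f : Fin n → Fin 4) :
    D (segreTangent p u o f) = 0 := by
  cases o with
  | none =>
    have := congr_fun (derivation_segre D p) f
    simp only [hp, segre_update_zero] at this
    simpa [segreTangent] using this
  | some a =>
    have := congr_fun (derivation_segre_update D p a.1 (u a.1 a.2)) f
    simp only [hp, hu, segre_update_zero] at this
    simpa [segreTangent] using this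

theorem derivation_segreTangent_none (b : Fin n × Fin 3)
    (hp : ∀ j m, D (p j m) = if j = b.1 then u b.1 b.2 m else 0) :
    (fun f => D (segreTangent p u none f)) = segreTangent p u (some b) := by
  simp only [segreTangent]
  rw [derivation_segre, Finset.sum_eq_single b.1]
  · simp [hp]
  · intro j _ hj
    simp [hp, hj, segre_update_zero]
  · simp

theorem derivation_segreTangent_some (b : Fin n × Fin 3)
    (hp : ∀ j m, D (p j m) = if j = b.1 then u b.1 b.2 m else 0)
    (hu : ∀ j l m, D (u j l m) = 0) (a : Fin n × Fin 3) :
    (fun f => D (segreTangent p u (some a) f)) = segreSecond p u a b := by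
  simp only [segreTangent, segreSecond]
  rw [derivation_segre_update]
  simp only [hu, segre_update_zero, zero_add, hp]
  split_ifs with h
  · refine Finset.sum_eq_zero fun i hi => ?_
    have : i ≠ b.1 := h ▸ Finset.ne_of_mem_erase hi
    simp [this, segre_update_zero]
  · rw [Finset.sum_eq_single b.1]
    · simp
    · intro i _ hi
      simp [hi, segre_update_zero]
    · intro h'
      simp [Ne.symm h] at h'

end Derivation

/-! ### The generic linear space is tangent only at the given points -/

section Generic

variable {n e : ℕ} {ι K : Type} [Fintype ι] [Field K] [Algebra ℂ K]
  {p : ι → Fin n → Fin 4 → K} {u : ι → Fin n → Fin 3 → Fin 4 → K}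
  {c : Fin e → (Fin n → Fin 4) → K} {w : Fin n → Fin 4 → K}

/-- A derivation can be applied coordinatewise to a linear combination. -/
theorem derivation_sum_smul {X Y : Type*} [Fintype X] (D : Derivation ℂ K K) (g : X → K)
    (v : X → Y → K) : (fun y => D ((∑ x, g x • v x) y)) =
      ∑ x, D (g x) • v x + ∑ x, g x • fun y => D (v x y) := by
  ext y
  simp only [Finset.sum_apply, Pi.smul_apply, Pi.add_apply, map_sum, smul_eq_mul,
    Derivation.leibniz, ← Finset.sum_add_distrib]
  refine Finset.sum_congr rfl fun x _ => ?_
  ring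

/-- All tangent vectors of the generic space at another point lie in the sum of the tangent
spaces at the given points. -/
theorem segre_update_mem_span_tangentFamily (hn : 2 ≤ n)
    (hD : ∀ y : Fin e × (Fin n → Fin 4), ∃ D : Derivation ℂ K K,
      (∀ i j m, D (p i j m) = 0) ∧ (∀ i j l m, D (u i j l m) = 0) ∧
      ∀ r f, D (c r f) = if (r, f) = y then 1 else 0)
    (hli : LinearIndependent K (Sum.elim (tangentFamily p u) c))
    (hcard : Fintype.card ι * (3 * n + 1) + e + 4 * (n - 1) ≤ 4 ^ n)
    (hw : ∀ j z, segre n K (Function.update w j z) ∈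
      Submodule.span K (Set.range (Sum.elim (tangentFamily p u) c)))
    (j : Fin n) (z : Fin 4 → K) : segre n K (Function.update w j z) ∈
      Submodule.span K (Set.range (tangentFamily p u)) := by
  classical
  obtain ⟨g, hg⟩ := (Submodule.mem_span_range_iff_exists_fun K).mp (hw j z)
  suffices h : ∀ r, g (.inr r) = 0 by
    rw [← hg, Fintype.sum_sum_type]
    simp only [h, zero_smul, Finset.sum_const_zero, add_zero, Sum.elim_inl]
    exact sum_mem fun x _ => Submodule.smul_mem _ _ (Submodule.subset_span ⟨x, rfl⟩)
  intro r
  by_contra hr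
  set v := Function.update w j z with hv
  set L := Submodule.span K (Set.range (Sum.elim (tangentFamily p u) c)) with hL
  let T := Submodule.span K (Set.range fun x : {i : Fin n // i ≠ j} × Fin 4 =>
    segre n K (Function.update v x.1.1 (Pi.single x.2 1)))
  have hT (i : Fin n) (hi : i ≠ j) (y : Fin 4 → K) : segre n K (Function.update v i y) ∈ T := by
    refine Submodule.span_mono ?_ (segre_update_mem_span v i y)
    rintro _ ⟨m, rfl⟩
    exact ⟨(⟨i, hi⟩, m), rfl⟩
  have htop : L ⊔ T = ⊤ := by
    rw [eq_top_iff, ← (Pi.basisFun K (Fin n → Fin 4)).span_eq, Submodule.span_le]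
    rintro _ ⟨f, rfl⟩
    obtain ⟨D, hDp, hDu, hDc⟩ := hD (r, f)
    have h1 := derivation_sum_smul D g (Sum.elim (tangentFamily p u) c)
    rw [hg, derivation_segre_update, Fintype.sum_sum_type (f := fun x => g x • _)] at h1
    have h2 : ∑ x, g (.inl x) • (fun y => D (Sum.elim (tangentFamily p u) c (.inl x) y)) = 0 := by
      refine Finset.sum_eq_zero fun x _ => ?_
      ext y
      simp [tangentFamily, derivation_segreTangent_of_zero D _ _ (hDp x.1) (hDu x.1)]
    have h3 : ∑ x, g (.inr x) • (fun y => D (Sum.elim (tangentFamily p u) c (.inr x) y)) =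
        g (.inr r) • Pi.basisFun K (Fin n → Fin 4) f := by
      rw [Finset.sum_eq_single r]
      · ext y
        simp [hDc, Pi.single_apply]
      · intro r' _ hr'
        ext y
        simp [hDc, hr']
      · simp
    rw [h2, h3, zero_add] at h1
    have h4 : g (.inr r) • Pi.basisFun K (Fin n → Fin 4) f ∈ L ⊔ T := by
      rw [← sub_eq_iff_eq_add'.mpr h1]
      refine sub_mem (add_mem (Submodule.mem_sup_left (hw _ _))
        (sum_mem fun i hi => Submodule.mem_sup_right (hT i (Finset.ne_of_mem_erase hi) _)))
        (Submodule.mem_sup_left (sum_mem fun x _ =>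
          Submodule.smul_mem _ _ (Submodule.subset_span ⟨x, rfl⟩)))
    exact (Submodule.smul_mem_iff _ hr).mp h4
  have h0 : segre n K v ≠ 0 := fun h => by
    rw [← hg] at h
    exact hr (Fintype.linearIndependent_iff.mp hli g h _)
  have hvT : segre n K v ∈ T := by
    have : Nontrivial (Fin n) := Fin.nontrivial_iff_two_le.mpr hn
    obtain ⟨i, hi⟩ := exists_ne j
    have := hT i hi (v i)
    rwa [Function.update_eq_self] at this
  have hinf : 1 ≤ Module.finrank K ↥(L ⊓ T) := by
    rw [Nat.one_le_iff_ne_zero, Ne, Submodule.finrank_eq_zero]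
    intro h
    have : segre n K v ∈ L ⊓ T := ⟨hw j z, hvT⟩
    rw [h] at this
    exact h0 (by simpa using this)
  have hfin := Submodule.finrank_sup_add_finrank_inf_eq L T
  have hfL : Module.finrank K L = Fintype.card ι * (3 * n + 1) + e := by
    rw [hL, finrank_span_eq_card hli]
    simp
    left; ring
  have hfT : Module.finrank K T ≤ (n - 1) * 4 := by
    refine (finrank_range_le_card _).trans ?_
    simp [Fintype.card_subtype_compl]
  rw [htop, finrank_top, Module.finrank_pi, hfL] at hfin
  simp only [Fintype.card_fun, Fintype.card_fin] at hfin
  omega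

/-- A point whose tangent space lies in the sum of the generic tangent spaces is one of the
given points. -/
theorem exists_segre_eq_smul [DecidableEq ι] [Nonempty ι] (hn : 0 < n)
    (hD : ∀ (i₀ : ι) (b : Fin n × Fin 3), ∃ D : Derivation ℂ K K,
      (∀ i j m, D (p i j m) = if i = i₀ ∧ j = b.1 then u i₀ b.1 b.2 m else 0) ∧
      (∀ i j l m, D (u i j l m) = 0))
    (hgood : ∀ i, IsGoodAt p u i)
    (hw : ∀ j z, segre n K (Function.update w j z) ∈
      Submodule.span K (Set.range (tangentFamily p u))) :
    ∃ (i : ι) (a : K), segre n K w = a • segre n K (p i) := by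
  classical
  have hwM : segre n K w ∈ Submodule.span K (Set.range (tangentFamily p u)) := by
    have := hw ⟨0, hn⟩ (w ⟨0, hn⟩)
    rwa [Function.update_eq_self] at this
  obtain ⟨g, hg⟩ := (Submodule.mem_span_range_iff_exists_fun K).mp hwM
  have key (i₀ : ι) (b : Fin n × Fin 3) : ∃ D : Derivation ℂ K K,
      ∑ j, segre n K (Function.update w j fun m => D (w j m)) =
        ∑ x, D (g x) • tangentFamily p u x + (g (i₀, none) • tangentFamily p u (i₀, some b) +
          ∑ a, g (i₀, some a) • segreSecond (p i₀) (u i₀) a b) := by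
    obtain ⟨D, hDp, hDu⟩ := hD i₀ b
    refine ⟨D, ?_⟩
    rw [← derivation_segre, ← hg, derivation_sum_smul]
    congr 1
    rw [Fintype.sum_prod_type, Finset.sum_eq_single i₀]
    · have hp : ∀ j m, D (p i₀ j m) = if j = b.1 then u i₀ b.1 b.2 m else 0 := by simp [hDp]
      simp only [Fintype.sum_option, tangentFamily, derivation_segreTangent_none D _ _ b hp,
        derivation_segreTangent_some D _ _ b hp (hDu i₀)]
    · intro i _ hi
      refine Finset.sum_eq_zero fun o _ => ?_
      ext y
      simp [tangentFamily, derivation_segreTangent_of_zero D (p i) (u i) (by simp [hDp, hi])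
        (hDu i)]
    · simp
  have hzero (i : ι) (a : Fin n × Fin 3) : g (i, some a) = 0 := by
    refine congr_fun ((hgood i).eq_zero (fun a => g (i, some a)) fun b => ?_) a
    obtain ⟨D, hD⟩ := key i b
    rw [← add_assoc] at hD
    rw [← sub_eq_iff_eq_add'.mpr hD]
    exact sub_mem (sum_mem fun j _ => hw j _) (add_mem (sum_mem fun x _ =>
      Submodule.smul_mem _ _ (Submodule.subset_span ⟨x, rfl⟩))
      (Submodule.smul_mem _ _ (Submodule.subset_span ⟨_, rfl⟩)))
  have hw' : segre n K w = ∑ i, g (i, none) • segre n K (p i) := by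
    rw [← hg, Fintype.sum_prod_type]
    simp [Fintype.sum_option, hzero, tangentFamily, segreTangent]
  let T := Submodule.span K (Set.range (Sum.elim (fun i => segre n K (p i))
    fun x : Fin n × Fin 4 => segre n K (Function.update w x.1 (Pi.single x.2 1))))
  have hTp (i) : segre n K (p i) ∈ T := Submodule.subset_span ⟨.inl i, rfl⟩
  have hTw (j z) : segre n K (Function.update w j z) ∈ T := by
    refine Submodule.span_mono ?_ (segre_update_mem_span w j z)
    rintro _ ⟨m, rfl⟩
    exact ⟨.inr (j, m), rfl⟩
  have hmem (i : ι) (hi : g (i, none) ≠ 0) (b : Fin n × Fin 3) :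
      tangentFamily p u (i, some b) ∈ T := by
    obtain ⟨D, hD⟩ := key i b
    simp only [hzero, zero_smul, Finset.sum_const_zero, add_zero, Fintype.sum_prod_type,
      Fintype.sum_option, map_zero] at hD
    rw [← Submodule.smul_mem_iff _ hi, ← sub_eq_iff_eq_add'.mpr hD]
    exact sub_mem (sum_mem fun j _ => hTw j _)
      (sum_mem fun i _ => Submodule.smul_mem _ _ (hTp i))
  have huniq (i i' : ι) (hi : g (i, none) ≠ 0) (hi' : g (i', none) ≠ 0) : i = i' := by
    by_contra hne
    let φ : ι ⊕ (Bool × (Fin n × Fin 3)) → ι × Option (Fin n × Fin 3) :=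
      Sum.elim (fun k => (k, none)) fun x => (if x.1 then i else i', some x.2)
    have hφ : Function.Injective φ := by
      rintro (k | ⟨b, x⟩) (k' | ⟨b', x'⟩) h
      · simpa [φ] using h
      · simp [φ] at h
      · simp [φ] at h
      · cases b <;> cases b' <;> simp [φ, hne, Ne.symm hne] at h <;>
          simp [h]
    have hli := (hgood i).linearIndependent.comp φ hφ
    have h1 := finrank_span_eq_card hli
    have h2 : Submodule.span K (Set.range (tangentFamily p u ∘ φ)) ≤ T := by
      rw [Submodule.span_le]
      rintro _ ⟨(k | ⟨b, x⟩), rfl⟩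
      · exact hTp k
      · cases b
        · exact hmem i' hi' x
        · exact hmem i hi x
    have h3 := Submodule.finrank_mono h2
    have h4 := h3.trans (finrank_range_le_card _)
    rw [h1] at h4
    simp at h4
    omega
  by_cases h : ∃ i, g (i, none) ≠ 0
  · obtain ⟨i, hi⟩ := h
    refine ⟨i, g (i, none), ?_⟩
    rw [hw', Finset.sum_eq_single i]
    · intro i' _ hne
      have : g (i', none) = 0 := by
        by_contra h'
        exact hne (huniq _ _ h' hi)
      simp [this]
    · simp
  · push Not at h
    obtain ⟨i⟩ := ‹Nonempty ι›
    exact ⟨i, 0, by simp [hw', h]⟩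

end Generic

/-! ### Specialization from the generic point -/

theorem exists_sum_minors_eq_one {Y : Type*} [Fintype Y] {P W : Y → ℂ} (hP : P ≠ 0)
    (h : ∀ t : ℂ, W ≠ t • P) :
    ∃ r : Y → Y → ℂ, ∑ f, ∑ g, r f g * (W f * P g - W g * P f) = 1 := by
  classical
  obtain ⟨g, hg⟩ := Function.ne_iff.mp hP
  obtain ⟨f, hf⟩ := Function.ne_iff.mp (h (W g / P g))
  have h0 : W f * P g - W g * P f ≠ 0 := fun h' => hf (by
    simp only [Pi.zero_apply] at hg
    rw [Pi.smul_apply, smul_eq_mul]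
    field_simp
    linear_combination h')
  refine ⟨Pi.single f (Pi.single g (W f * P g - W g * P f)⁻¹), ?_⟩
  rw [Finset.sum_eq_single f, Finset.sum_eq_single g]
  · simp [h0]
  · intro g' _ hg'
    simp [hg']
  · simp
  · intro f' _ hf'
    simp [hf']
  · simp

section Ultra

variable {B K : Type} [Field K] [Algebra ℂ K] (κ : (B → ℂ) →ₐ[ℂ] K) {n : ℕ}

theorem segre_generic (w : B → Fin n → Fin 4 → ℂ) (f : Fin n → Fin 4) :
    segre n K (fun j m => κ fun b => w b j m) f = κ fun b => segre n ℂ (w b) f := by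
  refine (segre_map κ.toRingHom (fun j m b => w b j m) f).trans (congrArg κ ?_)
  ext b
  exact (segre_map (Pi.evalRingHom (fun _ => ℂ) b) (fun j m b => w b j m) f).symm

theorem segreTangent_generic (p : B → Fin n → Fin 4 → ℂ) (u : Fin n → Fin 3 → Fin 4 → ℂ)
    (o : Option (Fin n × Fin 3)) (f : Fin n → Fin 4) :
    segreTangent (fun j m => κ fun b => p b j m) (fun j l m => algebraMap ℂ K (u j l m)) o f =
      κ fun b => segreTangent (p b) u o f := by
  have hu (x : ℂ) : algebraMap ℂ K x = κ fun _ => x := (κ.commutes x).symm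
  simp only [hu]
  refine (segreTangent_map κ.toRingHom (fun j m b => p b j m) (fun j l m _ => u j l m) o f).trans
    (congrArg κ ?_)
  ext b
  exact (segreTangent_map (Pi.evalRingHom (fun _ => ℂ) b) (fun j m b => p b j m)
    (fun j l m _ => u j l m) o f).symm

theorem mem_span_range_generic {X Y : Type} [Finite X] (v : B → X → Y → ℂ) (h : B → Y → ℂ)
    (hh : ∀ b, h b ∈ Submodule.span ℂ (Set.range (v b))) :
    (fun y => κ fun b => h b y) ∈
      Submodule.span K (Set.range fun x y => κ fun b => v b x y) := by
  cases nonempty_fintype X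
  simp only [Submodule.mem_span_range_iff_exists_fun] at hh ⊢
  choose g hg using hh
  refine ⟨fun x => κ fun b => g b x, ?_⟩
  ext y
  simp only [Finset.sum_apply, Pi.smul_apply, smul_eq_mul, ← map_mul, ← map_sum]
  congr 1
  ext b
  rw [← hg b]
  simp

end Ultra

/-- Coordinates on the parameter space of points and extra vectors. -/
abbrev ParamIdx (n k e : ℕ) : Type :=
  (Fin k × (_ : Fin n) × Fin 4) ⊕ (Fin e × (Fin n → Fin 4))

/-- A family of points and extra vectors as a point of affine space. -/
def paramPoint {R : Type*} {n k e : ℕ} (p : Fin k → Fin n → Fin 4 → R)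
    (c : Fin e → (Fin n → Fin 4) → R) : ParamIdx n k e → R :=
  Sum.elim (fun x => p x.1 x.2.1 x.2.2) (fun y => c y.1 y.2)

/-- At good parameters the given tangent spaces and vectors are independent, and no other
tangent space of the Segre lies in their span. -/
def IsTangentOnly {n k e : ℕ} (u : Fin k → Fin n → Fin 3 → Fin 4 → ℂ)
    (p : Fin k → Fin n → Fin 4 → ℂ) (c : Fin e → (Fin n → Fin 4) → ℂ) : Prop :=
  LinearIndependent ℂ (Sum.elim (tangentFamily p u) c) ∧
    ∀ w : Fin n → Fin 4 → ℂ, (∀ j z, segre n ℂ (Function.update w j z) ∈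
      Submodule.span ℂ (Set.range (Sum.elim (tangentFamily p u) c))) →
      ∃ (i : Fin k) (t : ℂ), segre n ℂ w = t • segre n ℂ (p i)

theorem four_mul_le_four_pow (r : ℕ) : 4 * (r + 4) ≤ 4 ^ (r + 2) := by
  induction r with
  | zero => norm_num
  | succ r ih => rw [show r + 1 + 2 = r + 2 + 1 by omega, pow_succ]; omega

theorem four_pow_sub_three {n : ℕ} (hn : 5 ≤ n) :
    4 * (n - 1) ≤ 4 ^ (n - 3) ∧ 4 ^ n = 64 * 4 ^ (n - 3) := by
  obtain ⟨r, rfl⟩ := Nat.exists_eq_add_of_le hn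
  rw [show 5 + r - 3 = r + 2 by omega, show 5 + r - 1 = r + 4 by omega,
    show 5 + r = r + 2 + 3 by omega, pow_add 4 (r + 2) 3]
  exact ⟨four_mul_le_four_pow r, by ring⟩

/-- An open condition on parameters which suffices for the generic argument. -/
theorem exists_polynomial_good {n k e : ℕ} (hn : 5 ≤ n)
    (hk : k * (3 * n + 1) + e = 63 * 4 ^ (n - 3)) :
    ∃ (u : Fin k → Fin n → Fin 3 → Fin 4 → ℂ) (F : MvPolynomial (ParamIdx n k e) ℂ), F ≠ 0 ∧
      ∀ (K : Type) [Field K] [Algebra ℂ K] (p : Fin k → Fin n → Fin 4 → K)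
        (c : Fin e → (Fin n → Fin 4) → K), MvPolynomial.aeval (paramPoint p c) F ≠ 0 →
        LinearIndependent K
          (Sum.elim (tangentFamily p fun i j l m => algebraMap ℂ K (u i j l m)) c) ∧
        ∀ i, IsGoodAt p (fun i j l m => algebraMap ℂ K (u i j l m)) i := by
  classical
  have : NeZero n := ⟨by omega⟩
  obtain ⟨p₀, u, hgood⟩ : ∃ (p : Fin k → Fin n → Fin 4 → ℂ)
      (u : Fin k → Fin n → Fin 3 → Fin 4 → ℂ), LinearIndependent ℂ (tangentFamily p u) ∧
        ∀ i, IsGoodAt p u i := by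
    obtain ⟨p, u, h⟩ := exists_forall_isGoodAt fun i : Fin k => exists_isGoodAt hn i (by
      simp only [Nat.card_eq_fintype_card, Fintype.card_fin]; omega)
    rcases isEmpty_or_nonempty (Fin k) with _ | ⟨⟨i⟩⟩
    · exact ⟨p, u, linearIndependent_empty_type, h⟩
    · exact ⟨p, u, (h i).linearIndependent, h⟩
  have hpow := (four_pow_sub_three hn).2
  obtain ⟨c₀, -, hc⟩ := exists_linearIndependent_sumElim (κ := Fin e) hgood.1
    (Submodule.span_univ) (by
      simp only [Nat.card_eq_fintype_card, Fintype.card_option, Fintype.card_prod,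
        Fintype.card_fin, Module.finrank_pi, Fintype.card_fun]
      rw [mul_comm n 3, hk, hpow]; omega)
  let P (i : Fin k) (j : Fin n) (m : Fin 4) : MvPolynomial (ParamIdx n k e) ℂ :=
    .X (.inl (i, ⟨j, m⟩))
  let U (i : Fin k) (j : Fin n) (l : Fin 3) (m : Fin 4) : MvPolynomial (ParamIdx n k e) ℂ :=
    .C (u i j l m)
  let Q (r : Fin e) (f : Fin n → Fin 4) : MvPolynomial (ParamIdx n k e) ℂ := .X (.inr (r, f))
  have key {K : Type} [Field K] [Algebra ℂ K] (p : Fin k → Fin n → Fin 4 → K)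
      (c : Fin e → (Fin n → Fin 4) → K) (x f) :
      MvPolynomial.aeval (paramPoint p c) (Sum.elim (tangentFamily P U) Q x f) =
        Sum.elim (tangentFamily p fun i j l m => algebraMap ℂ K (u i j l m)) c x f := by
    cases x with
    | inl x =>
      refine (segreTangent_map (MvPolynomial.aeval (paramPoint p c) :
        MvPolynomial (ParamIdx n k e) ℂ →ₐ[ℂ] K).toRingHom (P x.1) (U x.1) x.2 f).symm.trans ?_
      simp [P, U, paramPoint, tangentFamily]
    | inr r => simp [Q, paramPoint]
  obtain ⟨F₁, h₁, hF₁⟩ := exists_polynomial_linearIndependent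
    (Sum.elim (tangentFamily P U) Q) (paramPoint p₀ c₀) (by
      have h (x f) : MvPolynomial.eval (paramPoint p₀ c₀) (Sum.elim (tangentFamily P U) Q x f) =
          Sum.elim (tangentFamily p₀ u) c₀ x f := key p₀ c₀ x f
      simp only [h]
      exact hc)
  choose F₂ h₂ hF₂ using fun i => IsGoodAt.exists_polynomial P U (paramPoint p₀ c₀) (i₀ := i)
    (by simpa [P, U, paramPoint] using hgood.2 i)
  refine ⟨u, F₁ * ∏ i, F₂ i, ?_, fun K _ _ p c h => ?_⟩
  · refine mul_ne_zero (fun h => h₁ (by rw [h, map_zero])) (Finset.prod_ne_zero_iff.mpr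
      fun i _ h => h₂ i (by rw [h, map_zero]))
  · rw [map_mul, map_prod] at h
    obtain ⟨h3, h4⟩ := mul_ne_zero_iff.mp h
    rw [Finset.prod_ne_zero_iff] at h4
    constructor
    · have := hF₁ K _ h3
      simp only [key] at this
      exact this
    · intro i
      have := hF₂ i K _ (h4 i (Finset.mem_univ i))
      simpa [P, U, paramPoint] using this

theorem exists_polynomial_isTangentOnly {n k e : ℕ} (hn : 5 ≤ n) (hk0 : 0 < k)
    (hk : k * (3 * n + 1) + e = 63 * 4 ^ (n - 3)) :
    ∃ (u : Fin k → Fin n → Fin 3 → Fin 4 → ℂ) (F : MvPolynomial (ParamIdx n k e) ℂ), F ≠ 0 ∧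
      ∀ (p : Fin k → Fin n → Fin 4 → ℂ) (c : Fin e → (Fin n → Fin 4) → ℂ),
        MvPolynomial.eval (paramPoint p c) F ≠ 0 → IsTangentOnly u p c := by
  classical
  obtain ⟨u, F₀, hF₀, hgood⟩ := exists_polynomial_good hn hk
  have hgoodC (p : Fin k → Fin n → Fin 4 → ℂ) (c : Fin e → (Fin n → Fin 4) → ℂ)
      (h : MvPolynomial.eval (paramPoint p c) F₀ ≠ 0) := (hgood ℂ p c h).1
  simp only [Algebra.algebraMap_self, RingHom.id_apply] at hgoodC
  refine ⟨u, ?_⟩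
  by_contra hcon
  push Not at hcon
  let B : Type := {b : (Fin k → Fin n → Fin 4 → ℂ) × (Fin e → (Fin n → Fin 4) → ℂ) ×
    (Fin n → Fin 4 → ℂ) // LinearIndependent ℂ (Sum.elim (tangentFamily b.1 u) b.2.1) ∧
    (∀ j z, segre n ℂ (Function.update b.2.2 j z) ∈
      Submodule.span ℂ (Set.range (Sum.elim (tangentFamily b.1 u) b.2.1))) ∧
    ∀ (i : Fin k) (t : ℂ), segre n ℂ b.2.2 ≠ t • segre n ℂ (b.1 i)}
  obtain ⟨K, _, _, κ, hκ⟩ := exists_field_algebraicIndependent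
    (fun b : B => paramPoint b.1.1 b.1.2.1) fun F hF => by
      obtain ⟨p, c, h1, h2⟩ := hcon (F * F₀) (mul_ne_zero hF hF₀)
      rw [map_mul] at h1
      have hli := hgoodC p c (right_ne_zero_of_mul h1)
      simp only [IsTangentOnly, hli, true_and, not_forall] at h2
      obtain ⟨w, hw, hw'⟩ := h2
      push Not at hw'
      exact ⟨⟨(p, c, w), hli, hw, hw'⟩, left_ne_zero_of_mul h1⟩
  let pK (i : Fin k) (j : Fin n) (m : Fin 4) : K := κ fun b => b.1.1 i j m
  let cK (r : Fin e) (f : Fin n → Fin 4) : K := κ fun b => b.1.2.1 r f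
  let wK (j : Fin n) (m : Fin 4) : K := κ fun b => b.1.2.2 j m
  let uK (i : Fin k) (j : Fin n) (l : Fin 3) (m : Fin 4) : K := algebraMap ℂ K (u i j l m)
  have hx : (fun s => κ fun b : B => paramPoint b.1.1 b.1.2.1 s) = paramPoint pK cK := by
    ext (s | s) <;> rfl
  rw [hx] at hκ
  obtain ⟨hli, hgoodK⟩ := hgood K pK cK fun h =>
    hF₀ (hκ (by rw [h, map_zero]))
  have hv : (fun x f => κ fun b : B => Sum.elim (tangentFamily b.1.1 u) b.1.2.1 x f) =
      Sum.elim (tangentFamily pK uK) cK := by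
    ext (x | x) f
    · exact (segreTangent_generic κ (fun b : B => b.1.1 x.1) (u x.1) x.2 f).symm
    · rfl
  have hw (j : Fin n) (z : Fin 4 → K) : segre n K (Function.update wK j z) ∈
      Submodule.span K (Set.range (Sum.elim (tangentFamily pK uK) cK)) := by
    refine Submodule.span_le.mpr ?_ (segre_update_mem_span wK j z)
    rintro _ ⟨m, rfl⟩
    have h1 := mem_span_range_generic κ (fun b : B => Sum.elim (tangentFamily b.1.1 u) b.1.2.1)
      (fun b => segre n ℂ (Function.update b.1.2.2 j (Pi.single m 1))) fun b => b.2.2.1 _ _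
    rw [hv] at h1
    simp only [← segre_generic κ] at h1
    have heq : Function.update wK j (Pi.single m 1) =
        fun j' m' => κ fun b => Function.update b.1.2.2 j (Pi.single m 1) j' m' := by
      ext j' m'
      by_cases hj : j' = j
      · subst hj
        by_cases hm : m' = m
        · subst hm
          simp only [Function.update_self, Pi.single_eq_same]
          exact (map_one κ).symm
        · simp only [Function.update_self, Pi.single_eq_of_ne hm]
          exact (map_zero κ).symm
      · simp [hj, wK]
    change segre n K (Function.update wK j (Pi.single m 1)) ∈ _
    rw [heq]
    exact h1
  have hpow := four_pow_sub_three hn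
  have hM := segre_update_mem_span_tangentFamily (by omega) (fun y => by
      obtain ⟨D, hD⟩ := exists_derivation_apply_eq hκ
        (paramPoint 0 fun r f => if (r, f) = y then 1 else 0)
      exact ⟨D, fun i j m => hD (.inl (i, ⟨j, m⟩)), fun i j l m => D.map_algebraMap _,
        fun r f => hD (.inr (r, f))⟩) hli (by
      rw [Fintype.card_fin, hk, hpow.2]; omega) hw
  have : Nonempty (Fin k) := ⟨⟨0, hk0⟩⟩
  obtain ⟨i, a, ha⟩ := exists_segre_eq_smul (by omega) (fun i₀ b => by
      obtain ⟨D, hD⟩ := exists_derivation_apply_eq hκ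
        (paramPoint (fun i j m => if i = i₀ ∧ j = b.1 then uK i₀ b.1 b.2 m else 0) 0)
      exact ⟨D, fun i j m => hD (.inl (i, ⟨j, m⟩)), fun i j l m => D.map_algebraMap _⟩) hgoodK hM
  choose r hr using fun b : B => exists_sum_minors_eq_one (P := segre n ℂ (b.1.1 i))
    (W := segre n ℂ b.1.2.2) (show segre n ℂ (b.1.1 i) ≠ 0 from
      LinearIndependent.ne_zero (v := Sum.elim (tangentFamily b.1.1 u) b.1.2.1)
        (.inl (i, none)) b.2.1) (b.2.2.2 i)
  have hone : κ (fun b => ∑ f, ∑ g, r b f g * (segre n ℂ b.1.2.2 f * segre n ℂ (b.1.1 i) g -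
      segre n ℂ b.1.2.2 g * segre n ℂ (b.1.1 i) f)) = 1 := by
    simp only [hr]
    exact map_one κ
  have hsum : κ (fun b => ∑ f, ∑ g, r b f g * (segre n ℂ b.1.2.2 f * segre n ℂ (b.1.1 i) g -
      segre n ℂ b.1.2.2 g * segre n ℂ (b.1.1 i) f)) =
      ∑ f, ∑ g, κ (fun b => r b f g) * (segre n K wK f * segre n K (pK i) g -
        segre n K wK g * segre n K (pK i) f) := by
    simp only [wK, pK, segre_generic κ, ← map_mul, ← map_sub, ← map_sum]
    congr 1
    ext b
    simp
  rw [hone, ha] at hsum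
  refine one_ne_zero (hsum.trans (Finset.sum_eq_zero fun f _ => Finset.sum_eq_zero fun g _ => ?_))
  simp only [Pi.smul_apply, smul_eq_mul]
  ring

/-! ### Tensors and coordinates -/

/-- The coordinates of a tensor in the standard basis. -/
def tensorCoords (n : ℕ) : Ten n (fun _ => 3) ≃ₗ[ℂ] ((Fin n → Fin 4) → ℂ) :=
  LinearEquiv.ofLinearMap (lift (segre n ℂ))
    (Fintype.linearCombination ℂ (basisVec (fun _ : Fin n => 3)))
    (LinearMap.pi_ext' fun f => LinearMap.ext_ring (by
      simp [basisVec, Fintype.linearCombination_apply_single, segre_single]))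
    (PiTensorProduct.ext (Module.Basis.ext_multilinear (fun _ => Pi.basisFun ℂ (Fin 4))
      fun f => by
        simp [basisVec, Fintype.linearCombination_apply_single, segre_single]))

theorem tensorCoords_tprod {n : ℕ} (v : Fin n → Fin 4 → ℂ) :
    tensorCoords n (tprod ℂ v) = segre n ℂ v :=
  lift.tprod v

theorem tensorCoords_fromCoords {n : ℕ} (c : (Fin n → Fin 4) → ℂ) :
    tensorCoords n (fromCoords (fun _ => 3) c) = c :=
  (tensorCoords n).apply_symm_apply c

theorem map_tangent_s9 {n : ℕ} (v : Fin n → Fin 4 → ℂ) :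
    (tangent (fun _ => 3) v).map (tensorCoords n).toLinearMap =
      Submodule.span ℂ {x | ∃ (j : Fin n) (z : Fin 4 → ℂ),
        x = segre n ℂ (Function.update v j z)} := by
  rw [tangent, Submodule.map_span]
  congr 1
  ext x
  constructor
  · rintro ⟨_, ⟨j, z, rfl⟩, rfl⟩
    exact ⟨j, z, tensorCoords_tprod _⟩
  · rintro ⟨j, z, rfl⟩
    exact ⟨_, ⟨j, z, rfl⟩, tensorCoords_tprod _⟩

theorem span_segre_update_eq {n : ℕ} [NeZero n] {p : Fin n → Fin 4 → ℂ}
    {u : Fin n → Fin 3 → Fin 4 → ℂ} (h : LinearIndependent ℂ (segreTangent p u)) :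
    Submodule.span ℂ {x | ∃ (j : Fin n) (z : Fin 4 → ℂ), x = segre n ℂ (Function.update p j z)} =
      Submodule.span ℂ (Set.range (segreTangent p u)) := by
  apply le_antisymm
  · rw [Submodule.span_le]
    rintro _ ⟨j, z, rfl⟩
    let y (o : Option (Fin 3)) : Fin 4 → ℂ := o.elim (p j) (u j)
    have hcomp : (segre n ℂ).toLinearMap p j ∘ y = segreTangent p u ∘ Option.map (Prod.mk j) := by
      ext1 o
      cases o <;> simp [y, segreTangent]
    have hy : LinearIndependent ℂ y := by
      refine LinearIndependent.of_comp ((segre n ℂ).toLinearMap p j) ?_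
      rw [hcomp]
      exact h.comp _ (Option.map_injective (Prod.mk_right_injective j))
    have hz : z ∈ Submodule.span ℂ (Set.range y) := by
      rw [hy.span_eq_top_of_card_eq_finrank (by simp)]
      trivial
    have := Submodule.mem_map_of_mem (f := (segre n ℂ).toLinearMap p j) hz
    rw [Submodule.map_span, ← Set.range_comp, hcomp] at this
    exact Submodule.span_mono (Set.range_comp_subset_range _ _) this
  · refine Submodule.span_mono ?_
    rintro _ ⟨_ | a, rfl⟩
    · exact ⟨0, p 0, by simp [segreTangent]⟩
    · exact ⟨a.1, u a.1 a.2, rfl⟩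

theorem map_iSup_tangent_sup {n k e : ℕ} [NeZero n] {p : Fin k → Fin n → Fin 4 → ℂ}
    {u : Fin k → Fin n → Fin 3 → Fin 4 → ℂ} {c : Fin e → (Fin n → Fin 4) → ℂ}
    (hc : LinearIndependent ℂ (Sum.elim (tangentFamily p u) c)) :
    ((⨆ i, tangent (fun _ => 3) (p i)) ⊔
      Submodule.span ℂ (Set.range fun m => fromCoords (fun _ => 3) (c m))).map
        (tensorCoords n).toLinearMap =
      Submodule.span ℂ (Set.range (Sum.elim (tangentFamily p u) c)) := by
  have h : LinearIndependent ℂ (tangentFamily p u) := hc.comp Sum.inl Sum.inl_injective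
  rw [Submodule.map_sup, Submodule.map_iSup, Set.Sum.elim_range, Submodule.span_union,
    Submodule.map_span, ← Set.range_comp]
  congr 1
  · have hi (i : Fin k) : (tangent (fun _ => 3) (p i)).map (tensorCoords n).toLinearMap =
        Submodule.span ℂ (Set.range (segreTangent (p i) (u i))) := by
      rw [map_tangent_s9, span_segre_update_eq (u := u i)]
      exact h.comp (Prod.mk i) (Prod.mk_right_injective i)
    simp only [hi, ← Submodule.span_iUnion]
    congr 1
    ext x
    simp [tangentFamily]
  · congr 2
    ext1 m
    exact tensorCoords_fromCoords (c m)

theorem tangentGeneral_of_le {n k d : ℕ} (hn : 5 ≤ n) (hk0 : 0 < k) (hd : d = 63 * 4 ^ (n - 3))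
    (hk : k * (3 * n + 1) ≤ d) : TangentGeneral n (fun _ => 3) k d := by
  have : NeZero n := ⟨by omega⟩
  have hdim : k * (3 * n + 1) + (d - k * (1 + ∑ _j : Fin n, 3)) = d := by
    rw [Finset.sum_const, Finset.card_univ, Fintype.card_fin, smul_eq_mul, mul_comm n 3,
      add_comm 1 (3 * n)]
    omega
  obtain ⟨u, F, hF, h⟩ := exists_polynomial_isTangentOnly hn hk0 (hdim.trans hd)
  refine ⟨F, ?_, fun p c hpc => ?_⟩
  · by_contra! hcon
    refine hF (MvPolynomial.funext fun x => ?_)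
    rw [map_zero, ← hcon (fun i j m => x (.inl (i, ⟨j, m⟩))) (fun r f => x (.inr (r, f)))]
    congr 1
    congr 1
    ext (s | s) <;> rfl
  · obtain ⟨hli, huniq⟩ := h p c hpc
    have hmap := map_iSup_tangent_sup hli
    constructor
    · rw [← LinearEquiv.finrank_map_eq (tensorCoords n)]
      refine (congrArg (fun L : Submodule ℂ _ => Module.finrank ℂ L) hmap).trans ?_
      rw [finrank_span_eq_card hli]
      simp only [Fintype.card_sum, Fintype.card_prod, Fintype.card_option, Fintype.card_fin]
      rw [mul_comm n 3, hdim]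
    · intro w _ hw
      obtain ⟨i, t, hit⟩ := huniq w fun j z => by
        rw [← hmap, ← tensorCoords_tprod]
        exact Submodule.mem_map_of_mem (hw (Submodule.subset_span ⟨j, z, rfl⟩))
      refine ⟨i, t, (tensorCoords n).injective ?_⟩
      rw [map_smul]
      exact (tensorCoords_tprod w).trans
        (hit.trans (congrArg (t • ·) (tensorCoords_tprod (p i)).symm))

/-- `n` copies of `ℙ³`, tangential generality:
(i) the case `n = 5`, with subspaces of dimension `1008` and `k ≤ 63`;
(ii) the case `n > 5`, with subspaces of dimension `4^n - 4^{n-3}`. -/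
theorem stmt_9 :
    (∀ k : ℕ, 0 < k → k ≤ 63 →
      TangentGeneral 5 (fun _ => 3) k 1008) ∧
    (∀ n k : ℕ, 5 < n → 0 < k →
      (k : ℚ) ≤ ((4 ^ n - 4 ^ (n - 3) : ℕ) : ℚ) / (3 * n + 1) →
      TangentGeneral n (fun _ => 3) k (4 ^ n - 4 ^ (n - 3))) := by
  refine ⟨fun k hk0 hk => tangentGeneral_of_le le_rfl hk0 (by norm_num) (by omega),
    fun n k hn hk0 hk => tangentGeneral_of_le hn.le hk0 ?_ ?_⟩
  · rw [(four_pow_sub_three hn.le).2]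
    omega
  · rw [le_div_iff₀ (by positivity)] at hk
    exact_mod_cast hk
end
end
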